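/- Let 0 < α_1, α_2 < 1 and −1/2 < α_3 ≤ 0 with α_1 + α_2 + α_3 = 1. For any measurable subsets E_1, E_2, E_3 of [0,∞) of finite measure such that |E_3| is maximal among |E_1|, |E_2|, |E_3|, there exists a major subset E_3' ⊆ E_3 (that is, |E_3'| ≥ |E_3|/2) such that for all measurable functions f_1, f_2 with |f_1| ≤ 1_{E_1}, |f_2| ≤ 1_{E_2}, and f_3 with |f_3| ≤ 1_{E_3'}, one has |Λ_L(f_1, f_2, f_3)| ≤ C |E_1|^{α_1} |E_2|^{α_2} |E_3|^{α_3}, where C depends only on α_1, α_2, α_3 and is uniform in L ≥ 2 and in N. (This follows from the main restricted type theorem by the symmetry of the quartile form in the indices 2 and 3.) -/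

import Mathlib

open MeasureTheory Set ENNReal NNReal

noncomputable section

namespace Quartile

/-- The Walsh functions on `[0,1)` (extended by zero), in Walsh-Paley order,
defined by the recursion `W_{2l} = W_l(2x) + W_l(2x-1)`, `W_{2l+1} = W_l(2x) - W_l(2x-1)`. -/
def walsh (n : ℕ) (x : ℝ) : ℝ :=
  if h : n = 0 then (if 0 ≤ x ∧ x < 1 then 1 else 0)
  else if n % 2 = 0 then walsh (n / 2) (2 * x) + walsh (n / 2) (2 * x - 1)
  else walsh (n / 2) (2 * x) - walsh (n / 2) (2 * x - 1)
termination_by n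
decreasing_by
  all_goals exact Nat.div_lt_self (Nat.pos_of_ne_zero h) one_lt_two

/-- The dyadic interval `[2^k n, 2^k (n+1)) ⊆ [0,∞)`. -/
def dyadicI (k : ℤ) (n : ℕ) : Set ℝ := Ico ((2:ℝ)^k * n) ((2:ℝ)^k * (n+1))

/-- A tile: the dyadic rectangle `[2^k n, 2^k(n+1)) × [2^{-k} l, 2^{-k}(l+1))` of area one. -/
structure Tile where
  k : ℤ
  n : ℕ
  l : ℕ

namespace Tile

/-- The time interval `I_p` of a tile. -/
def timeI (p : Tile) : Set ℝ := Ico ((2:ℝ)^p.k * p.n) ((2:ℝ)^p.k * (p.n+1))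

/-- The frequency interval `ω_p` of a tile. -/
def freqI (p : Tile) : Set ℝ := Ico ((2:ℝ)^(-p.k) * p.l) ((2:ℝ)^(-p.k) * (p.l+1))

/-- The tile as a subset of the phase plane. -/
def toSet (p : Tile) : Set (ℝ × ℝ) := p.timeI ×ˢ p.freqI

/-- The Walsh wave packet `w_p` of a tile, `L²`-normalized. -/
def wp (p : Tile) (x : ℝ) : ℝ :=
  Real.sqrt ((2:ℝ)^(-p.k)) * walsh p.l ((2:ℝ)^(-p.k) * x - p.n)

end Tile

/-- The order on dyadic rectangles: `p ≤ q` iff `I_p ⊆ I_q` and `ω_q ⊆ ω_p`, for tiles. -/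
def tileLE (p q : Tile) : Prop := p.timeI ⊆ q.timeI ∧ q.freqI ⊆ p.freqI

/-- The inner product `⟨f, w_p⟩` of a function with a (real valued) wave packet. -/
def coef (f : ℝ → ℂ) (p : Tile) : ℂ := ∫ x, f x * (p.wp x : ℂ)

/-- The rank one projection `Π_p f = ⟨f, w_p⟩ w_p` associated to a single tile. -/
def projT (p : Tile) (f : ℝ → ℂ) (x : ℝ) : ℂ := coef f p * (p.wp x : ℂ)

/-- The projection associated to a collection of (pairwise disjoint) tiles. -/
def projSet (𝔭 : Set Tile) (f : ℝ → ℂ) (x : ℝ) : ℂ := ∑' p : 𝔭, projT p f x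

/-- The maximal tiles contained in a subset `S` of the phase plane; when `S` is a disjoint
union of tiles (of the kind appearing below) these form the canonical tiling of `S`. -/
def maxTiles (S : Set (ℝ × ℝ)) : Set Tile :=
  {p | p.toSet ⊆ S ∧ ∀ q : Tile, q.toSet ⊆ S → tileLE p q → q = p}

/-- The phase plane projection `Π_S` associated to a subset `S` of the phase plane,
computed with the canonical tiling of `S` by maximal tiles (the projection is independent
of the chosen tiling). -/
def piProj (S : Set (ℝ × ℝ)) (f : ℝ → ℂ) (x : ℝ) : ℂ := projSet (maxTiles S) f x

/-- A bitile: the dyadic rectangle `[2^k n, 2^k(n+1)) × [2^{1-k} l, 2^{1-k}(l+1))` of area two. -/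
structure Bitile where
  k : ℤ
  n : ℕ
  l : ℕ

namespace Bitile

/-- The time interval `I_P` of a bitile. -/
def timeI (P : Bitile) : Set ℝ := Ico ((2:ℝ)^P.k * P.n) ((2:ℝ)^P.k * (P.n+1))

/-- The frequency interval `ω_P` of a bitile. -/
def freqI (P : Bitile) : Set ℝ := Ico ((2:ℝ)^(1-P.k) * P.l) ((2:ℝ)^(1-P.k) * (P.l+1))

/-- The bitile as a subset of the phase plane. -/
def toSet (P : Bitile) : Set (ℝ × ℝ) := P.timeI ×ˢ P.freqI

/-- The lower tile `P_d` of a bitile. -/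
def d (P : Bitile) : Tile := ⟨P.k, P.n, 2*P.l⟩

/-- The upper tile `P_u` of a bitile. -/
def u (P : Bitile) : Tile := ⟨P.k, P.n, 2*P.l+1⟩

/-- The left tile of a bitile. -/
def left (P : Bitile) : Tile := ⟨P.k-1, 2*P.n, P.l⟩

/-- The right tile of a bitile. -/
def right (P : Bitile) : Tile := ⟨P.k-1, 2*P.n+1, P.l⟩

/-- The `L^∞`-normalized wave packet `φ_{P_d} = |I_P|^{1/2} w_{P_d}`. -/
def phid (P : Bitile) (x : ℝ) : ℝ := Real.sqrt ((2:ℝ)^P.k) * P.d.wp x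

end Bitile

/-- The order on dyadic rectangles, for bitiles. -/
def bitileLE (P Q : Bitile) : Prop := P.timeI ⊆ Q.timeI ∧ Q.freqI ⊆ P.freqI

/-- Strict order on bitiles. -/
def bitileLT (P Q : Bitile) : Prop := bitileLE P Q ∧ P ≠ Q

/-- A collection of bitiles is convex if together with `P₁ < P < P₂` for `P₁, P₂` in the
collection it contains `P`. -/
def IsConvex (PP : Set Bitile) : Prop :=
  ∀ P1 P2 P : Bitile, P1 ∈ PP → P2 ∈ PP → bitileLT P1 P → bitileLT P P2 → P ∈ PP

/-- A tree: a collection of bitiles with a (unique) maximal element `P_T = I_T × ω_T`. -/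
structure Tree where
  carrier : Set Bitile
  top : Bitile
  top_mem : top ∈ carrier
  le_top : ∀ P ∈ carrier, bitileLE P top

namespace Tree

/-- `T_d`: those bitiles of the tree whose lower tile frequency interval contains `ω_T`
(in the paper's notation, `P_T ≤ P_d`). -/
def Td (T : Tree) : Set Bitile := {P | P ∈ T.carrier ∧ T.top.freqI ⊆ P.d.freqI}

/-- `T_u`: those bitiles of the tree whose upper tile frequency interval contains `ω_T`
(in the paper's notation, `P_T ≤ P_u`). -/
def Tu (T : Tree) : Set Bitile := {P | P ∈ T.carrier ∧ T.top.freqI ⊆ P.u.freqI}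

/-- The region `⋃_{P ∈ T} P` of the phase plane occupied by a tree. -/
def unionSet (T : Tree) : Set (ℝ × ℝ) := ⋃ P ∈ T.carrier, P.toSet

/-- The phase plane projection `Π_T` of a (convex) tree. -/
def proj (T : Tree) (f : ℝ → ℂ) : ℝ → ℂ := piProj T.unionSet f

end Tree

/-- The vertical dilation `2^L S` of a subset of the phase plane. -/
def dilate (L : ℕ) (S : Set (ℝ × ℝ)) : Set (ℝ × ℝ) := (fun q => (q.1, (2:ℝ)^L * q.2)) '' S

/-- The enlarged tree `T^{(L)}` with respect to a frequency `ξ ∈ ω_T`: all bitiles `P` with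
`2^L ξ ∈ ω_P` contained in a rectangle `2^L P'` with `P' ∈ T`. -/
def Tree.enlarged (L : ℕ) (T : Tree) (ξ : ℝ) : Set Bitile :=
  {P | (2:ℝ)^L * ξ ∈ P.freqI ∧ ∃ P' ∈ T.carrier, P.toSet ⊆ dilate L P'.toSet}

/-- The region of the phase plane occupied by the enlarged tree `T^{(L)}`. -/
def Tree.enlargedSet (L : ℕ) (T : Tree) (ξ : ℝ) : Set (ℝ × ℝ) :=
  ⋃ P ∈ T.enlarged L ξ, P.toSet

/-- The left endpoint of `ω_T`, a canonical choice of `ξ ∈ ω_T`. -/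
def Tree.xiTop (T : Tree) : ℝ := (2:ℝ)^(1-T.top.k) * T.top.l

/-- The phase plane projection `Π_{T^{(L)}}` of the enlarged tree (independent of the
choice of `ξ ∈ ω_T`; we use the canonical choice).  For `L = 0` this is `Π_T`. -/
def Tree.projL (L : ℕ) (T : Tree) (f : ℝ → ℂ) : ℝ → ℂ := piProj (T.enlargedSet L T.xiTop) f

/-- `size^{(L)}(PP, f) = sup |I_T|^{-1/2} ‖Π_{T^{(L)}} f‖₂`, the supremum over convex trees
`T ⊆ PP`.  For `L = 0` this is the plain `size(PP, f)`. -/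
def size (L : ℕ) (PP : Set Bitile) (f : ℝ → ℂ) : ℝ≥0∞ :=
  ⨆ (T : Tree) (_ : T.carrier ⊆ PP ∧ IsConvex T.carrier),
    (ENNReal.ofReal (Real.sqrt ((2:ℝ)^T.top.k)))⁻¹ * eLpNorm (T.projL L f) 2 volume

/-- The quartile form `Λ_{PP}` restricted to a collection `PP` of bitiles. -/
def quartileFormOn (L : ℕ) (PP : Set Bitile) (f1 f2 f3 : ℝ → ℂ) : ℂ :=
  ∫ x, ∑' P : PP, (P.1.phid x : ℂ) * projT P.1.u f1 x *
      piProj (dilate L P.1.d.toSet) f2 x * piProj (dilate L P.1.d.toSet) f3 x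

/-- The bitiles contained in the strip `ℝ₊ × [0, 2^N)`. -/
def stripBitiles (N : ℕ) : Set Bitile := {P | P.freqI ⊆ Ico (0:ℝ) ((2:ℝ)^N)}

/-- The quartile form `Λ_L` (with frequency truncation parameter `N`). -/
def quartileForm (L N : ℕ) (f1 f2 f3 : ℝ → ℂ) : ℂ :=
  quartileFormOn L (stripBitiles N) f1 f2 f3

/-- The quartile form perturbed by a bounded sequence of coefficients `c_P`. -/
def quartileFormC (L N : ℕ) (c : Bitile → ℂ) (f1 f2 f3 : ℝ → ℂ) : ℂ :=
  ∫ x, ∑' P : stripBitiles N, c P.1 * (P.1.phid x : ℂ) * projT P.1.u f1 x *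
      piProj (dilate L P.1.d.toSet) f2 x * piProj (dilate L P.1.d.toSet) f3 x

/-- The counting function `Σ_{T ∈ 𝕋} 1_{I_T}` of a collection of trees. -/
def countingFn (𝕋 : Set Tree) (x : ℝ) : ℝ≥0∞ :=
  ∑' T : 𝕋, (T.1.top.timeI).indicator (fun _ => (1:ℝ≥0∞)) x

/-- The average of an `ℝ≥0∞`-valued function over a set. -/
def avgOn (I : Set ℝ) (g : ℝ → ℝ≥0∞) : ℝ≥0∞ := (volume I)⁻¹ * ∫⁻ x in I, g x

/-- The dyadic BMO norm on `[0,∞)` of an `ℝ≥0∞`-valued function. -/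
def dyadicBMO (g : ℝ → ℝ≥0∞) : ℝ≥0∞ :=
  ⨆ (k : ℤ) (n : ℕ), avgOn (dyadicI k n)
    (fun x => (g x - avgOn (dyadicI k n) g) + (avgOn (dyadicI k n) g - g x))

/-- The dyadic Hardy-Littlewood maximal function on `[0,∞)`. -/
def dyadicMax (f : ℝ → ℂ) (x : ℝ) : ℝ≥0∞ :=
  ⨆ (k : ℤ) (n : ℕ) (_ : x ∈ dyadicI k n),
    (volume (dyadicI k n))⁻¹ * ∫⁻ y in dyadicI k n, ‖f y‖₊

/-- The dyadic interval of length `2^j` containing `y ≥ 0`. -/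
def freqInterval (j : ℤ) (y : ℝ) : Set ℝ :=
  Ico ((2:ℝ)^j * ⌊y / (2:ℝ)^j⌋) ((2:ℝ)^j * (⌊y / (2:ℝ)^j⌋ + 1))

/-- The projection `Π_l := Π_{I_T × ω_l}`, where `ω_l` is the dyadic interval of
length `2^l` containing the frequency `y`. -/
def PiScale (T : Tree) (j : ℤ) (y : ℝ) (f : ℝ → ℂ) : ℝ → ℂ :=
  piProj (T.top.timeI ×ˢ freqInterval j y) f

/-- The difference projection `Π_l^Δ = Π_l - Π_{l-1}`. -/
def PiDelta (T : Tree) (j : ℤ) (y : ℝ) (f : ℝ → ℂ) (x : ℝ) : ℂ :=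
  PiScale T j y f x - PiScale T (j-1) y f x




open Classical in
/-- children of a set of dyadic nodes -/
def ch (Y : Finset (ℕ × ℕ)) : Finset (ℕ × ℕ) :=
  Y.image (fun p => (p.1+1, 2*p.2)) ∪ Y.image (fun p => (p.1+1, 2*p.2+1))

lemma mem_ch {Y : Finset (ℕ × ℕ)} {p : ℕ × ℕ} : p ∈ ch Y ↔ ∃ r, p.1 = r + 1 ∧ (r, p.2/2) ∈ Y := by
  obtain ⟨i, m⟩ := p
  simp only [ch, Finset.mem_union, Finset.mem_image, Prod.mk.injEq, Prod.exists]
  constructor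
  · rintro (⟨r, a, h, h1, h2⟩ | ⟨r, a, h, h1, h2⟩)
    · exact ⟨r, h1.symm, by rw [← h2]; simpa using h⟩
    · refine ⟨r, h1.symm, ?_⟩
      have : m / 2 = a := by omega
      rw [this]; exact h
  · rintro ⟨r, h1, h2⟩
    rcases Nat.even_or_odd' m with ⟨c, hc | hc⟩
    · left; exact ⟨r, m/2, h2, h1.symm, by omega⟩
    · right; exact ⟨r, m/2, h2, h1.symm, by omega⟩

open Classical in
lemma sum_ch {K : Type*} [Field K] [CharZero K] (Y : Finset (ℕ × ℕ)) (U : ℕ → ℕ → K) :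
    ∑ p ∈ ch Y, (1/2:K)^p.1 * U p.1 p.2 =
    ∑ p ∈ Y, (1/2:K)^p.1 * ((U (p.1+1) (2*p.2) + U (p.1+1) (2*p.2+1))/2) := by
  unfold ch
  rw [Finset.sum_union, Finset.sum_image, Finset.sum_image, ← Finset.sum_add_distrib]
  · apply Finset.sum_congr rfl
    intro p hp
    simp only [pow_succ]; ring
  · rintro ⟨a, b⟩ _ ⟨c, d⟩ _ h
    simp only [Prod.mk.injEq] at h ⊢
    omega
  · rintro ⟨a, b⟩ _ ⟨c, d⟩ _ h
    simp only [Prod.mk.injEq] at h ⊢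
    omega
  · rw [Finset.disjoint_left]
    rintro ⟨a, b⟩ h1 h2
    simp only [Finset.mem_image, Prod.mk.injEq, Prod.exists] at h1 h2
    obtain ⟨_, _, _, h3, h4⟩ := h1
    obtain ⟨_, _, _, h5, h6⟩ := h2
    omega

/-- exits and entries -/
def exits (Y : Finset (ℕ × ℕ)) : Finset (ℕ × ℕ) := by classical exact ch Y \ Y
def entries (Y : Finset (ℕ × ℕ)) : Finset (ℕ × ℕ) := by classical exact Y \ ch Y

lemma mem_exits {Y : Finset (ℕ × ℕ)} {p : ℕ × ℕ} : p ∈ exits Y ↔ p ∈ ch Y ∧ p ∉ Y := by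
  simp [exits]
lemma mem_entries {Y : Finset (ℕ × ℕ)} {p : ℕ × ℕ} : p ∈ entries Y ↔ p ∈ Y ∧ p ∉ ch Y := by
  simp [entries]

lemma flow {K : Type*} [Field K] [CharZero K] (Y : Finset (ℕ × ℕ)) (U : ℕ → ℕ → K) :
    ∑ p ∈ Y, (1/2:K)^p.1 * ((U (p.1+1) (2*p.2) + U (p.1+1) (2*p.2+1))/2)
      - ∑ p ∈ Y, (1/2:K)^p.1 * U p.1 p.2 =
    ∑ p ∈ exits Y, (1/2:K)^p.1 * U p.1 p.2 - ∑ p ∈ entries Y, (1/2:K)^p.1 * U p.1 p.2 := by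
  classical
  rw [← sum_ch]
  have h1 := Finset.sum_inter_add_sum_sdiff (ch Y) Y (fun p => (1/2:K)^p.1 * U p.1 p.2)
  have h2 := Finset.sum_inter_add_sum_sdiff Y (ch Y) (fun p => (1/2:K)^p.1 * U p.1 p.2)
  rw [Finset.inter_comm] at h2
  have e1 : exits Y = ch Y \ Y := by ext; simp [mem_exits]
  have e2 : entries Y = Y \ ch Y := by ext; simp [mem_entries]
  rw [e1, e2, ← h1, ← h2]; ring

/-- weight -/
def wt (Y : Finset (ℕ × ℕ)) : ℝ := ∑ p ∈ Y, (1/2:ℝ)^p.1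

lemma wt_mono {Y Z : Finset (ℕ × ℕ)} (h : Y ⊆ Z) : wt Y ≤ wt Z :=
  Finset.sum_le_sum_of_subset_of_nonneg h (fun _ _ _ => by positivity)

lemma wt_nonneg (Y : Finset (ℕ × ℕ)) : 0 ≤ wt Y := Finset.sum_nonneg (fun _ _ => by positivity)

lemma wt_exits (Y : Finset (ℕ × ℕ)) : wt (exits Y) = wt (entries Y) := by
  have := flow (K := ℝ) Y (fun _ _ => 1)
  simp only [wt]
  norm_num at this
  simp only [one_div]
  norm_num
  linarith

/-- tree recursion rule -/
def TR (ε : ℕ → Prop) (b a : ℕ → ℕ → ℂ) : Prop :=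
  ∀ r m, b (r+1) (2*m) = b r m + a r m ∧
    (ε r → b (r+1) (2*m+1) = b r m - a r m) ∧ (¬ ε r → b (r+1) (2*m+1) = a r m - b r m)

lemma TR.sq {ε b a} (h : TR ε b a) (r m : ℕ) :
    (‖b (r+1) (2*m)‖^2 + ‖b (r+1) (2*m+1)‖^2)/2 = ‖b r m‖^2 + ‖a r m‖^2 := by
  obtain ⟨h1, h2, h3⟩ := h r m
  by_cases he : ε r
  · rw [h1, h2 he]
    simp only [← Complex.normSq_eq_norm_sq, Complex.normSq_apply, Complex.add_re, Complex.add_im,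
      Complex.sub_re, Complex.sub_im]
    ring
  · rw [h1, h3 he]
    simp only [← Complex.normSq_eq_norm_sq, Complex.normSq_apply, Complex.add_re, Complex.add_im,
      Complex.sub_re, Complex.sub_im]
    ring

lemma TR.prod {ε b a b' a'} (h : TR ε b a) (h' : TR ε b' a') (r m : ℕ) :
    (b (r+1) (2*m) * b' (r+1) (2*m) + b (r+1) (2*m+1) * b' (r+1) (2*m+1))/2
      = b r m * b' r m + a r m * a' r m := by
  obtain ⟨h1, h2, h3⟩ := h r m
  obtain ⟨h1', h2', h3'⟩ := h' r m
  by_cases he : ε r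
  · rw [h1, h2 he, h1', h2' he]; ring
  · rw [h1, h3 he, h1', h3' he]; ring

lemma TR.child {ε b a} (h : TR ε b a) {Y : Finset (ℕ × ℕ)}
    (hb : ∀ p ∈ Y, ‖b p.1 p.2‖ ≤ 1) (ha : ∀ p ∈ Y, ‖a p.1 p.2‖ ≤ 1) :
    ∀ p ∈ ch Y, ‖b p.1 p.2‖ ≤ 2 := by
  rintro ⟨i, m⟩ hp
  obtain ⟨r, h1, h2⟩ := mem_ch.1 hp
  simp only at h1 h2 ⊢
  subst h1
  have hb := hb _ h2
  have ha := ha _ h2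
  simp only at hb ha
  obtain ⟨e1, e2, e3⟩ := h r (m/2)
  rcases Nat.even_or_odd' m with ⟨c, hc | hc⟩
  · have : m = 2*(m/2) := by omega
    rw [this, e1]
    exact (norm_add_le _ _).trans (by linarith)
  · have : m = 2*(m/2)+1 := by omega
    rw [this]
    by_cases he : ε r
    · rw [e2 he]; exact (norm_sub_le _ _).trans (by linarith)
    · rw [e3 he]; exact (norm_sub_le _ _).trans (by linarith)

lemma TR.energy {ε b a} (h : TR ε b a) {Y : Finset (ℕ × ℕ)}
    (hb : ∀ p ∈ Y, ‖b p.1 p.2‖ ≤ 1) (ha : ∀ p ∈ Y, ‖a p.1 p.2‖ ≤ 1) :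
    ∑ p ∈ Y, (1/2:ℝ)^p.1 * ‖a p.1 p.2‖^2 ≤ 4 * wt (exits Y) := by
  have hf := flow (K := ℝ) Y (fun r m => ‖b r m‖^2)
  simp only [h.sq, mul_add, Finset.sum_add_distrib] at hf
  have h1 : 0 ≤ ∑ p ∈ entries Y, (1/2:ℝ)^p.1 * ‖b p.1 p.2‖^2 :=
    Finset.sum_nonneg (fun _ _ => by positivity)
  have h2 : ∑ p ∈ exits Y, (1/2:ℝ)^p.1 * ‖b p.1 p.2‖^2 ≤ 4 * wt (exits Y) := by
    rw [wt, Finset.mul_sum]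
    apply Finset.sum_le_sum
    intro p hp
    have := h.child hb ha p (mem_exits.1 hp).1
    have h3 : ‖b p.1 p.2‖^2 ≤ 4 := by nlinarith [norm_nonneg (b p.1 p.2)]
    rw [mul_comm]
    exact mul_le_mul_of_nonneg_right h3 (by positivity)
  linarith

lemma TR.energy2 {ε b a b' a'} (h : TR ε b a) (h' : TR ε b' a') {Y : Finset (ℕ × ℕ)}
    (hb : ∀ p ∈ Y, ‖b p.1 p.2‖ ≤ 1) (ha : ∀ p ∈ Y, ‖a p.1 p.2‖ ≤ 1)
    (hb' : ∀ p ∈ Y, ‖b' p.1 p.2‖ ≤ 1) (ha' : ∀ p ∈ Y, ‖a' p.1 p.2‖ ≤ 1) :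
    ∑ p ∈ Y, (1/2:ℝ)^p.1 * (‖a p.1 p.2‖ * ‖a' p.1 p.2‖) ≤ 4 * wt (exits Y) := by
  have e1 := h.energy hb ha
  have e2 := h'.energy hb' ha'
  have : ∑ p ∈ Y, (1/2:ℝ)^p.1 * (‖a p.1 p.2‖ * ‖a' p.1 p.2‖) ≤
    ∑ p ∈ Y, ((1/2:ℝ)^p.1 * ‖a p.1 p.2‖^2 + (1/2:ℝ)^p.1 * ‖a' p.1 p.2‖^2)/2 := by
    apply Finset.sum_le_sum
    intro p _
    have h3 : (0:ℝ) ≤ (1/2:ℝ)^p.1 := by positivity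
    nlinarith [mul_nonneg h3 (sq_nonneg (‖a p.1 p.2‖ - ‖a' p.1 p.2‖))]
  rw [← Finset.sum_div, Finset.sum_add_distrib] at this
  linarith

/-- The bad predicates -/
def sgn (u : ℕ) : ℂ := if u % 2 = 0 then 1 else -1

lemma norm_sgn (u : ℕ) : ‖sgn u‖ = 1 := by unfold sgn; split_ifs <;> simp

open Classical in
def Gh (ε : ℕ → Prop) (a : ℕ → ℕ → ℂ) : ℕ → ℕ → ℂ
  | 0, _ => 0
  | i+1, u => Gh ε a i (u/2) + if ε i then sgn u * a i (u/2) else 0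

def Gbig (ε : ℕ → Prop) (a : ℕ → ℕ → ℂ) (n : ℕ) : ℕ → ℕ → Prop
  | 0, _ => False
  | i+1, u => Gbig ε a n i (u/2) ∨ (n:ℝ) ≤ ‖Gh ε a (i+1) u‖




lemma layer (x : ℝ) (N : ℕ) (hx : x < N) :
    x ≤ ∑ n ∈ Finset.range N, if (n:ℝ) ≤ x then (1:ℝ) else 0 := by
  induction N generalizing x with
  | zero =>
    simp at hx ⊢; linarith
  | succ k ih =>
    by_cases hx0 : x < 0
    · exact hx0.le.trans (Finset.sum_nonneg fun _ _ => by split_ifs <;> norm_num)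
    · rw [Finset.sum_range_succ']
      have := ih (x-1) (by push_cast at hx; linarith)
      have h2 : ∑ n ∈ Finset.range k, (if ((n+1:ℕ):ℝ) ≤ x then (1:ℝ) else 0) =
        ∑ n ∈ Finset.range k, (if (n:ℝ) ≤ x - 1 then (1:ℝ) else 0) := by
        apply Finset.sum_congr rfl
        intro n _
        have : ((n+1:ℕ):ℝ) ≤ x ↔ (n:ℝ) ≤ x - 1 := by
          push_cast
          constructor <;> intro h <;> linarith
        simp only [this]
      rw [h2]
      have h3 : ((0:ℕ):ℝ) ≤ x := by push_cast; linarith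
      rw [if_pos h3]; linarith

/-- node is big -/
def nbig (ε : ℕ → Prop) (a : ℕ → ℕ → ℂ) (L n : ℕ) (p : ℕ × ℕ) : Prop :=
  Gbig ε a n (p.1+1) (p.2/2^L)

lemma nbig_child {ε a L n r m} (h : nbig ε a L n (r, m/2)) : nbig ε a L n (r+1, m) := by
  unfold nbig at *
  simp only [Gbig] at *
  left
  have e : m / 2 ^ L / 2 = m / 2 / 2 ^ L := by
    rw [Nat.div_div_eq_div_mul, mul_comm, ← Nat.div_div_eq_div_mul]
  rw [e]
  exact h

open Classical in
/-- Abel summation on a tree. -/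
lemma tree_abel (L : ℕ) (ε : ℕ → Prop) (b1 a1 b2 a2 b3 a3 : ℕ → ℕ → ℂ)
    (h2 : TR ε b2 a2) (h3 : TR ε b3 a3) (T : Finset (ℕ × ℕ))
    (hb1 : ∀ p ∈ T, ‖b1 p.1 (p.2/2^(L+1))‖ ≤ 1)
    (hb2 : ∀ p ∈ T, ‖b2 p.1 p.2‖ ≤ 1) (ha2 : ∀ p ∈ T, ‖a2 p.1 p.2‖ ≤ 1)
    (hb3 : ∀ p ∈ T, ‖b3 p.1 p.2‖ ≤ 1) (ha3 : ∀ p ∈ T, ‖a3 p.1 p.2‖ ≤ 1)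
    (N : ℕ) (hN : ∀ p ∈ T, ‖Gh ε a1 (p.1+1) (p.2/2^L)‖ < N ∧
      ‖Gh ε a1 p.1 (p.2/2^(L+1))‖ < N) (hN0 : 0 < N) :
    ‖∑ p ∈ T, (1/2:ℂ)^p.1 * (sgn (p.2/2^L) * (if ε p.1 then a1 p.1 (p.2/2^(L+1)) else
      b1 p.1 (p.2/2^(L+1))) * (if ε p.1 then b2 p.1 p.2 * b3 p.1 p.2 else a2 p.1 p.2 * a3 p.1 p.2))‖
    ≤ 13 * ∑ n ∈ Finset.range N, wt (exits (T.filter (nbig ε a1 L n))) := by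
  set G : ℕ → ℕ → ℂ := fun r m => Gh ε a1 (r+1) (m/2^L) with hG
  set Gp : ℕ → ℕ → ℂ := fun r m => Gh ε a1 r (m/2^(L+1)) with hGp
  have hGG : ∀ r m, G r m = Gp r m + if ε r then sgn (m/2^L) * a1 r (m/2^(L+1)) else 0 := by
    intro r m
    simp only [hG, hGp, Gh, pow_succ, Nat.div_div_eq_div_mul]
  have hGc : ∀ r m, Gp (r+1) m = G r (m/2) := by
    intro r m
    simp only [hG, hGp, pow_succ, Nat.div_div_eq_div_mul, mul_comm]
  have hGc0 : ∀ r m, Gp (r+1) (2*m) = G r m := by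
    intro r m; rw [hGc]; congr 1; omega
  have hGc1 : ∀ r m, Gp (r+1) (2*m+1) = G r m := by
    intro r m; rw [hGc]; congr 1; omega
  have hf := flow (K := ℂ) T (fun r m => Gp r m * (b2 r m * b3 r m))
  simp only [hGc0, hGc1] at hf
  have hf' : ∑ p ∈ T, (1/2:ℂ)^p.1 * (sgn (p.2/2^L) * (if ε p.1 then a1 p.1 (p.2/2^(L+1)) else
      b1 p.1 (p.2/2^(L+1))) * (if ε p.1 then b2 p.1 p.2 * b3 p.1 p.2 else a2 p.1 p.2 * a3 p.1 p.2))
     = ∑ p ∈ T, (1/2:ℂ)^p.1 * (((if ε p.1 then 0 else sgn (p.2/2^L) * b1 p.1 (p.2/2^(L+1)))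
          - G p.1 p.2) * (a2 p.1 p.2 * a3 p.1 p.2))
      + (∑ p ∈ exits T, (1/2:ℂ)^p.1 * (Gp p.1 p.2 * (b2 p.1 p.2 * b3 p.1 p.2))
      - ∑ p ∈ entries T, (1/2:ℂ)^p.1 * (Gp p.1 p.2 * (b2 p.1 p.2 * b3 p.1 p.2))) := by
    rw [← hf, ← Finset.sum_sub_distrib, ← Finset.sum_add_distrib]
    apply Finset.sum_congr rfl
    intro p _
    have e := h2.prod h3 p.1 p.2
    have e' : (G p.1 p.2 * (b2 (p.1+1) (2*p.2) * b3 (p.1+1) (2*p.2)) + G p.1 p.2 *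
      (b2 (p.1+1) (2*p.2+1) * b3 (p.1+1) (2*p.2+1)))/2 =
      G p.1 p.2 * (b2 p.1 p.2 * b3 p.1 p.2 + a2 p.1 p.2 * a3 p.1 p.2) := by
      rw [← e]; ring
    rw [e', hGG p.1 p.2]
    by_cases he : ε p.1
    · simp only [he, if_true]; ring
    · simp only [he, if_false]; ring
  rw [hf']
  -- layer sets
  set Y : ℕ → Finset (ℕ × ℕ) := fun n => T.filter (nbig ε a1 L n) with hY
  have hYT : ∀ n, Y n ⊆ T := fun n => Finset.filter_subset _ _
  have c1 : ∀ p ∈ T, ‖G p.1 p.2‖ ≤ ∑ n ∈ Finset.range N, if p ∈ Y n then (1:ℝ) else 0 := by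
    intro p hp
    refine (layer _ N (hN p hp).1).trans (Finset.sum_le_sum ?_)
    intro n _
    by_cases h : (n:ℝ) ≤ ‖G p.1 p.2‖
    · have : p ∈ Y n := by
        simp only [hY, Finset.mem_filter]
        exact ⟨hp, Or.inr h⟩
      rw [if_pos this]; split_ifs <;> norm_num
    · rw [if_neg (by exact h)]; split_ifs <;> norm_num
  have c0 : ∀ p ∈ T, (1:ℝ) ≤ ∑ n ∈ Finset.range N, if p ∈ Y n then (1:ℝ) else 0 := by
    intro p hp
    have : p ∈ Y 0 := by
      simp only [hY, Finset.mem_filter]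
      exact ⟨hp, Or.inr (by simp)⟩
    calc (1:ℝ) = if p ∈ Y 0 then (1:ℝ) else 0 := by simp [this]
      _ ≤ _ := Finset.single_le_sum (f := fun n => if p ∈ Y n then (1:ℝ) else 0)
        (fun _ _ => by positivity) (Finset.mem_range.2 hN0)
  -- swap
  have swap : ∀ (S : Finset (ℕ × ℕ)) (F : ℕ × ℕ → ℝ) (Z : ℕ → Finset (ℕ × ℕ)) , (∀ n, Z n ⊆ S) →
      ∑ p ∈ S, F p * (∑ n ∈ Finset.range N, if p ∈ Z n then (1:ℝ) else 0) =
      ∑ n ∈ Finset.range N, ∑ p ∈ Z n, F p := by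
    intro S F Z hZ
    simp only [Finset.mul_sum]
    rw [Finset.sum_comm]
    apply Finset.sum_congr rfl
    intro n _
    simp only [mul_ite, mul_one, mul_zero]
    rw [← Finset.sum_filter]
    congr 1
    ext p; simp only [Finset.mem_filter]
    exact ⟨fun h => h.2, fun h => ⟨hZ n h, h⟩⟩
  -- part 1
  have P1 : ‖∑ p ∈ T, (1/2:ℂ)^p.1 * (((if ε p.1 then 0 else sgn (p.2/2^L) * b1 p.1 (p.2/2^(L+1)))
          - G p.1 p.2) * (a2 p.1 p.2 * a3 p.1 p.2))‖ ≤ 8 * ∑ n ∈ Finset.range N, wt (exits (Y n)) := by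
    calc _ ≤ ∑ p ∈ T, ((1/2:ℝ)^p.1 * (‖a2 p.1 p.2‖ * ‖a3 p.1 p.2‖)*2) *
            (∑ n ∈ Finset.range N, if p ∈ Y n then (1:ℝ) else 0) := by
          refine (norm_sum_le _ _).trans (Finset.sum_le_sum ?_)
          intro p hp
          have hh : ‖(if ε p.1 then 0 else sgn (p.2/2^L) * b1 p.1 (p.2/2^(L+1))) - G p.1 p.2‖ ≤
            2 * ∑ n ∈ Finset.range N, if p ∈ Y n then (1:ℝ) else 0 := by
            have h4 := c1 p hp
            have h5 := c0 p hp
            have h6 : ‖(if ε p.1 then 0 else sgn (p.2/2^L) * b1 p.1 (p.2/2^(L+1)))‖ ≤ 1 := by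
              split_ifs
              · simp
              · rw [norm_mul, norm_sgn, one_mul]; exact hb1 p hp
            have := norm_sub_le (if ε p.1 then 0 else sgn (p.2/2^L) * b1 p.1 (p.2/2^(L+1))) (G p.1 p.2)
            linarith
          rw [norm_mul, norm_mul, norm_mul, norm_pow]
          have e12 : ‖(1/2:ℂ)‖ = 1/2 := by norm_num
          rw [e12]
          calc _ = ((1/2:ℝ)^p.1 * (‖a2 p.1 p.2‖ * ‖a3 p.1 p.2‖)) * _ := by ring
            _ ≤ ((1/2:ℝ)^p.1 * (‖a2 p.1 p.2‖ * ‖a3 p.1 p.2‖)) *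
                (2 * ∑ n ∈ Finset.range N, if p ∈ Y n then (1:ℝ) else 0) :=
              mul_le_mul_of_nonneg_left hh (by positivity)
            _ = _ := by ring
      _ = ∑ n ∈ Finset.range N, ∑ p ∈ Y n, ((1/2:ℝ)^p.1 * (‖a2 p.1 p.2‖ * ‖a3 p.1 p.2‖)*2) :=
          swap _ _ _ hYT
      _ ≤ _ := by
          rw [Finset.mul_sum]
          apply Finset.sum_le_sum
          intro n _
          rw [← Finset.sum_mul]
          have := h2.energy2 h3 (Y := Y n) (fun p hp => hb2 p (hYT n hp))
            (fun p hp => ha2 p (hYT n hp)) (fun p hp => hb3 p (hYT n hp)) (fun p hp => ha3 p (hYT n hp))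
          linarith
  have P2 : ‖∑ p ∈ exits T, (1/2:ℂ)^p.1 * (Gp p.1 p.2 * (b2 p.1 p.2 * b3 p.1 p.2))‖ ≤
      4 * ∑ n ∈ Finset.range N, wt (exits (Y n)) := by
    calc _ ≤ ∑ p ∈ exits T, ((1/2:ℝ)^p.1 * 4) *
            (∑ n ∈ Finset.range N, if p ∈ exits T ∩ exits (Y n) then (1:ℝ) else 0) := by
          refine (norm_sum_le _ _).trans (Finset.sum_le_sum ?_)
          intro p hp
          have hp' := mem_exits.1 hp
          obtain ⟨r, hr1, hr2⟩ := mem_ch.1 hp'.1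
          have hh : ‖Gp p.1 p.2‖ ≤ ∑ n ∈ Finset.range N, if p ∈ exits T ∩ exits (Y n) then (1:ℝ) else 0 := by
            rw [hr1, hGc]
            refine (c1 _ hr2).trans (Finset.sum_le_sum ?_)
            intro n _
            by_cases h : (r, p.2/2) ∈ Y n
            · have : p ∈ exits T ∩ exits (Y n) := by
                rw [Finset.mem_inter]
                exact ⟨hp, mem_exits.2 ⟨mem_ch.2 ⟨r, hr1, h⟩, fun h' => hp'.2 (hYT n h')⟩⟩
              simp [this]
              split_ifs <;> norm_num
            · rw [if_neg h]; split_ifs <;> norm_num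
          rw [norm_mul, norm_mul, norm_mul, norm_pow]
          have e12 : ‖(1/2:ℂ)‖ = 1/2 := by norm_num
          rw [e12]
          have k2 := h2.child hb2 ha2 p hp'.1
          have k3 := h3.child hb3 ha3 p hp'.1
          have k4 : ‖b2 p.1 p.2‖ * ‖b3 p.1 p.2‖ ≤ 4 := by
            nlinarith [norm_nonneg (b2 p.1 p.2), norm_nonneg (b3 p.1 p.2)]
          calc _ = (1/2:ℝ)^p.1 * (‖b2 p.1 p.2‖ * ‖b3 p.1 p.2‖) * ‖Gp p.1 p.2‖ := by ring
            _ ≤ _ := by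
              apply mul_le_mul _ hh (norm_nonneg _) (by positivity)
              exact mul_le_mul_of_nonneg_left k4 (by positivity)
      _ = ∑ n ∈ Finset.range N, ∑ p ∈ exits T ∩ exits (Y n), ((1/2:ℝ)^p.1 * 4) :=
          swap _ _ _ (fun n => Finset.inter_subset_left)
      _ ≤ _ := by
          rw [Finset.mul_sum]
          apply Finset.sum_le_sum
          intro n _
          rw [← Finset.sum_mul, mul_comm]
          have := wt_mono (Finset.inter_subset_right (s₁ := exits T) (s₂ := exits (Y n)))
          unfold wt at this ⊢
          linarith
  have P3 : ‖∑ p ∈ entries T, (1/2:ℂ)^p.1 * (Gp p.1 p.2 * (b2 p.1 p.2 * b3 p.1 p.2))‖ ≤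
      ∑ n ∈ Finset.range N, wt (exits (Y n)) := by
    calc _ ≤ ∑ p ∈ entries T, ((1/2:ℝ)^p.1) *
            (∑ n ∈ Finset.range N, if p ∈ entries T ∩ entries (Y n) then (1:ℝ) else 0) := by
          refine (norm_sum_le _ _).trans (Finset.sum_le_sum ?_)
          intro p hp
          have hp' := mem_entries.1 hp
          have hh : ‖Gp p.1 p.2‖ ≤ ∑ n ∈ Finset.range N, if p ∈ entries T ∩ entries (Y n) then (1:ℝ) else 0 := by
            obtain ⟨i, m⟩ := p
            cases i with
            | zero =>
              simp only [hGp, Gh, norm_zero]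
              exact Finset.sum_nonneg fun _ _ => by positivity
            | succ r =>
              refine (layer _ N (hN _ hp'.1).2).trans (Finset.sum_le_sum ?_)
              intro n _
              by_cases h : (n:ℝ) ≤ ‖Gp (r+1) m‖
              · have h7 : nbig ε a1 L n (r, m/2) := by
                  right
                  rw [hGc] at h
                  exact h
                have h8 : (r+1, m) ∈ Y n := by
                  simp only [hY, Finset.mem_filter]
                  exact ⟨hp'.1, nbig_child h7⟩
                have : (r+1, m) ∈ entries T ∩ entries (Y n) := by
                  rw [Finset.mem_inter]
                  refine ⟨hp, mem_entries.2 ⟨h8, fun h' => hp'.2 ?_⟩⟩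
                  obtain ⟨r', q1, q2⟩ := mem_ch.1 h'
                  exact mem_ch.2 ⟨r', q1, hYT n q2⟩
                rw [if_pos this]
                split_ifs <;> norm_num
              · rw [if_neg (by exact h)]; split_ifs <;> norm_num
          rw [norm_mul, norm_mul, norm_mul, norm_pow]
          have e12 : ‖(1/2:ℂ)‖ = 1/2 := by norm_num
          rw [e12]
          have k2 := hb2 p hp'.1
          have k3 := hb3 p hp'.1
          have k4 : ‖b2 p.1 p.2‖ * ‖b3 p.1 p.2‖ ≤ 1 := by
            nlinarith [norm_nonneg (b2 p.1 p.2), norm_nonneg (b3 p.1 p.2)]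
          calc _ = (1/2:ℝ)^p.1 * (‖b2 p.1 p.2‖ * ‖b3 p.1 p.2‖) * ‖Gp p.1 p.2‖ := by ring
            _ ≤ _ := by
              apply mul_le_mul _ hh (norm_nonneg _) (by positivity)
              exact mul_le_of_le_one_right (by positivity) k4
      _ = ∑ n ∈ Finset.range N, ∑ p ∈ entries T ∩ entries (Y n), ((1/2:ℝ)^p.1) :=
          swap _ _ _ (fun n => Finset.inter_subset_left)
      _ ≤ _ := by
          apply Finset.sum_le_sum
          intro n _
          rw [wt_exits]
          exact wt_mono (Finset.inter_subset_right (s₁ := entries T) (s₂ := entries (Y n)))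
  refine (norm_add_le _ _).trans ?_
  have := norm_sub_le (∑ p ∈ exits T, (1/2:ℂ)^p.1 * (Gp p.1 p.2 * (b2 p.1 p.2 * b3 p.1 p.2)))
    (∑ p ∈ entries T, (1/2:ℂ)^p.1 * (Gp p.1 p.2 * (b2 p.1 p.2 * b3 p.1 p.2)))
  linarith




lemma cosh_le_one_add_sq {y : ℝ} (hy : |y| ≤ 1) : Real.cosh y ≤ 1 + y^2 := by
  have h1 := Real.cosh_le_exp_half_sq y
  have hy2 : y^2 ≤ 1 := by rw [← sq_abs]; nlinarith [abs_nonneg y]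
  have h2 := Real.abs_exp_sub_one_le (x := y^2/2) (by rw [abs_of_nonneg (by positivity)]; linarith)
  rw [abs_of_nonneg (show 0 ≤ y^2/2 by positivity)] at h2
  have := (abs_le.1 h2).2
  linarith

lemma abs_sinh_le {y : ℝ} (hy : |y| ≤ 1) : |Real.sinh y| ≤ 2 * |y| := by
  have h2 := abs_le.1 (Real.abs_exp_sub_one_le (x := y) hy)
  have h3 := abs_le.1 (Real.abs_exp_sub_one_le (x := -y) (by rwa [abs_neg]))
  rw [abs_neg] at h3
  rw [Real.sinh_eq, abs_le]
  constructor <;> linarith [h2.1, h2.2, h3.1, h3.2]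

lemma bell_comp (x y A B D : ℝ) (hA0 : 0 ≤ A) (hA : A ≤ 1) (hB : B ≤ 1) (hB0 : 0 ≤ B) (hy : |y| ≤ A/8)
    (hD : |D| ≤ A) :
    (Real.cosh (x+y) * (5 - (B + A^2 + 2*D)) + Real.cosh (x-y) * (5 - (B + A^2 - 2*D)))/2
      ≤ Real.cosh x * (5 - B) := by
  rw [Real.cosh_add, Real.cosh_sub]
  have h1 := cosh_le_one_add_sq (y := y) (by linarith)
  have h2 := abs_sinh_le (y := y) (by linarith)
  have h3 : |Real.sinh x| ≤ Real.cosh x := by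
    rw [abs_le]; constructor
    · have := Real.sinh_lt_cosh (-x); rw [Real.sinh_neg, Real.cosh_neg] at this; linarith
    · exact (Real.sinh_lt_cosh x).le
  have hc := Real.cosh_pos x
  have h4 : -(Real.sinh x * Real.sinh y * D) ≤ Real.cosh x * (A/4) * A := by
    refine (neg_le_abs _).trans ?_
    rw [abs_mul, abs_mul]
    have : |Real.sinh y| ≤ A/4 := by linarith
    gcongr
  have hy2 : y^2 ≤ A^2/64 := by
    rw [← sq_abs]; nlinarith [abs_nonneg y]
  have hA2 : A^2 ≤ 1 := by nlinarith
  have h5 : Real.cosh y * (5 - B - A^2) ≤ (1 + A^2/64) * (5 - B - A^2) := by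
    apply mul_le_mul_of_nonneg_right _ (by linarith); linarith
  have h6 : (1 + A^2/64) * (5 - B - A^2) ≤ 5 - B - A^2 + 5*A^2/64 := by
    nlinarith [sq_nonneg A]
  calc _ = Real.cosh x * (Real.cosh y * (5 - B - A^2)) + 2 * -(Real.sinh x * Real.sinh y * D) := by ring
    _ ≤ Real.cosh x * (5 - B - A^2 + 5*A^2/64) + 2 * (Real.cosh x * (A/4) * A) := by
      have := mul_le_mul_of_nonneg_left (h5.trans h6) hc.le
      linarith
    _ = Real.cosh x * (5 - B - A^2 + 5*A^2/64 + A^2/2) := by ring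
    _ ≤ _ := by
      apply mul_le_mul_of_nonneg_left _ hc.le
      nlinarith [sq_nonneg A]

def Ub (z w : ℂ) : ℝ := (Real.cosh (z.re/8) + Real.cosh (z.im/8)) * (5 - ‖w‖^2)

lemma bell_d (z a b : ℂ) (ha : ‖a‖ ≤ 1) (hb : ‖b‖ ≤ 1) :
    (Ub (z+a) (b+a) + Ub (z-a) (b-a))/2 ≤ Ub z b := by
  unfold Ub
  set D := b.re * a.re + b.im * a.im with hD
  have e1 : ‖b+a‖^2 = ‖b‖^2 + ‖a‖^2 + 2 * D := by
    simp only [← Complex.normSq_eq_norm_sq, Complex.normSq_apply, Complex.add_re, Complex.add_im]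
    ring
  have e2 : ‖b-a‖^2 = ‖b‖^2 + ‖a‖^2 - 2 * D := by
    simp only [← Complex.normSq_eq_norm_sq, Complex.normSq_apply, Complex.sub_re, Complex.sub_im]
    ring
  have hDa : |D| ≤ ‖a‖ := by
    have h0 : D^2 ≤ ‖b‖^2 * ‖a‖^2 := by
      simp only [← Complex.normSq_eq_norm_sq, Complex.normSq_apply]
      nlinarith [sq_nonneg (b.re * a.im - b.im * a.re)]
    apply abs_le_of_sq_le_sq _ (norm_nonneg _)
    have : ‖b‖^2 ≤ 1 := by nlinarith [norm_nonneg b]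
    nlinarith [sq_nonneg ‖a‖]
  have hb2 : ‖b‖^2 ≤ 1 := by nlinarith [norm_nonneg b]
  have k1 := bell_comp (z.re/8) (a.re/8) ‖a‖ (‖b‖^2) D (norm_nonneg _) ha hb2 (by positivity)
    (by rw [abs_div]; have := Complex.abs_re_le_norm a; norm_num; linarith) hDa
  have k2 := bell_comp (z.im/8) (a.im/8) ‖a‖ (‖b‖^2) D (norm_nonneg _) ha hb2 (by positivity)
    (by rw [abs_div]; have := Complex.abs_im_le_norm a; norm_num; linarith) hDa
  rw [e1, e2]
  simp only [Complex.add_re, Complex.add_im, Complex.sub_re, Complex.sub_im, _root_.add_div, _root_.sub_div]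
  linarith

lemma bell_u (z a b : ℂ) : (Ub z (a+b) + Ub z (a-b))/2 ≤ Ub z b := by
  unfold Ub
  have e : ‖a+b‖^2 + ‖a-b‖^2 = 2*‖a‖^2 + 2*‖b‖^2 := by
    simp only [← Complex.normSq_eq_norm_sq, Complex.normSq_apply, Complex.sub_re, Complex.sub_im,
      Complex.add_re, Complex.add_im]
    ring
  have hc1 := Real.cosh_pos (z.re/8)
  have hc2 := Real.cosh_pos (z.im/8)
  rw [← mul_add, mul_div_assoc]
  apply mul_le_mul_of_nonneg_left _ (by positivity)
  nlinarith [sq_nonneg ‖a‖]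

lemma Ub_big (z w : ℂ) (n : ℕ) (hz : (n:ℝ) ≤ ‖z‖) (hw : ‖w‖ ≤ 2) :
    Real.exp (n/16) / 2 ≤ Ub z w := by
  have h1 := Complex.norm_le_abs_re_add_abs_im z
  have hc1 := Real.cosh_pos (z.re/8)
  have hc2 := Real.cosh_pos (z.im/8)
  have key : ∀ t : ℝ, (n:ℝ)/2 ≤ |t| → Real.exp (n/16)/2 ≤ Real.cosh (t/8) := by
    intro t ht
    rw [← Real.cosh_abs, Real.cosh_eq]
    have : Real.exp (n/16) ≤ Real.exp |t/8| := by
      apply Real.exp_le_exp.2; rw [abs_div]; norm_num; linarith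
    have := Real.exp_pos (-|t/8|)
    linarith
  have h5 : 1 ≤ 5 - ‖w‖^2 := by nlinarith [norm_nonneg w]
  have h6 : Real.exp (n/16) / 2 ≤ Real.cosh (z.re/8) + Real.cosh (z.im/8) := by
    by_cases h : (n:ℝ)/2 ≤ |z.re|
    · linarith [key _ h]
    · have := key z.im (by linarith)
      linarith
  unfold Ub
  nlinarith

lemma Ub_nonneg (z w : ℂ) (hw : ‖w‖ ≤ 2) : 0 ≤ Ub z w := by
  have hc1 := Real.cosh_pos (z.re/8)
  have hc2 := Real.cosh_pos (z.im/8)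
  unfold Ub
  have h5 : 0 ≤ 5 - ‖w‖^2 := by nlinarith [norm_nonneg w]
  positivity

lemma bell_step {ε b a} (h : TR ε b a) (r m : ℕ) (hb : ‖b r m‖ ≤ 1) (ha : ‖a r m‖ ≤ 1) :
    (Ub (Gh ε a (r+1) (2*m)) (b (r+1) (2*m)) + Ub (Gh ε a (r+1) (2*m+1)) (b (r+1) (2*m+1)))/2
      ≤ Ub (Gh ε a r m) (b r m) := by
  obtain ⟨h1, h2, h3⟩ := h r m
  have e1 : 2*m/2 = m := by omega
  have e2 : (2*m+1)/2 = m := by omega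
  have s1 : sgn (2*m) = 1 := by simp [sgn]
  have s2 : sgn (2*m+1) = -1 := by simp [sgn]
  simp only [Gh, e1, e2, s1, s2]
  by_cases he : ε r
  · simp only [he, if_true, h1, h2 he]
    have := bell_d (Gh ε a r m) (a r m) (b r m) ha hb
    convert this using 5 <;> ring
  · simp only [he, if_false, h1, h3 he, add_zero]
    have := bell_u (Gh ε a r m) (a r m) (b r m)
    rwa [add_comm (b r m)]

lemma Gbig_last {ε a n i u} (h : Gbig ε a n (i+1) u) (h2 : ¬ Gbig ε a n i (u/2)) :
    (n:ℝ) ≤ ‖Gh ε a (i+1) u‖ := by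
  rcases h with h | h
  · exact absurd h h2
  · exact h

lemma div_pow_succ (m j : ℕ) : m / 2^j / 2 = m / 2^(j+1) := by
  rw [Nat.div_div_eq_div_mul, pow_succ]

open Classical in
lemma tree_exp (L : ℕ) (ε : ℕ → Prop) (b1 a1 : ℕ → ℕ → ℂ) (h1 : TR ε b1 a1)
    (T : Finset (ℕ × ℕ)) (n1 : ℕ)
    (hroot : ∀ p ∈ T, p.2 / 2^(p.1+(L+1)) = n1)
    (hb : ∀ p ∈ T, ∀ i ≤ p.1, ‖b1 i (p.2 / 2^(p.1-i+(L+1)))‖ ≤ 1)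
    (ha : ∀ p ∈ T, ∀ i ≤ p.1, ‖a1 i (p.2 / 2^(p.1-i+(L+1)))‖ ≤ 1)
    (conv : ∀ p ∈ T, ∀ q ∈ T, p.1 < q.1 → q.2 / 2^(q.1-p.1) = p.2 →
      (p.1+1, q.2 / 2^(q.1-p.1-1)) ∈ T) (n : ℕ) :
    wt (exits (T.filter (nbig ε a1 L n))) ≤ 20 * 2^(L+1) * Real.exp (-(n/16)) := by
  set RQ : Finset (ℕ × ℕ) := T.biUnion (fun p => (Finset.range (p.1+1)).image
    (fun i => (i, p.2 / 2^(p.1-i)))) with hRQ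
  have mRQ : ∀ i m, (i, m) ∈ RQ ↔ ∃ p ∈ T, i ≤ p.1 ∧ p.2 / 2^(p.1-i) = m := by
    intro i m
    simp only [hRQ, Finset.mem_biUnion, Finset.mem_image, Finset.mem_range, Prod.mk.injEq]
    constructor
    · rintro ⟨p, hp, j, hj, rfl, h⟩; exact ⟨p, hp, by omega, h⟩
    · rintro ⟨p, hp, hj, h⟩; exact ⟨p, hp, i, by omega, rfl, h⟩
  set R1 : Finset (ℕ × ℕ) := T.biUnion (fun p => (Finset.range (p.1+1)).image
    (fun i => (i, p.2 / 2^(p.1-i+(L+1))))) with hR1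
  have mR1 : ∀ i m, (i, m) ∈ R1 ↔ ∃ p ∈ T, i ≤ p.1 ∧ p.2 / 2^(p.1-i+(L+1)) = m := by
    intro i m
    simp only [hR1, Finset.mem_biUnion, Finset.mem_image, Finset.mem_range, Prod.mk.injEq]
    constructor
    · rintro ⟨p, hp, j, hj, rfl, h⟩; exact ⟨p, hp, by omega, h⟩
    · rintro ⟨p, hp, hj, h⟩; exact ⟨p, hp, i, by omega, rfl, h⟩
  set X := R1.filter (fun p => ¬ Gbig ε a1 n p.1 p.2) with hX
  set D := RQ.filter (nbig ε a1 L n) with hD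
  -- step 1
  have s1 : exits (T.filter (nbig ε a1 L n)) ⊆ exits D := by
    rintro ⟨i, m⟩ hp
    obtain ⟨hp1, hp2⟩ := mem_exits.1 hp
    obtain ⟨r, hr, hrm⟩ := mem_ch.1 hp1
    simp only at hr hrm; subst hr
    rw [Finset.mem_filter] at hrm
    refine mem_exits.2 ⟨mem_ch.2 ⟨r, rfl, ?_⟩, ?_⟩
    · simp only [hD, Finset.mem_filter]
      exact ⟨(mRQ _ _).2 ⟨_, hrm.1, le_rfl, by simp⟩, hrm.2⟩
    · intro hD'
      simp only [hD, Finset.mem_filter] at hD'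
      obtain ⟨q, hq, hq1, hq2⟩ := (mRQ _ _).1 hD'.1
      have := conv _ hrm.1 q hq (by simp only; omega) (by
        simp only
        rw [← hq2, div_pow_succ]; congr 2; omega)
      simp only at this
      apply hp2
      rw [Finset.mem_filter]
      refine ⟨?_, hD'.2⟩
      convert this using 2
      rw [← hq2]; congr 2
  -- bounds on X
  have hXb : ∀ p ∈ X, ‖b1 p.1 p.2‖ ≤ 1 := by
    rintro ⟨i, m⟩ hp
    simp only [hX, Finset.mem_filter] at hp
    obtain ⟨q, hq, hq1, hq2⟩ := (mR1 _ _).1 hp.1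
    rw [← hq2]; exact hb q hq i hq1
  have hXa : ∀ p ∈ X, ‖a1 p.1 p.2‖ ≤ 1 := by
    rintro ⟨i, m⟩ hp
    simp only [hX, Finset.mem_filter] at hp
    obtain ⟨q, hq, hq1, hq2⟩ := (mR1 _ _).1 hp.1
    rw [← hq2]; exact ha q hq i hq1
  -- entries of X
  have hXe : entries X ⊆ {(0, n1)} := by
    rintro ⟨i, m⟩ hp
    obtain ⟨hp1, hp2⟩ := mem_entries.1 hp
    simp only [hX, Finset.mem_filter] at hp1
    obtain ⟨q, hq, hq1, hq2⟩ := (mR1 _ _).1 hp1.1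
    cases i with
    | zero =>
      rw [Finset.mem_singleton, ← hq2, ← hroot q hq]; simp
    | succ r =>
      exfalso; apply hp2
      refine mem_ch.2 ⟨r, rfl, ?_⟩
      simp only [hX, Finset.mem_filter]
      refine ⟨(mR1 _ _).2 ⟨q, hq, by omega, ?_⟩, fun h => hp1.2 (Or.inl h)⟩
      rw [← hq2, div_pow_succ]; congr 2; omega
  have hfl := flow (K := ℝ) X (fun r m => Ub (Gh ε a1 r m) (b1 r m))
  have hle : ∑ p ∈ X, (1/2:ℝ)^p.1 * ((Ub (Gh ε a1 (p.1+1) (2*p.2)) (b1 (p.1+1) (2*p.2)) +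
      Ub (Gh ε a1 (p.1+1) (2*p.2+1)) (b1 (p.1+1) (2*p.2+1)))/2) ≤
      ∑ p ∈ X, (1/2:ℝ)^p.1 * Ub (Gh ε a1 p.1 p.2) (b1 p.1 p.2) := by
    apply Finset.sum_le_sum
    intro p hp
    exact mul_le_mul_of_nonneg_left (bell_step h1 _ _ (hXb p hp) (hXa p hp)) (by positivity)
  have hent : ∑ p ∈ entries X, (1/2:ℝ)^p.1 * Ub (Gh ε a1 p.1 p.2) (b1 p.1 p.2) ≤ 10 := by
    have hterm : ∀ p ∈ entries X, (1/2:ℝ)^p.1 * Ub (Gh ε a1 p.1 p.2) (b1 p.1 p.2) ≤ 10 := by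
      intro p hp
      have := Finset.mem_singleton.1 (hXe hp)
      subst this
      simp [Gh, Ub]
      nlinarith [sq_nonneg ‖b1 0 n1‖]
    rcases Finset.subset_singleton_iff.1 hXe with h | h
    · rw [h]; simp
    · rw [h] at hterm ⊢
      rw [Finset.sum_singleton]; exact hterm _ (Finset.mem_singleton_self _)
  set B := (exits X).filter (fun p => Gbig ε a1 n p.1 p.2) with hB
  have hBw : wt B * (Real.exp (n/16) / 2) ≤ 10 := by
    calc wt B * (Real.exp (n/16) / 2) = ∑ p ∈ B, (1/2:ℝ)^p.1 * (Real.exp (n/16) / 2) := by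
          rw [wt, Finset.sum_mul]
      _ ≤ ∑ p ∈ B, (1/2:ℝ)^p.1 * Ub (Gh ε a1 p.1 p.2) (b1 p.1 p.2) := by
          apply Finset.sum_le_sum
          rintro ⟨i, m⟩ hp
          simp only [hB, Finset.mem_filter] at hp
          have hpe := mem_exits.1 hp.1
          have hc := h1.child hXb hXa _ hpe.1
          obtain ⟨r, hr, hrm⟩ := mem_ch.1 hpe.1
          simp only at hr hrm; subst hr
          simp only [hX, Finset.mem_filter] at hrm
          exact mul_le_mul_of_nonneg_left (Ub_big _ _ _ (Gbig_last hp.2 hrm.2) hc) (by positivity)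
      _ ≤ ∑ p ∈ exits X, (1/2:ℝ)^p.1 * Ub (Gh ε a1 p.1 p.2) (b1 p.1 p.2) := by
          apply Finset.sum_le_sum_of_subset_of_nonneg (Finset.filter_subset _ _)
          intro p hp _
          have hc := h1.child hXb hXa _ (mem_exits.1 hp).1
          have := Ub_nonneg (Gh ε a1 p.1 p.2) _ hc
          positivity
      _ ≤ 10 := by linarith
  -- entries of D
  have hDe : wt (entries D) ≤ 2^(L+1) * wt B := by
    have hmap : ∀ p ∈ entries D, (p.1+1, p.2/2^L) ∈ B := by
      rintro ⟨i, m⟩ hp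
      obtain ⟨hp1, hp2⟩ := mem_entries.1 hp
      simp only [hD, Finset.mem_filter] at hp1
      obtain ⟨q, hq, hq1, hq2⟩ := (mRQ _ _).1 hp1.1
      have hng : ¬ Gbig ε a1 n i (m/2^L/2) := by
        cases i with
        | zero => simp [Gbig]
        | succ r =>
          intro hg
          apply hp2
          refine mem_ch.2 ⟨r, rfl, ?_⟩
          simp only [hD, Finset.mem_filter]
          refine ⟨(mRQ _ _).2 ⟨q, hq, by omega, ?_⟩, ?_⟩
          · rw [← hq2, div_pow_succ]; congr 2; omega
          · unfold nbig
            rwa [Nat.div_div_eq_div_mul, mul_comm, ← Nat.div_div_eq_div_mul] at hg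
      simp only [hB, Finset.mem_filter]
      refine ⟨mem_exits.2 ⟨mem_ch.2 ⟨i, rfl, ?_⟩, ?_⟩, hp1.2⟩
      · simp only [hX, Finset.mem_filter]
        refine ⟨(mR1 _ _).2 ⟨q, hq, hq1, ?_⟩, hng⟩
        rw [← hq2, div_pow_succ, Nat.div_div_eq_div_mul, ← pow_add]
      · simp only [hX, Finset.mem_filter]
        exact fun h => h.2 hp1.2
    rw [wt, ← Finset.sum_fiberwise_of_maps_to hmap, wt, Finset.mul_sum]
    apply Finset.sum_le_sum
    rintro ⟨i, u⟩ hu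
    have : ∀ p ∈ (entries D).filter (fun p => (p.1+1, p.2/2^L) = (i, u)), (1/2:ℝ)^p.1 = 2 * (1/2)^i := by
      rintro ⟨r, m⟩ hp
      rw [Finset.mem_filter, Prod.mk.injEq] at hp
      rw [← hp.2.1, pow_succ]; simp only; ring
    rw [Finset.sum_congr rfl this, Finset.sum_const, nsmul_eq_mul]
    have hcard : ((entries D).filter (fun p => (p.1+1, p.2/2^L) = (i, u))).card ≤ 2^L := by
      have := Finset.card_le_card_of_injOn (s := (entries D).filter (fun p => (p.1+1, p.2/2^L) = (i, u)))
        (t := Finset.Ico (u*2^L) (u*2^L+2^L)) (fun p => p.2) ?_ ?_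
      · simpa using this
      · rintro ⟨r, m⟩ hp
        simp only [Finset.coe_filter, Set.mem_ofPred_eq, Prod.mk.injEq] at hp
        simp only [Finset.coe_Ico, Set.mem_Ico]
        have e := Nat.div_add_mod m (2^L)
        have e2 := Nat.mod_lt m (show 0 < 2^L by positivity)
        rw [hp.2.2, mul_comm] at e
        omega
      · rintro ⟨r, m⟩ hp ⟨r', m'⟩ hp' he
        simp only [Finset.coe_filter, Set.mem_ofPred_eq, Prod.mk.injEq] at hp hp' he ⊢
        omega
    have hcard' : ((((entries D).filter (fun p => (p.1+1, p.2/2^L) = (i, u))).card : ℕ) : ℝ) ≤ 2^L := by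
      exact_mod_cast hcard
    calc _ ≤ 2^L * (2 * (1/2:ℝ)^i) := mul_le_mul_of_nonneg_right hcard' (by positivity)
      _ = _ := by rw [pow_succ]; ring
  calc _ ≤ wt (exits D) := wt_mono s1
    _ = wt (entries D) := wt_exits D
    _ ≤ 2^(L+1) * wt B := hDe
    _ ≤ 2^(L+1) * (20 * Real.exp (-(n/16))) := by
      apply mul_le_mul_of_nonneg_left _ (by positivity)
      rw [Real.exp_neg, ← div_eq_mul_inv, le_div_iff₀ (Real.exp_pos _)]
      linarith
    _ = _ := by ring

open Classical in
/-- The single tree estimate. -/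
lemma tree_est (L : ℕ) (ε : ℕ → Prop) (b1 a1 b2 a2 b3 a3 : ℕ → ℕ → ℂ)
    (h1 : TR ε b1 a1) (h2 : TR ε b2 a2) (h3 : TR ε b3 a3) (T : Finset (ℕ × ℕ)) (n1 : ℕ)
    (hroot : ∀ p ∈ T, p.2 / 2^(p.1+(L+1)) = n1)
    (hb1 : ∀ p ∈ T, ∀ i ≤ p.1, ‖b1 i (p.2 / 2^(p.1-i+(L+1)))‖ ≤ 1)
    (ha1 : ∀ p ∈ T, ∀ i ≤ p.1, ‖a1 i (p.2 / 2^(p.1-i+(L+1)))‖ ≤ 1)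
    (conv : ∀ p ∈ T, ∀ q ∈ T, p.1 < q.1 → q.2 / 2^(q.1-p.1) = p.2 →
      (p.1+1, q.2 / 2^(q.1-p.1-1)) ∈ T)
    (hb2 : ∀ p ∈ T, ‖b2 p.1 p.2‖ ≤ 1) (ha2 : ∀ p ∈ T, ‖a2 p.1 p.2‖ ≤ 1)
    (hb3 : ∀ p ∈ T, ‖b3 p.1 p.2‖ ≤ 1) (ha3 : ∀ p ∈ T, ‖a3 p.1 p.2‖ ≤ 1) :
    ∃ N0 : ℕ, ∀ N ≥ N0,
    ‖∑ p ∈ T, (1/2:ℂ)^p.1 * (sgn (p.2/2^L) * (if ε p.1 then a1 p.1 (p.2/2^(L+1)) else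
      b1 p.1 (p.2/2^(L+1))) * (if ε p.1 then b2 p.1 p.2 * b3 p.1 p.2 else a2 p.1 p.2 * a3 p.1 p.2))‖
    ≤ 13 * ∑ n ∈ Finset.range N, min (wt (entries T)) (20 * 2^(L+1) * Real.exp (-(n/16))) := by
  obtain ⟨N0, hN0⟩ : ∃ N0 : ℕ, ∀ p ∈ T, ‖Gh ε a1 (p.1+1) (p.2/2^L)‖ < N0 ∧
      ‖Gh ε a1 p.1 (p.2/2^(L+1))‖ < N0 := by
    obtain ⟨N0, h⟩ := exists_nat_gt (∑ p ∈ T, (‖Gh ε a1 (p.1+1) (p.2/2^L)‖ +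
      ‖Gh ε a1 p.1 (p.2/2^(L+1))‖))
    refine ⟨N0, fun p hp => ?_⟩
    have := Finset.single_le_sum (f := fun p => (‖Gh ε a1 (p.1+1) (p.2/2^L)‖ +
      ‖Gh ε a1 p.1 (p.2/2^(L+1))‖)) (fun _ _ => by positivity) hp
    constructor <;> linarith [norm_nonneg (Gh ε a1 (p.1+1) (p.2/2^L)),
      norm_nonneg (Gh ε a1 p.1 (p.2/2^(L+1)))]
  refine ⟨N0 + 1, fun N hN => ?_⟩
  have hNN : (N0:ℝ) ≤ N := by exact_mod_cast (by omega : N0 ≤ N)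
  refine (tree_abel L ε b1 a1 b2 a2 b3 a3 h2 h3 T (fun p hp => by simpa using hb1 p hp p.1 le_rfl)
    hb2 ha2 hb3 ha3 N (fun p hp => ⟨(hN0 p hp).1.trans_le hNN, (hN0 p hp).2.trans_le hNN⟩)
    (by omega)).trans ?_
  apply mul_le_mul_of_nonneg_left _ (by norm_num)
  apply Finset.sum_le_sum
  intro n _
  apply le_min _ (tree_exp L ε b1 a1 h1 T n1 hroot hb1 ha1 conv n)
  rw [← wt_exits]
  apply wt_mono
  rintro ⟨i, m⟩ hp
  obtain ⟨hp1, hp2⟩ := mem_exits.1 hp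
  obtain ⟨r, hr, hrm⟩ := mem_ch.1 hp1
  simp only at hr hrm; subst hr
  rw [Finset.mem_filter] at hrm
  refine mem_exits.2 ⟨mem_ch.2 ⟨r, rfl, hrm.1⟩, fun h => hp2 ?_⟩
  rw [Finset.mem_filter]
  exact ⟨h, nbig_child hrm.2⟩




/-- nodes: scale, position, frequency -/
abbrev Nd := ℤ × ℕ × ℕ

def nle (p q : Nd) : Prop := ∃ r : ℕ, q.1 = p.1 + r ∧ p.2.1/2^r = q.2.1 ∧ q.2.2/2^r = p.2.2

lemma nle_refl (p : Nd) : nle p p := ⟨0, by simp⟩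

lemma nle_trans {p q s : Nd} (h : nle p q) (h' : nle q s) : nle p s := by
  obtain ⟨r, h1, h2, h3⟩ := h
  obtain ⟨r', h1', h2', h3'⟩ := h'
  refine ⟨r + r', by push_cast; omega, ?_, ?_⟩
  · rw [pow_add, ← Nat.div_div_eq_div_mul, h2, h2']
  · rw [add_comm, pow_add, ← Nat.div_div_eq_div_mul, h3', h3]

lemma nle_antisymm {p q : Nd} (h : nle p q) (h' : nle q p) : p = q := by
  obtain ⟨r, h1, h2, h3⟩ := h
  obtain ⟨r', h1', h2', h3'⟩ := h'
  have : r = 0 := by omega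
  subst this
  simp at h1 h2 h3
  ext
  · exact h1.symm
  · exact h2
  · exact h3.symm

/-- the associated `P` node -/
def PP (L : ℕ) (p : Nd) : Nd := (p.1 + L, p.2.1/2^L, p.2.2)

lemma PP_mono (L : ℕ) {p q : Nd} (h : nle p q) : nle (PP L p) (PP L q) := by
  obtain ⟨r, h1, h2, h3⟩ := h
  refine ⟨r, by simp only [PP]; omega, ?_, h3⟩
  simp only [PP]
  rw [← h2, Nat.div_div_eq_div_mul, mul_comm, ← Nat.div_div_eq_div_mul]

/-- two nodes above a common node, both with frequency controlled by `T`, are comparable -/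
lemma nle_total_of {L : ℕ} {Q M M' T : Nd} (h : nle Q M) (h' : nle Q M')
    (ht : nle (PP L M) T) (ht' : nle (PP L M') T) : nle M M' ∨ nle M' M := by
  wlog hle : M.1 ≤ M'.1 generalizing M M'
  · exact (this h' h ht' ht (by omega)).symm
  left
  obtain ⟨r, h1, h2, h3⟩ := h
  obtain ⟨r', h1', h2', h3'⟩ := h'
  obtain ⟨s, k1, k2, k3⟩ := ht
  obtain ⟨s', k1', k2', k3'⟩ := ht'
  simp only [PP] at *
  obtain ⟨d, hd⟩ : ∃ d : ℕ, M'.1 = M.1 + d := ⟨(M'.1 - M.1).toNat, by omega⟩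
  have e1 : r' = r + d := by omega
  have e2 : s = s' + d := by omega
  subst e1 e2
  refine ⟨d, hd, ?_, ?_⟩
  · rw [← h2, Nat.div_div_eq_div_mul, ← pow_add, h2']
  · rw [← k3', ← k3, Nat.div_div_eq_div_mul, ← pow_add]

lemma nle_total_of' {Q M M' T : Nd} (h : nle Q M) (h' : nle Q M')
    (ht : nle M T) (ht' : nle M' T) : nle M M' ∨ nle M' M := by
  apply nle_total_of (L := 0) (T := T) h h' <;> simpa [PP]

open Classical in
def maxl (S : Finset Nd) : Finset Nd := S.filter (fun p => ∀ q ∈ S, nle p q → q = p)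

lemma mem_maxl {S : Finset Nd} {p : Nd} : p ∈ maxl S ↔ p ∈ S ∧ ∀ q ∈ S, nle p q → q = p := by
  classical
  simp [maxl]

lemma exists_maxl (S : Finset Nd) {p : Nd} (hp : p ∈ S) : ∃ q ∈ maxl S, nle p q := by
  classical
  obtain ⟨q, hq, hmax⟩ := Finset.exists_max_image (S.filter (fun q => nle p q)) (fun q => q.1)
    ⟨p, by simp [hp, nle_refl]⟩
  rw [Finset.mem_filter] at hq
  refine ⟨q, mem_maxl.2 ⟨hq.1, fun s hs hqs => ?_⟩, hq.2⟩
  have := hmax s (by rw [Finset.mem_filter]; exact ⟨hs, nle_trans hq.2 hqs⟩)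
  obtain ⟨r, h1, h2, h3⟩ := hqs
  have : r = 0 := by omega
  subst this
  simp at h1 h2 h3
  ext
  · exact h1
  · exact h2.symm
  · exact h3

/-- recursion satisfied by the Walsh coefficients -/
def WRec (A : ℤ → ℕ → ℕ → ℂ) : Prop := ∀ k n l,
  A (k-1) (2*n) l = A k n (2*l) + A k n (2*l+1) ∧ A (k-1) (2*n+1) l = A k n (2*l) - A k n (2*l+1)

def own (A : ℤ → ℕ → ℕ → ℂ) (k : ℤ) (l : ℕ) (r m : ℕ) : ℂ := A (k-r) m (2*l/2^r)
def oth (A : ℤ → ℕ → ℕ → ℂ) (k : ℤ) (l : ℕ) (r m : ℕ) : ℂ :=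
  A (k-r) m (if (2*l/2^r) % 2 = 0 then 2*l/2^r+1 else 2*l/2^r-1)

lemma two_mul_div_pow (l r : ℕ) : 2*l/2^r/2 = l/2^r := by
  rw [Nat.div_div_eq_div_mul, mul_comm (2^r), ← Nat.div_div_eq_div_mul]; congr 1; omega

lemma own_TR {A} (h : WRec A) (k : ℤ) (l : ℕ) :
    TR (fun r => (2*l/2^r) % 2 = 0) (own A k l) (oth A k l) := by
  intro r m
  have e0 : 2*l/2^(r+1) = 2*l/2^r/2 := (div_pow_succ _ _).symm
  have ek : k - ((r+1:ℕ):ℤ) = (k - r) - 1 := by push_cast; ring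
  simp only [own, oth, ek, e0]
  set t := 2*l/2^r
  obtain ⟨h1, h2⟩ := h (k-r) m (t/2)
  rw [h1, h2]
  by_cases ht : t % 2 = 0
  · have e1 : 2*(t/2) = t := by omega
    simp [ht, e1]
  · have e1 : 2*(t/2) = t - 1 := by omega
    have e2 : 2*(t/2) + 1 = t := by omega
    rw [e2, e1]
    simp [ht, add_comm]

lemma own_oth_cases (A : ℤ → ℕ → ℕ → ℂ) (k : ℤ) (l r m : ℕ) (B : ℝ)
    (hd : ‖A (k-r) m (2*(l/2^r))‖ ≤ B) (hu : ‖A (k-r) m (2*(l/2^r)+1)‖ ≤ B) :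
    ‖own A k l r m‖ ≤ B ∧ ‖oth A k l r m‖ ≤ B := by
  rw [← two_mul_div_pow] at hd hu
  unfold own oth
  set t := 2*l/2^r
  by_cases ht : t % 2 = 0
  · have e1 : 2*(t/2) = t := by omega
    rw [e1] at hd hu
    simp [ht, hd, hu]
  · have e1 : 2*(t/2) = t - 1 := by omega
    have e2 : 2*(t/2) + 1 = t := by omega
    rw [e1] at hd
    rw [e2] at hu
    simp [ht, hd, hu]

/-- value of a node -/
def nval (L : ℕ) (A1 A2 A3 : ℤ → ℕ → ℕ → ℂ) (Q : Nd) : ℂ :=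
  (2:ℂ)^Q.1 * (sgn (Q.2.1/2^L) * A1 (Q.1 + (L+1)) (Q.2.1/2^(L+1)) (2*Q.2.2+1) *
    (A2 Q.1 Q.2.1 (2*Q.2.2) * A3 Q.1 Q.2.1 (2*Q.2.2)))

open Classical in
theorem core (L : ℕ) (A1 A2 A3 : ℤ → ℕ → ℕ → ℂ) (r1 : WRec A1) (r2 : WRec A2) (r3 : WRec A3)
    (QQ TT : Finset Nd)
    (conv : ∀ p ∈ QQ, ∀ q ∈ QQ, ∀ s, nle p s → nle s q → s ∈ QQ)
    (hT : ∀ p ∈ QQ, ∃ T ∈ TT, nle (PP (L+1) p) T)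
    (h1 : ∀ p ∈ QQ, ∀ T ∈ TT, ∀ s, nle (PP (L+1) p) s → nle s T →
      ‖A1 s.1 s.2.1 (2*s.2.2)‖ ≤ 1 ∧ ‖A1 s.1 s.2.1 (2*s.2.2+1)‖ ≤ 1)
    (h2 : ∀ p ∈ QQ, ‖A2 p.1 p.2.1 (2*p.2.2)‖ ≤ 1 ∧ ‖A2 p.1 p.2.1 (2*p.2.2+1)‖ ≤ 1)
    (h3 : ∀ p ∈ QQ, ‖A3 p.1 p.2.1 (2*p.2.2)‖ ≤ 1 ∧ ‖A3 p.1 p.2.1 (2*p.2.2+1)‖ ≤ 1) :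
    ∃ N : ℕ, ‖∑ Q ∈ QQ, nval L A1 A2 A3 Q‖ ≤
      13 * ∑ n ∈ Finset.range N, min (∑ M ∈ maxl QQ, (2:ℝ)^M.1)
        (20 * Real.exp (-(n/16)) * ∑ T ∈ TT, (2:ℝ)^T.1) := by
  -- assignment of maximal elements
  have hex : ∀ Q : Nd, ∃ M : Nd, Q ∈ QQ → (M ∈ maxl QQ ∧ nle Q M ∧
      ∀ M' ∈ maxl QQ, nle Q M' → Encodable.encode M ≤ Encodable.encode M') := by
    intro Q
    by_cases hQ : Q ∈ QQ
    · obtain ⟨M0, hM0, hM0'⟩ := exists_maxl QQ hQ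
      obtain ⟨M, hM, hmin⟩ := Finset.exists_min_image ((maxl QQ).filter (fun q => nle Q q))
        (fun q => Encodable.encode q) ⟨M0, by rw [Finset.mem_filter]; exact ⟨hM0, hM0'⟩⟩
      rw [Finset.mem_filter] at hM
      exact ⟨M, fun _ => ⟨hM.1, hM.2, fun M' h h' => hmin M' (by rw [Finset.mem_filter]; exact ⟨h, h'⟩)⟩⟩
    · exact ⟨Q, fun h => absurd h hQ⟩
  choose am ham using hex
  have am_eq : ∀ Q ∈ QQ, ∀ Q' ∈ QQ, nle Q Q' → nle Q' (am Q) → am Q' = am Q := by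
    intro Q hQ Q' hQ' h h'
    obtain ⟨a1, a2, a3⟩ := ham Q hQ
    obtain ⟨b1, b2, b3⟩ := ham Q' hQ'
    exact Encodable.encode_injective (le_antisymm (b3 _ a1 h') (a3 _ b1 (nle_trans h b2)))
  have hext : ∀ M : Nd, ∃ T : Nd, M ∈ QQ → (T ∈ TT ∧ nle (PP (L+1) M) T) := by
    intro M
    by_cases hM : M ∈ QQ
    · obtain ⟨T, hT1, hT2⟩ := hT M hM
      exact ⟨T, fun _ => ⟨hT1, hT2⟩⟩
    · exact ⟨M, fun h => absurd h hM⟩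
  choose tau htau using hext
  have hamQ : ∀ Q ∈ QQ, am Q ∈ QQ := fun Q hQ => (mem_maxl.1 (ham Q hQ).1).1
  have htt : ∀ Q ∈ QQ, tau (am Q) ∈ TT := fun Q hQ => (htau _ (hamQ Q hQ)).1
  -- per-tree estimate
  have per : ∀ T : Nd, ∃ N0 : ℕ, T ∈ TT → ∀ N ≥ N0,
      ‖∑ Q ∈ QQ.filter (fun Q => tau (am Q) = T), nval L A1 A2 A3 Q‖ ≤
      13 * ∑ n ∈ Finset.range N, min (∑ M ∈ (maxl QQ).filter (fun M => tau M = T), (2:ℝ)^M.1)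
        (20 * Real.exp (-(n/16)) * (2:ℝ)^T.1) := by
    intro T
    by_cases hTT : T ∈ TT
    swap
    · exact ⟨0, fun h => absurd h hTT⟩
    obtain ⟨k1, n1, l1⟩ := T
    set T : Nd := (k1, n1, l1) with hTdef
    set S := QQ.filter (fun Q => tau (am Q) = T) with hS
    have memS : ∀ Q, Q ∈ S ↔ Q ∈ QQ ∧ tau (am Q) = T := fun Q => by rw [hS, Finset.mem_filter]
    have leT : ∀ Q ∈ S, nle (PP (L+1) Q) T := by
      intro Q hQ
      obtain ⟨hQ1, hQ2⟩ := (memS Q).1 hQ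
      rw [← hQ2]
      exact nle_trans (PP_mono _ (ham Q hQ1).2.1) (htau _ (hamQ Q hQ1)).2
    set nd : ℕ × ℕ → Nd := fun p => (k1 - (L+1) - p.1, p.2, l1/2^p.1) with hnd
    set cd : Nd → ℕ × ℕ := fun Q => ((k1 - (L+1) - Q.1).toNat, Q.2.1) with hcd
    have nd_cd : ∀ Q, nle (PP (L+1) Q) T → nd (cd Q) = Q := by
      rintro ⟨j, m, l⟩ ⟨r, e1, e2, e3⟩
      simp only [PP, hTdef] at e1 e2 e3
      have : (k1 - (L+1) - j).toNat = r := by push_cast at e1; omega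
      simp only [hnd, hcd, this, e3, Prod.mk.injEq, and_true]
      push_cast at e1; omega
    have cd_nd : ∀ p, cd (nd p) = p := by
      rintro ⟨r, m⟩
      simp [hnd, hcd]
    set TS := S.image cd with hTS
    have memTS : ∀ p, p ∈ TS ↔ nd p ∈ S := by
      intro p
      rw [hTS, Finset.mem_image]
      constructor
      · rintro ⟨Q, hQ, rfl⟩; rw [nd_cd Q (leT Q hQ)]; exact hQ
      · intro h; exact ⟨nd p, h, cd_nd p⟩
    have rootTS : ∀ p ∈ TS, p.2/2^(p.1+(L+1)) = n1 := by
      intro p hp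
      obtain ⟨r, e1, e2, e3⟩ := leT _ ((memTS p).1 hp)
      simp only [PP, hTdef, hnd] at e1 e2 e3
      have : r = p.1 := by push_cast at e1; omega
      rw [this, Nat.div_div_eq_div_mul, ← pow_add, add_comm] at e2
      exact e2
    -- nd order
    have nd_le : ∀ r m d, nle (nd (r+d, m)) (nd (r, m/2^d)) := by
      intro r m d
      refine ⟨d, ?_, rfl, ?_⟩
      · simp only [hnd]; push_cast; ring
      · simp only [hnd]; rw [Nat.div_div_eq_div_mul, ← pow_add]
    have convTS : ∀ p ∈ TS, ∀ q ∈ TS, p.1 < q.1 → q.2 / 2^(q.1-p.1) = p.2 →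
      (p.1+1, q.2 / 2^(q.1-p.1-1)) ∈ TS := by
      rintro ⟨r, m⟩ hp ⟨r', m'⟩ hq hlt he
      simp only at hlt he ⊢
      obtain ⟨d, rfl⟩ : ∃ d, r' = r + 1 + d := ⟨r' - r - 1, by omega⟩
      have e1 : r + 1 + d - r - 1 = d := by omega
      have e2 : r + 1 + d - r = d + 1 := by omega
      rw [e1]; rw [e2] at he
      have hp' := (memS _).1 ((memTS _).1 hp)
      have hq' := (memS _).1 ((memTS _).1 hq)
      have l1' := nd_le (r+1) m' d
      have l2' : nle (nd (r+1, m'/2^d)) (nd (r, m)) := by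
        have := nd_le r (m'/2^d) 1
        rwa [pow_one, div_pow_succ, he] at this
      have hc : nd (r+1, m'/2^d) ∈ QQ := conv _ hq'.1 _ hp'.1 _ l1' l2'
      rw [memTS, memS]
      refine ⟨hc, ?_⟩
      obtain ⟨p1, p2, p3⟩ := ham _ hp'.1
      obtain ⟨q1, q2, q3⟩ := ham _ hq'.1
      have hMM : am (nd (r, m)) = am (nd (r+1+d, m')) := by
        have t1 := (htau _ (hamQ _ hp'.1)).2
        have t2 := (htau _ (hamQ _ hq'.1)).2
        rw [hp'.2] at t1
        rw [hq'.2] at t2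
        rcases nle_total_of (nle_trans (nle_trans l1' l2') p2) q2 t1 t2 with h | h
        · exact ((mem_maxl.1 p1).2 _ (mem_maxl.1 q1).1 h).symm
        · exact ((mem_maxl.1 q1).2 _ (mem_maxl.1 p1).1 h)
      rw [am_eq _ hq'.1 _ hc l1' (nle_trans l2' (hMM ▸ p2)), hq'.2]
    have entTS : ∀ p ∈ entries TS, nd p ∈ maxl QQ ∧ tau (nd p) = T := by
      rintro ⟨r, m⟩ hp
      obtain ⟨hp1, hp2⟩ := mem_entries.1 hp
      have hp' := (memS _).1 ((memTS _).1 hp1)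
      obtain ⟨p1, p2, p3⟩ := ham _ hp'.1
      suffices h : am (nd (r, m)) = nd (r, m) by
        rw [h] at p1; rw [h] at hp'; exact ⟨p1, hp'.2⟩
      by_contra hne
      have t1 := (htau _ (hamQ _ hp'.1)).2
      rw [hp'.2] at t1
      set M := am (nd (r, m)) with hM
      have hMc := nd_cd M t1
      obtain ⟨d, g1, g2, g3⟩ := p2
      have hd : d ≠ 0 := by
        rintro rfl
        apply hne
        simp at g1 g2 g3
        ext
        · exact g1
        · exact g2.symm
        · exact g3
      obtain ⟨s, f1, f2, f3⟩ := t1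
      simp only [PP, hnd, hTdef] at f1 f2 f3 g1 g2 g3
      have hr : r = s + d := by push_cast at f1; omega
      obtain ⟨d', rfl⟩ : ∃ d', d = d' + 1 := ⟨d - 1, by omega⟩
      have hpar1 := nd_le (s+d') m 1
      rw [pow_one, add_assoc, ← hr] at hpar1
      have hpar2 : nle (nd (s+d', m/2)) M := by
        have := nd_le s (m/2) d'
        convert this using 1
        simp only [hnd]
        ext
        · simp only; push_cast at f1; omega
        · simp only; rw [← g2, pow_succ, mul_comm, ← Nat.div_div_eq_div_mul]
        · simp only; exact f3.symm
      have hcQ := conv _ hp'.1 _ (hamQ _ hp'.1) _ hpar1 hpar2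
      apply hp2
      refine mem_ch.2 ⟨s + d', by simp only; omega, ?_⟩
      rw [memTS, memS]
      exact ⟨hcQ, by rw [am_eq _ hp'.1 _ hcQ hpar1 hpar2]; exact hp'.2⟩
    -- bounds
    have bd1 : ∀ p ∈ TS, ∀ i ≤ p.1, ‖own A1 k1 l1 i (p.2 / 2^(p.1-i+(L+1)))‖ ≤ 1 ∧
        ‖oth A1 k1 l1 i (p.2 / 2^(p.1-i+(L+1)))‖ ≤ 1 := by
      rintro ⟨r, m⟩ hp i hi
      simp only at hi ⊢
      have hp' := (memS _).1 ((memTS _).1 hp)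
      obtain ⟨d, rfl⟩ : ∃ d, r = i + d := ⟨r - i, by omega⟩
      have hr := rootTS _ hp
      have := h1 _ hp'.1 T hTT (k1 - i, m/2^(i+d-i+(L+1)), l1/2^i) ⟨d, ?_, ?_, ?_⟩ ⟨i, ?_, ?_, ?_⟩
      · exact own_oth_cases _ _ _ _ _ _ this.1 this.2
      · simp only [PP, hnd]; push_cast; ring
      · simp only [PP, hnd]; rw [Nat.div_div_eq_div_mul, ← pow_add]; congr 2; omega
      · simp only [PP, hnd]; rw [Nat.div_div_eq_div_mul, ← pow_add]
      · simp [hTdef]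
      · simp only [hTdef]; rw [Nat.div_div_eq_div_mul, ← pow_add, ← hr]; simp only; congr 2; omega
      · simp [hTdef]
    have bd2 : ∀ p ∈ TS, ‖own A2 (k1-(L+1)) l1 p.1 p.2‖ ≤ 1 ∧ ‖oth A2 (k1-(L+1)) l1 p.1 p.2‖ ≤ 1 := by
      intro p hp
      have hp' := h2 _ ((memS _).1 ((memTS _).1 hp)).1
      exact own_oth_cases _ _ _ _ _ _ hp'.1 hp'.2
    have bd3 : ∀ p ∈ TS, ‖own A3 (k1-(L+1)) l1 p.1 p.2‖ ≤ 1 ∧ ‖oth A3 (k1-(L+1)) l1 p.1 p.2‖ ≤ 1 := by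
      intro p hp
      have hp' := h3 _ ((memS _).1 ((memTS _).1 hp)).1
      exact own_oth_cases _ _ _ _ _ _ hp'.1 hp'.2
    obtain ⟨N0, hN0⟩ := tree_est L (fun r => (2*l1/2^r) % 2 = 0) (own A1 k1 l1) (oth A1 k1 l1)
      (own A2 (k1-(L+1)) l1) (oth A2 (k1-(L+1)) l1) (own A3 (k1-(L+1)) l1) (oth A3 (k1-(L+1)) l1)
      (own_TR r1 _ _) (own_TR r2 _ _) (own_TR r3 _ _) TS n1 rootTS
      (fun p hp i hi => (bd1 p hp i hi).1) (fun p hp i hi => (bd1 p hp i hi).2) convTS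
      (fun p hp => (bd2 p hp).1) (fun p hp => (bd2 p hp).2)
      (fun p hp => (bd3 p hp).1) (fun p hp => (bd3 p hp).2)
    refine ⟨N0, fun _ N hN => ?_⟩
    have key := hN0 N hN
    have w0 : (0:ℝ) < (2:ℝ)^(k1-(L+1)) := by positivity
    have wr : ∀ r : ℕ, (2:ℝ)^(k1-(L+1)-(r:ℤ)) = (2:ℝ)^(k1-(L+1)) * (1/2)^r := by
      intro r
      rw [zpow_sub₀ (by norm_num) _ (r:ℤ), zpow_natCast, one_div, inv_pow]; rfl
    have hsum : ∑ Q ∈ S, nval L A1 A2 A3 Q = (2:ℂ)^(k1-(L+1)) * ∑ p ∈ TS, (1/2:ℂ)^p.1 *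
        (sgn (p.2/2^L) * (if (2*l1/2^p.1) % 2 = 0 then oth A1 k1 l1 p.1 (p.2/2^(L+1)) else
        own A1 k1 l1 p.1 (p.2/2^(L+1))) * (if (2*l1/2^p.1) % 2 = 0 then
        own A2 (k1-(L+1)) l1 p.1 p.2 * own A3 (k1-(L+1)) l1 p.1 p.2 else
        oth A2 (k1-(L+1)) l1 p.1 p.2 * oth A3 (k1-(L+1)) l1 p.1 p.2)) := by
      have hcdinj : Set.InjOn cd S := by
        intro Q hQ Q' hQ' h
        rw [← nd_cd Q (leT Q hQ), h, nd_cd Q' (leT Q' hQ')]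
      rw [hTS, Finset.sum_image hcdinj, Finset.mul_sum]
      apply Finset.sum_congr rfl
      intro Q hQ
      conv_lhs => rw [← nd_cd Q (leT Q hQ)]
      generalize cd Q = p
      obtain ⟨r, m⟩ := p
      simp only [hnd, nval, own, oth]
      have e1 : k1 - (L+1) - (r:ℤ) + (L+1) = k1 - r := by ring
      have e2 : (2:ℂ)^(k1-(L+1)-(r:ℤ)) = (2:ℂ)^(k1-(L+1)) * (1/2)^r := by
        rw [zpow_sub₀ (by norm_num) _ (r:ℤ), zpow_natCast, one_div, inv_pow]; rfl
      rw [e1, e2, ← two_mul_div_pow l1 r]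
      set t := 2*l1/2^r
      by_cases ht : t % 2 = 0
      · have e3 : 2*(t/2) = t := by omega
        rw [e3]; simp only [ht, if_true]; ring
      · have e3 : 2*(t/2) = t - 1 := by omega
        have e4 : 2*(t/2) + 1 = t := by omega
        rw [e4, e3]; simp only [ht, if_false]; ring
    have hsum' : ∑ Q ∈ S, nval L A1 A2 A3 Q = (2:ℂ)^(k1-(L+1)) * ∑ p ∈ TS, (1/2:ℂ)^p.1 *
        (sgn (p.2/2^L) * (@ite _ ((2*l1/2^p.1) % 2 = 0) (propDecidable _)
        (oth A1 k1 l1 p.1 (p.2/2^(L+1))) (own A1 k1 l1 p.1 (p.2/2^(L+1)))) *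
        (@ite _ ((2*l1/2^p.1) % 2 = 0) (propDecidable _)
        (own A2 (k1-(L+1)) l1 p.1 p.2 * own A3 (k1-(L+1)) l1 p.1 p.2)
        (oth A2 (k1-(L+1)) l1 p.1 p.2 * oth A3 (k1-(L+1)) l1 p.1 p.2))) := by
      rw [hsum]; congr!
    rw [hsum', norm_mul]
    have hn2 : ‖(2:ℂ)^(k1-(L+1))‖ = (2:ℝ)^(k1-(L+1)) := by rw [norm_zpow]; simp
    rw [hn2]
    refine (mul_le_mul_of_nonneg_left key w0.le).trans ?_
    rw [mul_left_comm, Finset.mul_sum]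
    apply mul_le_mul_of_nonneg_left _ (by norm_num)
    apply Finset.sum_le_sum
    intro n _
    rw [mul_min_of_nonneg _ _ w0.le]
    apply min_le_min
    · rw [wt, Finset.mul_sum]
      calc ∑ p ∈ entries TS, (2:ℝ)^(k1-(L+1)) * (1/2)^p.1 = ∑ p ∈ entries TS, (2:ℝ)^(nd p).1 := by
            apply Finset.sum_congr rfl
            intro p _
            rw [← wr]
        _ = ∑ M ∈ (entries TS).image nd, (2:ℝ)^M.1 := by
            rw [Finset.sum_image]
            intro p _ q _ h
            rw [← cd_nd p, ← cd_nd q, h]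
        _ ≤ _ := by
            apply Finset.sum_le_sum_of_subset_of_nonneg
            · intro M hM
              obtain ⟨p, hp, rfl⟩ := Finset.mem_image.1 hM
              rw [Finset.mem_filter]
              exact entTS p hp
            · intros; positivity
    · apply le_of_eq
      have : (2:ℝ)^T.1 = (2:ℝ)^(k1-(L+1)) * 2^(L+1) := by
        rw [← zpow_natCast, ← zpow_add₀ (by norm_num)]; congr 1; simp [hTdef]
      rw [this]; ring
  choose N0 hN0 using per
  obtain ⟨N, hN⟩ : ∃ N, ∀ T ∈ TT, N0 T ≤ N := ⟨TT.sup N0, fun T hT => Finset.le_sup hT⟩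
  refine ⟨N, ?_⟩
  rw [← Finset.sum_fiberwise_of_maps_to (s := QQ) (t := TT) (g := fun Q => tau (am Q)) htt]
  calc _ ≤ ∑ T ∈ TT, ‖∑ Q ∈ QQ.filter (fun Q => tau (am Q) = T), nval L A1 A2 A3 Q‖ := norm_sum_le _ _
    _ ≤ ∑ T ∈ TT, 13 * ∑ n ∈ Finset.range N, min (∑ M ∈ (maxl QQ).filter (fun M => tau M = T), (2:ℝ)^M.1)
        (20 * Real.exp (-(n/16)) * (2:ℝ)^T.1) :=
        Finset.sum_le_sum fun T hT => hN0 T hT N (hN T hT)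
    _ ≤ _ := by
        rw [← Finset.mul_sum, Finset.sum_comm]
        apply mul_le_mul_of_nonneg_left _ (by norm_num)
        apply Finset.sum_le_sum
        intro n _
        apply le_min
        · calc _ ≤ ∑ T ∈ TT, ∑ M ∈ (maxl QQ).filter (fun M => tau M = T), (2:ℝ)^M.1 :=
                Finset.sum_le_sum fun _ _ => min_le_left _ _
            _ = _ := Finset.sum_fiberwise_of_maps_to
                (fun M hM => (htau M (mem_maxl.1 hM).1).1) _
        · rw [Finset.mul_sum]
          exact Finset.sum_le_sum fun _ _ => min_le_right _ _




lemma mem_dyadicI {k : ℤ} {n : ℕ} {x : ℝ} : x ∈ dyadicI k n ↔ 0 ≤ x ∧ ⌊x/(2:ℝ)^k⌋₊ = n := by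
  have h2 : (0:ℝ) < (2:ℝ)^k := by positivity
  unfold dyadicI
  rw [Set.mem_Ico, ← le_div_iff₀' h2, ← div_lt_iff₀' h2]
  constructor
  · rintro ⟨h, h'⟩
    have hx : 0 ≤ x := by
      have : 0 ≤ x / (2:ℝ)^k := le_trans (by positivity) h
      rwa [le_div_iff₀ h2, zero_mul] at this
    exact ⟨hx, (Nat.floor_eq_iff (by positivity)).2 ⟨h, h'⟩⟩
  · rintro ⟨hx, h⟩
    exact (Nat.floor_eq_iff (by positivity)).1 h

lemma dyadic_nest {j : ℤ} {r m : ℕ} {x : ℝ} (h : x ∈ dyadicI j m) : x ∈ dyadicI (j+r) (m/2^r) := by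
  rw [mem_dyadicI] at h ⊢
  refine ⟨h.1, ?_⟩
  rw [← h.2, zpow_add₀ (by norm_num), ← div_div, zpow_natCast]
  have := Nat.floor_div_natCast (x/(2:ℝ)^j) (2^r)
  push_cast at this
  exact this

lemma dyadic_unique {j : ℤ} {m m' : ℕ} {x : ℝ} (h : x ∈ dyadicI j m) (h' : x ∈ dyadicI j m') : m = m' := by
  rw [mem_dyadicI] at h h'
  rw [← h.2, ← h'.2]

lemma dyadic_sub {j : ℤ} {r m : ℕ} : dyadicI j m ⊆ dyadicI (j+r) (m/2^r) := fun _ h => dyadic_nest h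

lemma dyadic_measurable (j : ℤ) (m : ℕ) : MeasurableSet (dyadicI j m) := measurableSet_Ico

lemma dyadic_vol (j : ℤ) (m : ℕ) : volume (dyadicI j m) = ENNReal.ofReal ((2:ℝ)^j) := by
  unfold dyadicI
  rw [Real.volume_Ico]; congr 1; ring

/-- Kraft inequality -/
lemma kraft (F : Finset Nd) (T : Nd) (hT : ∀ p ∈ F, nle p T)
    (hF : ∀ p ∈ F, ∀ q ∈ F, nle p q → p = q) : ∑ p ∈ F, (2:ℝ)^p.1 ≤ (2:ℝ)^T.1 := by
  have hdis : Set.PairwiseDisjoint (F : Set Nd) (fun p : Nd => dyadicI p.1 p.2.1) := by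
    intro p hp q hq hne
    by_contra hnd
    obtain ⟨x, hx1, hx2⟩ := Set.not_disjoint_iff.1 hnd
    apply hne
    clear hnd hne
    wlog hle : p.1 ≤ q.1 generalizing p q
    · exact (this hq hp hx2 hx1 (by omega)).symm
    obtain ⟨d, hd⟩ : ∃ d : ℕ, q.1 = p.1 + d := ⟨(q.1 - p.1).toNat, by omega⟩
    apply hF p hp q hq
    obtain ⟨s, e1, e2, e3⟩ := hT p hp
    obtain ⟨s', e1', e2', e3'⟩ := hT q hq
    have hs : s = s' + d := by omega
    refine ⟨d, hd, ?_, ?_⟩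
    · have := dyadic_nest (r := d) hx1
      rw [← hd] at this
      exact dyadic_unique this hx2
    · rw [← e3', ← e3, Nat.div_div_eq_div_mul, ← pow_add, hs]
  have h1 : volume (⋃ p ∈ F, dyadicI p.1 p.2.1) = ∑ p ∈ F, volume (dyadicI p.1 p.2.1) :=
    measure_biUnion_finset hdis (fun p _ => dyadic_measurable _ _)
  have h2 : volume (⋃ p ∈ F, dyadicI p.1 p.2.1) ≤ volume (dyadicI T.1 T.2.1) := by
    apply measure_mono
    apply Set.iUnion₂_subset
    intro p hp
    obtain ⟨s, e1, e2, e3⟩ := hT p hp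
    rw [e1, ← e2]
    exact dyadic_sub
  rw [h1] at h2
  simp only [dyadic_vol] at h2
  rw [← ENNReal.ofReal_sum_of_nonneg (fun _ _ => by positivity)] at h2
  exact (ENNReal.ofReal_le_ofReal_iff (by positivity)).1 h2

/-- Bessel hypothesis -/
def Bess (A : ℤ → ℕ → ℕ → ℂ) (e : ℝ) : Prop := ∀ F : Finset Nd,
  (∀ p ∈ F, ∀ q ∈ F, nle p q → p = q) → ∑ p ∈ F, (2:ℝ)^p.1 * ‖A p.1 p.2.1 p.2.2‖^2 ≤ e

/-- max coefficient on a bitile -/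
def mu (A : ℤ → ℕ → ℕ → ℂ) (p : Nd) : ℝ≥0 :=
  max ‖A p.1 p.2.1 (2*p.2.2)‖₊ ‖A p.1 p.2.1 (2*p.2.2+1)‖₊

lemma mu_d (A : ℤ → ℕ → ℕ → ℂ) (p : Nd) : ‖A p.1 p.2.1 (2*p.2.2)‖ ≤ mu A p := by
  have : ‖A p.1 p.2.1 (2*p.2.2)‖₊ ≤ mu A p := le_max_left _ _
  exact_mod_cast this
lemma mu_u (A : ℤ → ℕ → ℕ → ℂ) (p : Nd) : ‖A p.1 p.2.1 (2*p.2.2+1)‖ ≤ mu A p := by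
  have : ‖A p.1 p.2.1 (2*p.2.2+1)‖₊ ≤ mu A p := le_max_right _ _
  exact_mod_cast this

/-- antichain of bitiles with large coefficients -/
lemma bess_bitile {A e} (h : Bess A e) (F : Finset Nd) (hF : ∀ p ∈ F, ∀ q ∈ F, nle p q → p = q)
    (c : ℝ) (hc : 0 ≤ c) (hA : ∀ p ∈ F, c ≤ mu A p) : (∑ p ∈ F, (2:ℝ)^p.1) * c^2 ≤ e := by
  classical
  have hex : ∀ p : Nd, ∃ δ : ℕ, δ < 2 ∧ (mu A p : ℝ) = ‖A p.1 p.2.1 (2*p.2.2+δ)‖ := by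
    intro p
    unfold mu
    rcases le_total ‖A p.1 p.2.1 (2*p.2.2)‖₊ ‖A p.1 p.2.1 (2*p.2.2+1)‖₊ with h | h
    · exact ⟨1, by norm_num, by rw [max_eq_right h]; rfl⟩
    · exact ⟨0, by norm_num, by rw [max_eq_left h]; rfl⟩
  choose δ hδ hδ' using hex
  set t : Nd → Nd := fun p => (p.1, p.2.1, 2*p.2.2+δ p) with ht
  have key : ∀ p q, nle (t p) (t q) → nle p q := by
    rintro p q ⟨r, e1, e2, e3⟩
    simp only [ht] at e1 e2 e3
    refine ⟨r, e1, e2, ?_⟩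
    have hp := hδ p
    have hq := hδ q
    have : (2*q.2.2 + δ q)/2^r/2 = p.2.2 := by rw [e3]; omega
    rw [Nat.div_div_eq_div_mul, mul_comm (2^r) 2, ← Nat.div_div_eq_div_mul] at this
    rw [← this]; congr 1; omega
  have tinj : Set.InjOn t F := by
    intro p hp q hq hpq
    exact hF p hp q hq (key p q (by rw [hpq]; exact nle_refl _))
  have := h (F.image t) (by
    intro p hp q hq hpq
    obtain ⟨p', hp', rfl⟩ := Finset.mem_image.1 hp
    obtain ⟨q', hq', rfl⟩ := Finset.mem_image.1 hq
    rw [hF p' hp' q' hq' (key _ _ hpq)])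
  rw [Finset.sum_image tinj] at this
  refine le_trans ?_ this
  rw [Finset.sum_mul]
  apply Finset.sum_le_sum
  intro p hp
  apply mul_le_mul_of_nonneg_left _ (by positivity)
  have h1 := hA p hp
  rw [hδ' p] at h1
  exact pow_le_pow_left₀ hc h1 2

/-- sup over larger elements -/
def sg (μ : Nd → ℝ≥0) (U : Finset Nd) (Q : Nd) : ℝ≥0 := by
  classical exact (U.filter (nle Q)).sup μ

lemma sg_anti (μ : Nd → ℝ≥0) (U : Finset Nd) {Q Q' : Nd} (h : nle Q Q') : sg μ U Q' ≤ sg μ U Q := by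
  classical
  unfold sg
  apply Finset.sup_mono
  intro s hs
  rw [Finset.mem_filter] at hs ⊢
  exact ⟨hs.1, nle_trans h hs.2⟩

lemma le_sg (μ : Nd → ℝ≥0) (U : Finset Nd) {Q Q' : Nd} (h : nle Q Q') (hQ' : Q' ∈ U) : μ Q' ≤ sg μ U Q := by
  classical
  unfold sg
  apply Finset.le_sup (f := μ)
  rw [Finset.mem_filter]
  exact ⟨hQ', h⟩

lemma sg_attained (μ : Nd → ℝ≥0) (U : Finset Nd) {Q : Nd} (hQ : Q ∈ U) :
    ∃ Q' ∈ U, nle Q Q' ∧ sg μ U Q = μ Q' := by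
  classical
  obtain ⟨Q', h1, h2⟩ := Finset.exists_mem_eq_sup (U.filter (nle Q))
    ⟨Q, by rw [Finset.mem_filter]; exact ⟨hQ, nle_refl _⟩⟩ μ
  rw [Finset.mem_filter] at h1
  refine ⟨Q', h1.1, h1.2, ?_⟩
  unfold sg
  convert h2

lemma maxl_anti (S : Finset Nd) : ∀ p ∈ maxl S, ∀ q ∈ maxl S, nle p q → p = q := by
  intro p hp q hq h
  exact ((mem_maxl.1 hp).2 q (mem_maxl.1 hq).1 h).symm

/-- maximal elements of a level set have controlled total length -/
lemma maxl_bound {A e} (h : Bess A e) (U QQ : Finset Nd) (hQU : QQ ⊆ U) (c : ℝ) (hc : 0 ≤ c)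
    (hQ : ∀ p ∈ QQ, c ≤ sg (mu A) U p) : (∑ M ∈ maxl QQ, (2:ℝ)^M.1) * c^2 ≤ e := by
  classical
  set TT := maxl (U.filter (fun p => c ≤ mu A p)) with hTT
  have hex : ∀ M : Nd, ∃ T : Nd, M ∈ QQ → T ∈ TT ∧ nle M T := by
    intro M
    by_cases hM : M ∈ QQ
    · obtain ⟨Q', h1, h2, h3⟩ := sg_attained (mu A) U (hQU hM)
      obtain ⟨T, hT1, hT2⟩ := exists_maxl (U.filter (fun p => c ≤ mu A p)) (p := Q') (by
        rw [Finset.mem_filter]; exact ⟨h1, by rw [← h3]; exact hQ M hM⟩)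
      exact ⟨T, fun _ => ⟨hT1, nle_trans h2 hT2⟩⟩
    · exact ⟨M, fun h => absurd h hM⟩
  choose t ht using hex
  have hQm : ∀ M ∈ maxl QQ, M ∈ QQ := fun M hM => (mem_maxl.1 hM).1
  have h1 : ∑ M ∈ maxl QQ, (2:ℝ)^M.1 ≤ ∑ T ∈ TT, (2:ℝ)^T.1 := by
    rw [← Finset.sum_fiberwise_of_maps_to (fun M hM => (ht M (hQm M hM)).1)]
    apply Finset.sum_le_sum
    intro T hT
    apply kraft
    · intro p hp
      rw [Finset.mem_filter] at hp
      rw [← hp.2]; exact (ht p (hQm p hp.1)).2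
    · intro p hp q hq
      rw [Finset.mem_filter] at hp hq
      exact maxl_anti QQ p hp.1 q hq.1
  have h2 := bess_bitile h TT (maxl_anti _) c hc (fun p hp => by
    have := (mem_maxl.1 hp).1
    rw [Finset.mem_filter] at this; exact this.2)
  exact (mul_le_mul_of_nonneg_right h1 (by positivity)).trans h2




lemma min_rpow_le {X Z t : ℝ} (hX : 0 ≤ X) (hZ : 0 ≤ Z) (h0 : 0 < t) (h1 : t < 1) :
    min X Z ≤ X^(1-t) * Z^t := by
  have hm : 0 ≤ min X Z := le_min hX hZ
  calc min X Z = (min X Z)^((1-t)+t) := by rw [sub_add_cancel, Real.rpow_one]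
    _ = (min X Z)^(1-t) * (min X Z)^t := by
        rw [Real.rpow_add_of_nonneg hm (by linarith) h0.le]
    _ ≤ X^(1-t) * Z^t := by
        apply mul_le_mul
        · exact Real.rpow_le_rpow hm (min_le_left _ _) (by linarith)
        · exact Real.rpow_le_rpow hm (min_le_right _ _) h0.le
        · positivity
        · positivity

lemma geom_fin {q : ℝ} (h0 : 0 ≤ q) (h1 : q < 1) (F : Finset ℕ) : ∑ n ∈ F, q^n ≤ 1/(1-q) := by
  rw [one_div, ← tsum_geometric_of_lt_one h0 h1]
  exact (summable_geometric_of_lt_one h0 h1).sum_le_tsum F (fun _ _ => by positivity)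

lemma WRec_smul {A} (h : WRec A) (c : ℂ) : WRec (fun k n l => A k n l * c) := by
  intro k n l
  obtain ⟨h1, h2⟩ := h k n l
  exact ⟨by simp only [h1]; ring, by simp only [h2]; ring⟩

/-- the first-function coefficient attached to Q -/
def mu1 (L : ℕ) (A : ℤ → ℕ → ℕ → ℂ) (Q : Nd) : ℝ≥0 := mu A (PP (L+1) Q)

lemma level_est (L : ℕ) (A1 A2 A3 : ℤ → ℕ → ℕ → ℂ) (r1 : WRec A1) (r2 : WRec A2) (r3 : WRec A3)
    (e1 e2 e3 : ℝ) (b1 : Bess A1 e1) (b2 : Bess A2 e2) (b3 : Bess A3 e3) (U : Finset Nd)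
    (hU : ∀ Q ∈ U, ∀ T ∈ U, ∀ Q'' : Nd, nle Q Q'' → Q''.1 ≤ T.1 → Q'' ∈ U)
    (t1 t2 t3 : ℝ) (p1 : 0 < t1) (p2 : 0 < t2) (p3 : 0 < t3) (ht : t1 + t2 + t3 = 1)
    (QQ : Finset Nd) (hQU : QQ ⊆ U)
    (conv : ∀ p ∈ QQ, ∀ q ∈ QQ, ∀ s, nle p s → nle s q → s ∈ QQ)
    (S1 S2 S3 : ℝ) (s1 : 0 < S1) (s2 : 0 < S2) (s3 : 0 < S3)
    (l1 : ∀ p ∈ QQ, S1/2 ≤ sg (mu1 L A1) U p) (l1' : ∀ p ∈ QQ, sg (mu1 L A1) U p ≤ S1)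
    (l2 : ∀ p ∈ QQ, S2/2 ≤ sg (mu A2) U p) (l2' : ∀ p ∈ QQ, sg (mu A2) U p ≤ S2)
    (l3 : ∀ p ∈ QQ, S3/2 ≤ sg (mu A3) U p) (l3' : ∀ p ∈ QQ, sg (mu A3) U p ≤ S3) :
    ‖∑ Q ∈ QQ, nval L A1 A2 A3 Q‖ ≤ (260/(1-Real.exp (-(t1/16)))) *
      ((S1 * (4*e1/S1^2)^t1) * (S2 * (4*e2/S2^2)^t2) * (S3 * (4*e3/S3^2)^t3)) := by
  classical
  set TT := maxl ((U.filter (fun Q => S1/2 ≤ mu1 L A1 Q)).image (PP (L+1))) with hTT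
  have hTmem : ∀ T ∈ TT, ∃ T' ∈ U, S1/2 ≤ mu A1 (PP (L+1) T') ∧ PP (L+1) T' = T := by
    intro T hT
    have := (mem_maxl.1 hT).1
    obtain ⟨T', h, h'⟩ := Finset.mem_image.1 this
    rw [Finset.mem_filter] at h
    exact ⟨T', h.1, h.2, h'⟩
  have hn : ∀ (S : ℝ) (z : ℂ), 0 < S → ‖z‖ ≤ S → ‖z * ((S⁻¹ : ℝ) : ℂ)‖ ≤ 1 := by
    intro S z hS hz
    rw [norm_mul, Complex.norm_real, Real.norm_of_nonneg (by positivity), ← div_eq_mul_inv, div_le_one hS]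
    exact hz
  have hmu : ∀ (A : ℤ → ℕ → ℕ → ℂ) (S : ℝ) (p : Nd), 0 < S → (mu A p : ℝ) ≤ S →
      ‖A p.1 p.2.1 (2*p.2.2) * ((S⁻¹ : ℝ) : ℂ)‖ ≤ 1 ∧ ‖A p.1 p.2.1 (2*p.2.2+1) * ((S⁻¹ : ℝ) : ℂ)‖ ≤ 1 := by
    intro A S p hS h
    exact ⟨hn S _ hS ((mu_d A p).trans h), hn S _ hS ((mu_u A p).trans h)⟩
  obtain ⟨N, hN⟩ := core L (fun k n l => A1 k n l * ((S1⁻¹ : ℝ) : ℂ)) (fun k n l => A2 k n l * ((S2⁻¹ : ℝ) : ℂ))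
    (fun k n l => A3 k n l * ((S3⁻¹ : ℝ) : ℂ)) (WRec_smul r1 _) (WRec_smul r2 _) (WRec_smul r3 _) QQ TT conv
    (by
      intro p hp
      obtain ⟨Q', h1, h2, h3⟩ := sg_attained (mu1 L A1) U (hQU hp)
      obtain ⟨T, hT1, hT2⟩ := exists_maxl ((U.filter (fun Q => S1/2 ≤ mu1 L A1 Q)).image (PP (L+1)))
        (p := PP (L+1) Q') (Finset.mem_image_of_mem _ (by
          rw [Finset.mem_filter]; exact ⟨h1, by rw [← h3]; exact l1 p hp⟩))
      exact ⟨T, hT1, nle_trans (PP_mono _ h2) hT2⟩)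
    (by
      intro p hp T hT s h1 h2
      obtain ⟨T', hT', _, rfl⟩ := hTmem T hT
      apply hmu A1 S1 s s1
      obtain ⟨r, a1, a2, a3⟩ := h1
      obtain ⟨r', a1', a2', a3'⟩ := h2
      simp only [PP] at a1 a2 a3 a1' a2' a3'
      have hnle : nle p (p.1+r, p.2.1/2^r, s.2.2) := ⟨r, rfl, rfl, a3⟩
      have hin : ((p.1+r, p.2.1/2^r, s.2.2) : Nd) ∈ U :=
        hU p (hQU hp) T' hT' _ hnle (by simp only; push_cast at *; omega)
      have hs : s = PP (L+1) (p.1+r, p.2.1/2^r, s.2.2) := by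
        obtain ⟨x, y, z⟩ := s
        simp only [PP] at *
        ext
        · simp only [a1]; push_cast; ring
        · simp only [← a2]
          rw [Nat.div_div_eq_div_mul, Nat.div_div_eq_div_mul, mul_comm]
        · rfl
      have := le_sg (mu1 L A1) U hnle hin
      unfold mu1 at this
      rw [← hs] at this
      exact le_trans (by exact_mod_cast this) (l1' p hp))
    (by
      intro p hp
      apply hmu A2 S2 p s2
      exact le_trans (by exact_mod_cast le_sg (mu A2) U (nle_refl p) (hQU hp)) (l2' p hp))
    (by
      intro p hp
      apply hmu A3 S3 p s3
      exact le_trans (by exact_mod_cast le_sg (mu A3) U (nle_refl p) (hQU hp)) (l3' p hp))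
  set X := ∑ M ∈ maxl QQ, (2:ℝ)^M.1 with hX
  set Y := ∑ T ∈ TT, (2:ℝ)^T.1 with hY
  have X0 : 0 ≤ X := Finset.sum_nonneg (fun _ _ => by positivity)
  have Y0 : 0 ≤ Y := Finset.sum_nonneg (fun _ _ => by positivity)
  have hYb : Y ≤ 4*e1/S1^2 := by
    have := bess_bitile b1 TT (maxl_anti _) (S1/2) (by positivity) (fun p hp => by
      obtain ⟨T', _, h, rfl⟩ := hTmem p hp
      exact h)
    rw [le_div_iff₀ (by positivity)]
    nlinarith
  have hX2 : X ≤ 4*e2/S2^2 := by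
    have := maxl_bound b2 U QQ hQU (S2/2) (by positivity) l2
    rw [le_div_iff₀ (by positivity)]
    nlinarith
  have hX3 : X ≤ 4*e3/S3^2 := by
    have := maxl_bound b3 U QQ hQU (S3/2) (by positivity) l3
    rw [le_div_iff₀ (by positivity)]
    nlinarith
  have hterm : ∀ n : ℕ, min X (20 * Real.exp (-(n/16)) * Y) ≤
      20 * Real.exp (-(t1/16))^n * ((4*e1/S1^2)^t1 * (4*e2/S2^2)^t2 * (4*e3/S3^2)^t3) := by
    intro n
    refine (min_rpow_le X0 (by positivity) p1 (by linarith)).trans ?_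
    have e1' : X^(1-t1) ≤ (4*e2/S2^2)^t2 * (4*e3/S3^2)^t3 := by
      rw [show 1 - t1 = t2 + t3 by linarith, Real.rpow_add_of_nonneg X0 p2.le p3.le]
      have := Real.rpow_le_rpow X0 hX2 p2.le
      have h' := Real.rpow_le_rpow X0 hX3 p3.le
      exact mul_le_mul this h' (by positivity) (le_trans (by positivity) this)
    have e2' : (20 * Real.exp (-(n/16)) * Y)^t1 ≤ 20 * Real.exp (-(t1/16))^n * (4*e1/S1^2)^t1 := by
      rw [Real.mul_rpow (by positivity) Y0, Real.mul_rpow (by positivity) (by positivity)]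
      have g1 : (20:ℝ)^t1 ≤ 20 := by
        calc (20:ℝ)^t1 ≤ 20^(1:ℝ) := Real.rpow_le_rpow_of_exponent_le (by norm_num) (by linarith)
          _ = 20 := Real.rpow_one _
      have g2 : Real.exp (-(n/16))^t1 = Real.exp (-(t1/16))^n := by
        rw [← Real.exp_mul, ← Real.exp_nat_mul]; congr 1; ring
      rw [g2]
      have g3 := Real.rpow_le_rpow Y0 hYb p1.le
      exact mul_le_mul (mul_le_mul_of_nonneg_right g1 (by positivity)) g3 (by positivity) (by positivity)
    calc _ ≤ ((4*e2/S2^2)^t2 * (4*e3/S3^2)^t3) * (20 * Real.exp (-(t1/16))^n * (4*e1/S1^2)^t1) :=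
          mul_le_mul e1' e2' (by positivity) (le_trans (by positivity) e1')
      _ = _ := by ring
  have hsum : ∑ n ∈ Finset.range N, min X (20 * Real.exp (-(n/16)) * Y) ≤
      20 * (1/(1-Real.exp (-(t1/16)))) * ((4*e1/S1^2)^t1 * (4*e2/S2^2)^t2 * (4*e3/S3^2)^t3) := by
    refine (Finset.sum_le_sum (fun n _ => hterm n)).trans ?_
    rw [← Finset.sum_mul, ← Finset.mul_sum]
    have hX2' : 0 ≤ 4*e2/S2^2 := X0.trans hX2
    have hX3' : 0 ≤ 4*e3/S3^2 := X0.trans hX3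
    have hY' : 0 ≤ 4*e1/S1^2 := Y0.trans hYb
    apply mul_le_mul_of_nonneg_right _ (by positivity)
    apply mul_le_mul_of_nonneg_left _ (by norm_num)
    apply geom_fin (by positivity)
    rw [Real.exp_lt_one_iff]; linarith
  have hsc : ∑ Q ∈ QQ, nval L A1 A2 A3 Q = ((S1*S2*S3 : ℝ) : ℂ) * ∑ Q ∈ QQ, nval L (fun k n l => A1 k n l * ((S1⁻¹ : ℝ) : ℂ)) (fun k n l => A2 k n l * ((S2⁻¹ : ℝ) : ℂ))
    (fun k n l => A3 k n l * ((S3⁻¹ : ℝ) : ℂ)) Q := by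
    rw [Finset.mul_sum]
    apply Finset.sum_congr rfl
    intro Q _
    have c1 : (S1:ℂ) ≠ 0 := by exact_mod_cast s1.ne'
    have c2 : (S2:ℂ) ≠ 0 := by exact_mod_cast s2.ne'
    have c3 : (S3:ℂ) ≠ 0 := by exact_mod_cast s3.ne'
    unfold nval
    push_cast
    field_simp
  rw [hsc, norm_mul, Complex.norm_real, Real.norm_of_nonneg (by positivity)]
  calc _ ≤ S1*S2*S3 * (13 * (20 * (1/(1-Real.exp (-(t1/16)))) * ((4*e1/S1^2)^t1 * (4*e2/S2^2)^t2 * (4*e3/S3^2)^t3))) := by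
        apply mul_le_mul_of_nonneg_left _ (by positivity)
        exact hN.trans (by linarith)
    _ = _ := by ring

lemma geom_levels {a g : ℝ} (ha : 0 < a) (hg : 0 < g) (F : Finset ℤ) (hF : ∀ i ∈ F, (2:ℝ)^i ≤ a) :
    ∑ i ∈ F, ((2:ℝ)^i)^g ≤ a^g * (1/(1-(2:ℝ)^(-g))) := by
  have hq1 : (2:ℝ)^(-g) < 1 := Real.rpow_lt_one_of_one_lt_of_neg (by norm_num) (by linarith)
  have hle : ∀ i ∈ F, i ≤ Int.log 2 a := by
    intro i hi
    have := hF i hi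
    have := Int.zpow_le_iff_le_log (b := 2) (by norm_num) ha (x := i)
    exact this.1 (by exact_mod_cast hF i hi)
  have hla : (2:ℝ)^(Int.log 2 a) ≤ a := by
    exact_mod_cast Int.zpow_log_le_self (b := 2) (by norm_num) ha
  have hterm : ∀ i ∈ F, ((2:ℝ)^i)^g ≤ a^g * ((2:ℝ)^(-g))^((Int.log 2 a - i).toNat) := by
    intro i hi
    have h1 : (2:ℝ)^i ≤ a * (1/2)^((Int.log 2 a - i).toNat) := by
      have : (2:ℝ)^i = (2:ℝ)^(Int.log 2 a) * (1/2)^((Int.log 2 a - i).toNat) := by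
        have h := hle i hi
        rw [one_div, inv_pow, ← zpow_natCast, ← zpow_neg, ← zpow_add₀ (by norm_num)]
        congr 1; omega
      rw [this]
      exact mul_le_mul_of_nonneg_right hla (by positivity)
    refine (Real.rpow_le_rpow (by positivity) h1 hg.le).trans ?_
    rw [Real.mul_rpow ha.le (by positivity)]
    apply le_of_eq
    congr 1
    rw [Real.rpow_neg (by norm_num), ← Real.inv_rpow (by norm_num), ← Real.rpow_natCast, ← Real.rpow_natCast,
      ← Real.rpow_mul (by norm_num), ← Real.rpow_mul (by norm_num), mul_comm g, one_div]
  refine (Finset.sum_le_sum hterm).trans ?_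
  rw [← Finset.mul_sum]
  apply mul_le_mul_of_nonneg_left _ (by positivity)
  rw [← Finset.sum_image (g := fun i => (Int.log 2 a - i).toNat) (f := fun n => ((2:ℝ)^(-g))^n)]
  · exact geom_fin (by positivity) hq1 _
  · intro i hi j hj hij
    have := hle i hi
    have := hle j hj
    simp only at hij
    omega

/-- the constant -/
def CC (t1 t2 t3 : ℝ) : ℝ := (260/(1-Real.exp (-(t1/16)))) *
  ((8 * (1/(1-(2:ℝ)^(-(1-2*t1))))) * (8 * (1/(1-(2:ℝ)^(-(1-2*t2))))) * (8 * (1/(1-(2:ℝ)^(-(1-2*t3))))))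

lemma one_level {e t : ℝ} (he : 0 ≤ e) (h0 : 0 < t) (h1 : t < 1/2) (i : ℤ) :
    (2:ℝ)^(i+1) * (4*e/((2:ℝ)^(i+1))^2)^t ≤ 8 * e^t * ((2:ℝ)^i)^(1-2*t) := by
  set S : ℝ := (2:ℝ)^i with hS
  have hS0 : 0 < S := by positivity
  have : (2:ℝ)^(i+1) = S * 2 := by rw [zpow_add₀ (by norm_num)]; simp [hS]
  rw [this, show 4*e/(S*2)^2 = e / S^2 by field_simp; norm_num; ring, Real.div_rpow he (by positivity),
    Real.rpow_sub hS0, Real.rpow_one, mul_comm 2 t, Real.rpow_mul hS0.le]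
  have : (S^2)^t = (S^t)^(2:ℝ) := by
    rw [← Real.rpow_natCast S 2, ← Real.rpow_mul hS0.le, ← Real.rpow_mul hS0.le]; push_cast; rw [mul_comm]
  rw [this]
  have hp : 0 < (S^t)^(2:ℝ) := by positivity
  have he' : 0 ≤ e^t := by positivity
  rw [show S * 2 * (e^t / (S^t)^(2:ℝ)) = 2 * (e^t * (S / (S^t)^(2:ℝ))) by ring, mul_assoc]
  have : 0 ≤ e^t * (S / (S^t)^(2:ℝ)) := by positivity
  linarith

theorem levels (L : ℕ) (A1 A2 A3 : ℤ → ℕ → ℕ → ℂ) (r1 : WRec A1) (r2 : WRec A2) (r3 : WRec A3)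
    (e1 e2 e3 : ℝ) (b1 : Bess A1 e1) (b2 : Bess A2 e2) (b3 : Bess A3 e3) (U : Finset Nd)
    (hU : ∀ Q ∈ U, ∀ T ∈ U, ∀ Q'' : Nd, nle Q Q'' → Q''.1 ≤ T.1 → Q'' ∈ U)
    (t1 t2 t3 : ℝ) (p1 : 0 < t1) (p2 : 0 < t2) (p3 : 0 < t3) (ht : t1 + t2 + t3 = 1)
    (q1 : t1 < 1/2) (q2 : t2 < 1/2) (q3 : t3 < 1/2)
    (a1 a2 a3 : ℝ) (ha1 : 0 < a1) (ha2 : 0 < a2) (ha3 : 0 < a3)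
    (m1 : ∀ Q ∈ U, (mu A1 (PP (L+1) Q) : ℝ) ≤ a1) (m2 : ∀ Q ∈ U, (mu A2 Q : ℝ) ≤ a2)
    (m3 : ∀ Q ∈ U, (mu A3 Q : ℝ) ≤ a3) :
    ‖∑ Q ∈ U, nval L A1 A2 A3 Q‖ ≤ CC t1 t2 t3 *
      ((e1^t1 * a1^(1-2*t1)) * (e2^t2 * a2^(1-2*t2)) * (e3^t3 * a3^(1-2*t3))) := by
  classical
  have e10 : 0 ≤ e1 := by simpa using b1 ∅ (by simp)
  have e20 : 0 ≤ e2 := by simpa using b2 ∅ (by simp)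
  have e30 : 0 ≤ e3 := by simpa using b3 ∅ (by simp)
  set g1 := sg (mu1 L A1) U with hg1
  set g2 := sg (mu A2) U with hg2
  set g3 := sg (mu A3) U with hg3
  set V := U.filter (fun Q => g1 Q ≠ 0 ∧ g2 Q ≠ 0 ∧ g3 Q ≠ 0) with hV
  have hVU : V ⊆ U := Finset.filter_subset _ _
  have hsum : ∑ Q ∈ U, nval L A1 A2 A3 Q = ∑ Q ∈ V, nval L A1 A2 A3 Q := by
    symm
    apply Finset.sum_subset hVU
    intro Q hQ hQV
    have hz : g1 Q = 0 ∨ g2 Q = 0 ∨ g3 Q = 0 := by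
      by_contra hc
      push Not at hc
      exact hQV (by rw [hV, Finset.mem_filter]; exact ⟨hQ, hc⟩)
    unfold nval
    rcases hz with h | h | h
    · have h' : mu1 L A1 Q ≤ 0 := h ▸ le_sg (mu1 L A1) U (nle_refl Q) hQ
      have h'' := mu_u A1 (PP (L+1) Q)
      unfold mu1 at h'
      have : (mu A1 (PP (L+1) Q) : ℝ) ≤ 0 := by exact_mod_cast h'
      have h0 := norm_le_zero_iff.1 (h''.trans this)
      simp only [PP] at h0
      push_cast at h0
      simp [h0]
    · have h' : mu A2 Q ≤ 0 := h ▸ le_sg (mu A2) U (nle_refl Q) hQ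
      have : (mu A2 Q : ℝ) ≤ 0 := by exact_mod_cast h'
      have h0 := norm_le_zero_iff.1 ((mu_d A2 Q).trans this)
      simp [h0]
    · have h' : mu A3 Q ≤ 0 := h ▸ le_sg (mu A3) U (nle_refl Q) hQ
      have : (mu A3 Q : ℝ) ≤ 0 := by exact_mod_cast h'
      have h0 := norm_le_zero_iff.1 ((mu_d A3 Q).trans this)
      simp [h0]
  set lv : (Nd → ℝ≥0) → Nd → ℤ := fun g Q => Int.log 2 ((g Q : ℝ≥0) : ℝ) with hlv
  have lv1 : ∀ (g : Nd → ℝ≥0) (Q : Nd), g Q ≠ 0 → (2:ℝ)^(lv g Q) ≤ g Q := by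
    intro g Q h
    have h' : (0:ℝ) < (g Q : ℝ) := by exact_mod_cast pos_iff_ne_zero.2 h
    exact_mod_cast Int.zpow_log_le_self (b := 2) (by norm_num) h'
  have lv2 : ∀ (g : Nd → ℝ≥0) (Q : Nd), (g Q : ℝ) ≤ (2:ℝ)^(lv g Q + 1) := by
    intro g Q
    have := Int.lt_zpow_succ_log_self (b := 2) (by norm_num) ((g Q : ℝ≥0) : ℝ)
    exact_mod_cast this.le
  have lvm : ∀ (g : Nd → ℝ≥0) (Q Q' : Nd), g Q ≠ 0 → g Q ≤ g Q' → lv g Q ≤ lv g Q' := by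
    intro g Q Q' h hle
    have h' : (0:ℝ) < (g Q : ℝ) := by exact_mod_cast pos_iff_ne_zero.2 h
    exact Int.log_mono_right h' (by exact_mod_cast hle)
  set LV : Nd → ℤ × ℤ × ℤ := fun Q => (lv g1 Q, lv g2 Q, lv g3 Q) with hLV
  set F1 := V.image (lv g1) with hF1
  set F2 := V.image (lv g2) with hF2
  set F3 := V.image (lv g3) with hF3
  have hmap : ∀ Q ∈ V, LV Q ∈ F1 ×ˢ (F2 ×ˢ F3) := by
    intro Q hQ
    simp only [Finset.mem_product, hLV]
    exact ⟨Finset.mem_image_of_mem _ hQ, Finset.mem_image_of_mem _ hQ, Finset.mem_image_of_mem _ hQ⟩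
  have hVm : ∀ Q ∈ V, Q ∈ U ∧ g1 Q ≠ 0 ∧ g2 Q ≠ 0 ∧ g3 Q ≠ 0 := by
    intro Q hQ
    rw [hV, Finset.mem_filter] at hQ
    exact hQ
  have sgb : ∀ (μ : Nd → ℝ≥0) (a : ℝ), (∀ Q ∈ U, (μ Q : ℝ) ≤ a) → ∀ Q ∈ U, (sg μ U Q : ℝ) ≤ a := by
    intro μ a h Q hQ
    obtain ⟨Q', h1, _, h3⟩ := sg_attained μ U hQ
    rw [h3]; exact h Q' h1
  have f1 : ∀ i ∈ F1, (2:ℝ)^i ≤ a1 := by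
    intro i hi
    obtain ⟨Q, hQ, rfl⟩ := Finset.mem_image.1 hi
    exact (lv1 g1 Q (hVm Q hQ).2.1).trans (sgb (mu1 L A1) a1 m1 Q (hVm Q hQ).1)
  have f2 : ∀ i ∈ F2, (2:ℝ)^i ≤ a2 := by
    intro i hi
    obtain ⟨Q, hQ, rfl⟩ := Finset.mem_image.1 hi
    exact (lv1 g2 Q (hVm Q hQ).2.2.1).trans (sgb (mu A2) a2 m2 Q (hVm Q hQ).1)
  have f3 : ∀ i ∈ F3, (2:ℝ)^i ≤ a3 := by
    intro i hi
    obtain ⟨Q, hQ, rfl⟩ := Finset.mem_image.1 hi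
    exact (lv1 g3 Q (hVm Q hQ).2.2.2).trans (sgb (mu A3) a3 m3 Q (hVm Q hQ).1)
  set K := 260/(1-Real.exp (-(t1/16))) with hK
  have hK0 : 0 ≤ K := by
    rw [hK]
    have : Real.exp (-(t1/16)) < 1 := by rw [Real.exp_lt_one_iff]; linarith
    apply div_nonneg (by norm_num); linarith
  have hlev : ∀ i : ℤ × ℤ × ℤ, ‖∑ Q ∈ V with LV Q = i, nval L A1 A2 A3 Q‖ ≤
      K * ((8 * e1^t1 * ((2:ℝ)^i.1)^(1-2*t1)) *
        ((8 * e2^t2 * ((2:ℝ)^i.2.1)^(1-2*t2)) * (8 * e3^t3 * ((2:ℝ)^i.2.2)^(1-2*t3)))) := by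
    rintro ⟨i1, i2, i3⟩
    have hm : ∀ Q ∈ V.filter (fun Q => LV Q = (i1,i2,i3)), Q ∈ V ∧ lv g1 Q = i1 ∧ lv g2 Q = i2 ∧ lv g3 Q = i3 := by
      intro Q hQ
      rw [Finset.mem_filter] at hQ
      simpa [hLV] using hQ
    have half : ∀ i : ℤ, (2:ℝ)^(i+1)/2 = (2:ℝ)^i := by
      intro i; rw [zpow_add₀ (by norm_num)]; simp
    refine (level_est L A1 A2 A3 r1 r2 r3 e1 e2 e3 b1 b2 b3 U hU t1 t2 t3 p1 p2 p3 ht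
      (V.filter (fun Q => LV Q = (i1,i2,i3))) ((Finset.filter_subset _ _).trans hVU) ?_
      ((2:ℝ)^(i1+1)) ((2:ℝ)^(i2+1)) ((2:ℝ)^(i3+1)) (by positivity) (by positivity) (by positivity)
      ?_ ?_ ?_ ?_ ?_ ?_).trans ?_
    · intro p hp q hq s hps hsq
      obtain ⟨hpV, hp1, hp2, hp3⟩ := hm p hp
      obtain ⟨hqV, hq1, hq2, hq3⟩ := hm q hq
      obtain ⟨hqU, z1, z2, z3⟩ := hVm q hqV
      have hsU : s ∈ U := by
        refine hU p (hVm p hpV).1 q hqU s hps ?_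
        obtain ⟨r, h, _⟩ := hsq
        omega
      have nz : ∀ μ, sg μ U q ≠ 0 → sg μ U s ≠ 0 := by
        intro μ h
        exact (lt_of_lt_of_le (pos_iff_ne_zero.2 h) (sg_anti μ U hsq)).ne'
      have lve : ∀ μ i, sg μ U q ≠ 0 → lv (sg μ U) p = i → lv (sg μ U) q = i → lv (sg μ U) s = i := by
        intro μ i h hp hq
        have := lvm (sg μ U) q s h (sg_anti μ U hsq)
        have := lvm (sg μ U) s p (nz μ h) (sg_anti μ U hps)
        omega
      rw [Finset.mem_filter]
      refine ⟨?_, ?_⟩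
      · rw [hV, Finset.mem_filter]
        exact ⟨hsU, nz _ z1, nz _ z2, nz _ z3⟩
      · simp only [hLV]
        rw [lve _ _ z1 hp1 hq1, lve _ _ z2 hp2 hq2, lve _ _ z3 hp3 hq3]
    · intro p hp
      obtain ⟨h, h1, h2, h3⟩ := hm p hp
      rw [half, ← h1]; exact lv1 g1 p (hVm p h).2.1
    · intro p hp
      obtain ⟨h, h1, h2, h3⟩ := hm p hp
      rw [← h1]; exact lv2 g1 p
    · intro p hp
      obtain ⟨h, h1, h2, h3⟩ := hm p hp
      rw [half, ← h2]; exact lv1 g2 p (hVm p h).2.2.1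
    · intro p hp
      obtain ⟨h, h1, h2, h3⟩ := hm p hp
      rw [← h2]; exact lv2 g2 p
    · intro p hp
      obtain ⟨h, h1, h2, h3⟩ := hm p hp
      rw [half, ← h3]; exact lv1 g3 p (hVm p h).2.2.2
    · intro p hp
      obtain ⟨h, h1, h2, h3⟩ := hm p hp
      rw [← h3]; exact lv2 g3 p
    · have x1 := one_level e10 p1 q1 i1
      have x2 := one_level e20 p2 q2 i2
      have x3 := one_level e30 p3 q3 i3
      rw [mul_assoc (_ * _)]
      apply mul_le_mul_of_nonneg_left _ hK0
      apply mul_le_mul x1 _ (by positivity) (by positivity)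
      apply mul_le_mul x2 x3 (by positivity) (by positivity)
  rw [hsum, ← Finset.sum_fiberwise_of_maps_to hmap]
  refine (norm_sum_le _ _).trans ((Finset.sum_le_sum (fun i _ => hlev i)).trans ?_)
  rw [← Finset.mul_sum, Finset.sum_product]
  simp only [Finset.sum_product, ← Finset.mul_sum, ← Finset.sum_mul]
  have y1 := geom_levels ha1 (show 0 < 1-2*t1 by linarith) F1 f1
  have y2 := geom_levels ha2 (show 0 < 1-2*t2 by linarith) F2 f2
  have y3 := geom_levels ha3 (show 0 < 1-2*t3 by linarith) F3 f3
  have n1 : 0 ≤ ∑ i ∈ F1, ((2:ℝ)^i)^(1-2*t1) := Finset.sum_nonneg (fun _ _ => by positivity)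
  have n2 : 0 ≤ ∑ i ∈ F2, ((2:ℝ)^i)^(1-2*t2) := Finset.sum_nonneg (fun _ _ => by positivity)
  have n3 : 0 ≤ ∑ i ∈ F3, ((2:ℝ)^i)^(1-2*t3) := Finset.sum_nonneg (fun _ _ => by positivity)
  calc _ ≤ K * ((8 * e1^t1 * (a1^(1-2*t1) * (1/(1-(2:ℝ)^(-(1-2*t1)))))) *
        ((8 * e2^t2 * (a2^(1-2*t2) * (1/(1-(2:ℝ)^(-(1-2*t2)))))) * (8 * e3^t3 * (a3^(1-2*t3) * (1/(1-(2:ℝ)^(-(1-2*t3)))))))) := by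
        apply mul_le_mul_of_nonneg_left _ hK0
        have z1 := mul_le_mul_of_nonneg_left y1 (show 0 ≤ 8 * e1^t1 by positivity)
        have z2 := mul_le_mul_of_nonneg_left y2 (show 0 ≤ 8 * e2^t2 by positivity)
        have z3 := mul_le_mul_of_nonneg_left y3 (show 0 ≤ 8 * e3^t3 by positivity)
        have w1 := mul_nonneg (show 0 ≤ 8 * e1^t1 by positivity) n1
        have w2 := mul_nonneg (show 0 ≤ 8 * e2^t2 by positivity) n2
        have w3 := mul_nonneg (show 0 ≤ 8 * e3^t3 by positivity) n3
        exact mul_le_mul z1 (mul_le_mul z2 z3 w3 (w2.trans z2)) (mul_nonneg w2 w3) (w1.trans z1)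
    _ = _ := by unfold CC; rw [← hK]; ring




lemma walsh_zero (x : ℝ) : walsh 0 x = if 0 ≤ x ∧ x < 1 then 1 else 0 := by
  rw [walsh]; simp

lemma walsh_even (l : ℕ) (x : ℝ) : walsh (2*l) x = walsh l (2*x) + walsh l (2*x-1) := by
  rcases Nat.eq_zero_or_pos l with rfl | hl
  · simp only [mul_zero, walsh_zero]
    split_ifs <;> grind
  · rw [walsh, dif_neg (by omega), if_pos (by omega), Nat.mul_div_cancel_left _ (by norm_num)]

lemma walsh_odd (l : ℕ) (x : ℝ) : walsh (2*l+1) x = walsh l (2*x) - walsh l (2*x-1) := by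
  rw [walsh, dif_neg (by omega), if_neg (by omega), show (2*l+1)/2 = l by omega]

lemma walsh_ind (P : ℕ → Prop) (h0 : P 0) (he : ∀ l, P l → P (2*l)) (ho : ∀ l, P l → P (2*l+1)) : ∀ n, P n := by
  intro n
  induction n using Nat.strong_induction_on with
  | _ n ih =>
    rcases Nat.eq_zero_or_pos n with rfl | hn
    · exact h0
    · rcases Nat.even_or_odd' n with ⟨c, rfl | rfl⟩
      · exact he c (ih c (by omega))
      · exact ho c (ih c (by omega))

lemma walsh_supp (n : ℕ) : ∀ x, ¬ (0 ≤ x ∧ x < 1) → walsh n x = 0 := by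
  refine walsh_ind (fun n => ∀ x, ¬ (0 ≤ x ∧ x < 1) → walsh n x = 0) ?_ ?_ ?_ n
  · intro x hx; rw [walsh_zero, if_neg hx]
  · intro l ih x hx
    rw [walsh_even, ih _ (by grind), ih _ (by grind)]; simp
  · intro l ih x hx
    rw [walsh_odd, ih _ (by grind), ih _ (by grind)]; simp

lemma walsh_disj (l l' : ℕ) (x : ℝ) : walsh l (2*x) * walsh l' (2*x-1) = 0 := by
  by_cases h : 0 ≤ 2*x ∧ 2*x < 1
  · rw [walsh_supp l' (2*x-1) (by grind), mul_zero]
  · rw [walsh_supp l _ h, zero_mul]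

lemma walsh_sq (n : ℕ) : ∀ x, walsh n x * walsh n x = walsh 0 x := by
  refine walsh_ind (fun n => ∀ x, walsh n x * walsh n x = walsh 0 x) ?_ ?_ ?_ n
  · intro x; rw [walsh_zero]; split_ifs <;> simp
  · intro l ih x
    have h1 := ih (2*x)
    have h2 := ih (2*x-1)
    have h3 := walsh_disj l l x
    have h4 := walsh_even 0 x
    rw [walsh_even]
    simp only [mul_zero] at h4
    linear_combination h1 + h2 + 2*h3 - h4
  · intro l ih x
    have h1 := ih (2*x)
    have h2 := ih (2*x-1)
    have h3 := walsh_disj l l x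
    have h4 := walsh_even 0 x
    rw [walsh_odd]
    simp only [mul_zero] at h4
    linear_combination h1 + h2 - 2*h3 - h4

lemma walsh_abs (n : ℕ) (x : ℝ) : |walsh n x| ≤ 1 := by
  have h := walsh_sq n x
  have : walsh 0 x ≤ 1 := by rw [walsh_zero]; split_ifs <;> norm_num
  rw [abs_le_one_iff_mul_self_le_one, h]; exact this

lemma walsh_meas (n : ℕ) : Measurable (walsh n) := by
  refine walsh_ind (fun n => Measurable (walsh n)) ?_ ?_ ?_ n
  · have : walsh 0 = fun x => if 0 ≤ x ∧ x < 1 then 1 else 0 := by ext x; exact walsh_zero x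
    rw [this]
    exact Measurable.ite (measurableSet_Ico (a := (0:ℝ)) (b := 1)) measurable_const measurable_const
  · intro l ih
    have : walsh (2*l) = fun x => walsh l (2*x) + walsh l (2*x-1) := by ext x; exact walsh_even l x
    rw [this]
    fun_prop
  · intro l ih
    have : walsh (2*l+1) = fun x => walsh l (2*x) - walsh l (2*x-1) := by ext x; exact walsh_odd l x
    rw [this]
    fun_prop

/-- sup normalized wave packet -/
def psi (p : Nd) (x : ℝ) : ℝ := walsh p.2.2 ((2:ℝ)^(-p.1) * x - p.2.1)

lemma psi_meas (p : Nd) : Measurable (psi p) := by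
  unfold psi
  exact (walsh_meas _).comp (by fun_prop)

lemma psi_abs (p : Nd) (x : ℝ) : |psi p x| ≤ 1 := walsh_abs _ _

lemma in_dyadic (k : ℤ) (n : ℕ) (x : ℝ) :
    x ∈ dyadicI k n ↔ (0 ≤ (2:ℝ)^(-k) * x - n ∧ (2:ℝ)^(-k) * x - n < 1) := by
  unfold dyadicI
  have h2 : (0:ℝ) < (2:ℝ)^k := by positivity
  rw [Set.mem_Ico, zpow_neg, ← le_div_iff₀' h2, ← div_lt_iff₀' h2, ← div_eq_inv_mul]
  constructor
  · rintro ⟨a, b⟩; constructor <;> linarith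
  · rintro ⟨a, b⟩; constructor <;> linarith

lemma psi_supp (p : Nd) {x : ℝ} (h : x ∉ dyadicI p.1 p.2.1) : psi p x = 0 := by
  rw [in_dyadic] at h
  exact walsh_supp _ _ h

lemma psi_sq (p : Nd) (x : ℝ) : psi p x * psi p x = (dyadicI p.1 p.2.1).indicator 1 x := by
  unfold psi
  rw [walsh_sq, walsh_zero]
  by_cases h : x ∈ dyadicI p.1 p.2.1
  · rw [Set.indicator_of_mem h, if_pos ((in_dyadic _ _ _).1 h)]; rfl
  · rw [Set.indicator_of_notMem h, if_neg (fun h' => h ((in_dyadic _ _ _).2 h'))]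

lemma psi_even (k : ℤ) (n l : ℕ) (x : ℝ) :
    psi (k, n, 2*l) x = psi (k-1, 2*n, l) x + psi (k-1, 2*n+1, l) x := by
  simp only [psi]
  rw [walsh_even, show -(k-1) = -k + 1 by ring, zpow_add₀ (by norm_num)]
  push_cast
  congr 2 <;> ring

lemma psi_odd (k : ℤ) (n l : ℕ) (x : ℝ) :
    psi (k, n, 2*l+1) x = psi (k-1, 2*n, l) x - psi (k-1, 2*n+1, l) x := by
  simp only [psi]
  rw [walsh_odd, show -(k-1) = -k + 1 by ring, zpow_add₀ (by norm_num)]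
  push_cast
  congr 2 <;> ring

/-- sup normalized coefficient -/
def av (f : ℝ → ℂ) (k : ℤ) (n l : ℕ) : ℂ := ((2:ℝ)^(-k) : ℝ) * ∫ x, f x * (psi (k,n,l) x : ℂ)

lemma int_psi {f : ℝ → ℂ} (hf : Integrable f) (p : Nd) : Integrable (fun x => f x * (psi p x : ℂ)) := by
  apply hf.mul_bdd (c := 1)
  · exact (Complex.measurable_ofReal.comp (psi_meas p)).aestronglyMeasurable
  · refine Filter.Eventually.of_forall (fun x => ?_)
    rw [Complex.norm_real]; exact psi_abs p x

lemma av_rec {f : ℝ → ℂ} (hf : Integrable f) : WRec (av f) := by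
  intro k n l
  have hk : (2:ℝ)^(-(k-1)) = 2 * (2:ℝ)^(-k) := by
    rw [show -(k-1) = 1 + -k by ring, zpow_add₀ (by norm_num)]; simp
  unfold av
  rw [hk]
  constructor
  · rw [← mul_add, ← integral_add (int_psi hf _) (int_psi hf _)]
    simp only [psi_even, psi_odd]
    rw [show (∫ x, (f x * ((psi (k-1,2*n,l) x + psi (k-1,2*n+1,l) x : ℝ):ℂ) + f x * ((psi (k-1,2*n,l) x - psi (k-1,2*n+1,l) x : ℝ):ℂ)))
      = ∫ x, 2 * (f x * (psi (k-1,2*n,l) x : ℂ)) from by congr 1; ext x; push_cast; ring]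
    rw [integral_const_mul]; push_cast; ring
  · rw [← mul_sub, ← integral_sub (int_psi hf _) (int_psi hf _)]
    simp only [psi_even, psi_odd]
    rw [show (∫ x, (f x * ((psi (k-1,2*n,l) x + psi (k-1,2*n+1,l) x : ℝ):ℂ) - f x * ((psi (k-1,2*n,l) x - psi (k-1,2*n+1,l) x : ℝ):ℂ)))
      = ∫ x, 2 * (f x * (psi (k-1,2*n+1,l) x : ℂ)) from by congr 1; ext x; push_cast; ring]
    rw [integral_const_mul]; push_cast; ring

lemma psi_norm (p : Nd) : ∫ x, psi p x * psi p x = (2:ℝ)^p.1 := by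
  simp only [psi_sq]
  rw [integral_indicator_one (dyadic_measurable _ _)]
  unfold Measure.real
  rw [dyadic_vol, ENNReal.toReal_ofReal (by positivity)]

lemma psi_memLp (p : Nd) (q : ℝ≥0∞) : MemLp (psi p) q := by
  have : psi p = (dyadicI p.1 p.2.1).indicator (psi p) := by
    ext x
    by_cases h : x ∈ dyadicI p.1 p.2.1
    · rw [Set.indicator_of_mem h]
    · rw [Set.indicator_of_notMem h, psi_supp p h]
  rw [this]
  have : IsFiniteMeasure (volume.restrict (dyadicI p.1 p.2.1)) :=
    ⟨by rw [Measure.restrict_apply_univ, dyadic_vol]; exact ENNReal.ofReal_lt_top⟩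
  rw [memLp_indicator_iff_restrict (dyadic_measurable _ _)]
  exact MemLp.of_bound (psi_meas p).aestronglyMeasurable 1 (Filter.Eventually.of_forall (fun x => psi_abs p x))

lemma psi_int2 (p q : Nd) : Integrable (fun x => psi p x * psi q x) := by
  have := (psi_memLp p 2).integrable_mul (psi_memLp q 2)
  exact this

lemma psi_decomp (k : ℤ) (n l : ℕ) : ∃ s : ℝ, s = (if l % 2 = 0 then 1 else -1) ∧
    ∀ x, psi (k,n,l) x = psi (k-1,2*n,l/2) x + s * psi (k-1,2*n+1,l/2) x := by
  refine ⟨_, rfl, fun x => ?_⟩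
  rcases Nat.even_or_odd' l with ⟨c, rfl | rfl⟩
  · rw [psi_even, if_pos (by omega), show 2*c/2 = c by omega]; ring
  · rw [psi_odd, if_neg (by omega), show (2*c+1)/2 = c by omega]; ring

lemma psi_orth_time (k : ℤ) (n n' l l' : ℕ) (h : n ≠ n') (x : ℝ) : psi (k,n,l) x * psi (k,n',l') x = 0 := by
  by_cases hx : x ∈ dyadicI k n
  · rw [psi_supp (k,n',l') (fun hx' => h (dyadic_unique hx hx')), mul_zero]
  · rw [psi_supp (k,n,l) hx, zero_mul]

lemma psi_orth_same (M : ℕ) : ∀ (k : ℤ) (n l l' : ℕ), l + l' ≤ M → l ≠ l' →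
    ∫ x, psi (k,n,l) x * psi (k,n,l') x = 0 := by
  induction M with
  | zero => intro k n l l' h h'; omega
  | succ M ih =>
    intro k n l l' h h'
    obtain ⟨s, hs, e⟩ := psi_decomp k n l
    obtain ⟨s', hs', e'⟩ := psi_decomp k n l'
    have : ∀ x, psi (k,n,l) x * psi (k,n,l') x = psi (k-1,2*n,l/2) x * psi (k-1,2*n,l'/2) x
        + s * s' * (psi (k-1,2*n+1,l/2) x * psi (k-1,2*n+1,l'/2) x) := by
      intro x
      have h1 := psi_orth_time (k-1) (2*n) (2*n+1) (l/2) (l'/2) (by omega) x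
      have h2 := psi_orth_time (k-1) (2*n) (2*n+1) (l'/2) (l/2) (by omega) x
      rw [e, e']
      linear_combination s' * h1 + s * h2
    simp only [this]
    rw [integral_add (psi_int2 _ _) ((psi_int2 _ _).const_mul _), integral_const_mul]
    by_cases hl : l/2 = l'/2
    · rw [hl, psi_norm, psi_norm]
      have : s * s' = -1 := by
        rw [hs, hs']
        split_ifs <;> first | omega | norm_num
      rw [this]; ring
    · rw [ih _ _ _ _ (by omega) hl, ih _ _ _ _ (by omega) hl]; ring

lemma psi_orth_le (r : ℕ) : ∀ (p q : Nd), q.1 = p.1 + r → ¬ nle p q → ∫ x, psi p x * psi q x = 0 := by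
  induction r with
  | zero =>
    rintro ⟨k, n, l⟩ ⟨k', n', l'⟩ h hn
    simp only [Nat.cast_zero, add_zero] at h
    subst h
    by_cases hnn : n = n'
    · subst hnn
      apply psi_orth_same _ _ _ _ _ le_rfl
      rintro rfl
      exact hn (nle_refl _)
    · simp only [psi_orth_time k' n n' l l' hnn]; simp
  | succ r ih =>
    rintro ⟨k, n, l⟩ ⟨k', n', l'⟩ h hn
    simp only at h
    obtain ⟨s, hs, e⟩ := psi_decomp k' n' l'
    have : ∀ x, psi (k,n,l) x * psi (k',n',l') x = psi (k,n,l) x * psi (k'-1,2*n',l'/2) x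
        + s * (psi (k,n,l) x * psi (k'-1,2*n'+1,l'/2) x) := by
      intro x; rw [e]; ring
    simp only [this]
    rw [integral_add (psi_int2 _ _) ((psi_int2 _ _).const_mul _), integral_const_mul]
    have aux : ∀ δ, δ < 2 → ¬ nle (k,n,l) (k'-1,2*n'+δ,l'/2) := by
      rintro δ hδ ⟨r', e1, e2, e3⟩
      apply hn
      simp only at e1 e2 e3
      have hr : r' = r := by push_cast at h; omega
      subst hr
      refine ⟨r'+1, h, ?_, ?_⟩
      · simp only
        rw [pow_succ, ← Nat.div_div_eq_div_mul, e2]; omega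
      · simp only
        rw [pow_succ', ← Nat.div_div_eq_div_mul, e3]
    rw [ih _ (k'-1,2*n',l'/2) (by simp only; push_cast at h; omega) (aux 0 (by norm_num)),
      ih _ (k'-1,2*n'+1,l'/2) (by simp only; push_cast at h; omega) (aux 1 (by norm_num))]
    ring

lemma psi_orth (p q : Nd) (h : ¬ nle p q) (h' : ¬ nle q p) : ∫ x, psi p x * psi q x = 0 := by
  rcases le_total p.1 q.1 with hle | hle
  · exact psi_orth_le (q.1-p.1).toNat p q (by omega) h
  · have := psi_orth_le (p.1-q.1).toNat q p (by omega) h'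
    simp only [mul_comm] at this ⊢
    exact this

lemma av_bess {f : ℝ → ℂ} (hf : MemLp f 2) (e : ℝ) (he : ∫ x, ‖f x‖^2 ≤ e) : Bess (av f) e := by
  intro F hF
  refine le_trans ?_ he
  set c : Nd → ℝ := fun p => Real.sqrt ((2:ℝ)^(-p.1)) with hc
  have hm : ∀ p : Nd, MemLp (fun x => ((c p * psi p x : ℝ) : ℂ)) 2 := fun p =>
    ((psi_memLp p 2).const_mul (c p)).ofReal
  set v : Nd → Lp ℂ 2 (volume : Measure ℝ) := fun p => (hm p).toLp with hv
  have hin : ∀ p q, inner ℂ (v p) (v q) = ((c p * c q * ∫ x, psi p x * psi q x : ℝ) : ℂ) := by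
    intro p q
    rw [L2.inner_def, ← integral_const_mul, ← integral_complex_ofReal]
    apply integral_congr_ae
    filter_upwards [(hm p).coeFn_toLp, (hm q).coeFn_toLp] with x h1 h2
    rw [h1, h2]
    simp only [RCLike.inner_apply, Complex.conj_ofReal]
    push_cast; ring
  have hcc : ∀ p : Nd, c p * c p = (2:ℝ)^(-p.1) := fun p => Real.mul_self_sqrt (by positivity)
  have ho : Orthonormal ℂ (fun p : F => v p) := by
    rw [orthonormal_iff_ite]
    rintro ⟨p, hp⟩ ⟨q, hq⟩
    simp only [hin]
    split_ifs with h
    · have : p = q := by simpa using h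
      subst this
      rw [psi_norm, hcc, ← zpow_add₀ (by norm_num)]; simp
    · have hne : p ≠ q := by simpa using h
      rw [psi_orth p q (fun h => hne (hF p hp q hq h)) (fun h => hne (hF q hq p hp h).symm)]; simp
  have hb := ho.sum_inner_products_le (hf.toLp) (s := Finset.univ)
  have hfin : ∀ p, ‖(inner ℂ (v p) hf.toLp : ℂ)‖^2 = (2:ℝ)^p.1 * ‖av f p.1 p.2.1 p.2.2‖^2 := by
    intro p
    have : (inner ℂ (v p) hf.toLp : ℂ) = (c p : ℂ) * ∫ x, f x * (psi p x : ℂ) := by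
      rw [L2.inner_def, ← integral_const_mul]
      apply integral_congr_ae
      filter_upwards [(hm p).coeFn_toLp, hf.coeFn_toLp] with x h1 h2
      rw [h1, h2]
      simp only [RCLike.inner_apply, Complex.conj_ofReal]
      push_cast; ring
    rw [this]
    unfold av
    rw [norm_mul, norm_mul, mul_pow, mul_pow, Complex.norm_real, Complex.norm_real,
      Real.norm_of_nonneg (by positivity), Real.norm_of_nonneg (by positivity), sq (c p), hcc, ← mul_assoc]
    congr 1
    rw [sq, ← mul_assoc, ← zpow_add₀ (by norm_num)]; simp
  have hnf : ‖hf.toLp‖^2 = ∫ x, ‖f x‖^2 := by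
    rw [← inner_self_eq_norm_sq (𝕜 := ℂ), L2.inner_def, ← integral_re (L2.integrable_inner _ _)]
    apply integral_congr_ae
    filter_upwards [hf.coeFn_toLp] with x h
    rw [h, inner_self_eq_norm_sq]
  rw [hnf] at hb
  simp only [hfin] at hb
  rw [← Finset.sum_coe_sort]
  exact hb




lemma projT_eq (k : ℤ) (n l : ℕ) (f : ℝ → ℂ) (x : ℝ) :
    projT ⟨k,n,l⟩ f x = av f k n l * (psi (k,n,l) x : ℂ) := by
  have h : Real.sqrt ((2:ℝ)^(-k)) * Real.sqrt ((2:ℝ)^(-k)) = (2:ℝ)^(-k) := Real.mul_self_sqrt (by positivity)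
  have hc : (((2:ℝ)^(-k) : ℝ) : ℂ) = (Real.sqrt ((2:ℝ)^(-k)) : ℂ) * (Real.sqrt ((2:ℝ)^(-k)) : ℂ) := by
    rw [← Complex.ofReal_mul, h]
  simp only [projT, coef, Tile.wp, av, psi]
  have : ∀ y, f y * ((Real.sqrt ((2:ℝ)^(-k)) * walsh l ((2:ℝ)^(-k) * y - n) : ℝ) : ℂ) =
      (Real.sqrt ((2:ℝ)^(-k)) : ℂ) * (f y * (walsh l ((2:ℝ)^(-k) * y - n) : ℂ)) := by
    intro y; push_cast; ring
  simp only [this]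
  rw [integral_const_mul, hc, Complex.ofReal_mul]
  ring

lemma phid_eq (P : Bitile) (x : ℝ) : P.phid x = psi (P.k, P.n, 2*P.l) x := by
  simp only [Bitile.phid, Bitile.d, Tile.wp, psi]
  rw [← mul_assoc, ← Real.sqrt_mul (by positivity), ← zpow_add₀ (by norm_num)]
  simp

lemma dyadic_nonempty (j : ℤ) (m : ℕ) : (2:ℝ)^j * m ∈ dyadicI j m := by
  have : (0:ℝ) < (2:ℝ)^j := by positivity
  constructor
  · exact le_rfl
  · nlinarith

lemma dyadic_sub_iff {j k : ℤ} {m n : ℕ} : dyadicI j m ⊆ dyadicI k n ↔ ∃ r : ℕ, k = j + r ∧ m/2^r = n := by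
  constructor
  · intro h
    have hj : (0:ℝ) < (2:ℝ)^j := by positivity
    have h' := h
    unfold dyadicI at h'
    rw [Set.Ico_subset_Ico_iff (by nlinarith)] at h'
    have hle : (2:ℝ)^j ≤ (2:ℝ)^k := by nlinarith
    rw [zpow_le_zpow_iff_right₀ (by norm_num)] at hle
    obtain ⟨r, hr⟩ : ∃ r : ℕ, k = j + r := ⟨(k-j).toNat, by omega⟩
    refine ⟨r, hr, ?_⟩
    subst hr
    exact dyadic_unique (dyadic_nest (dyadic_nonempty j m)) (h (dyadic_nonempty j m))
  · rintro ⟨r, rfl, rfl⟩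
    exact dyadic_sub

lemma tile_time (p : Tile) : p.timeI = dyadicI p.k p.n := rfl
lemma tile_freq (p : Tile) : p.freqI = dyadicI (-p.k) p.l := rfl

lemma dilate_eq (L : ℕ) (p : Tile) : dilate L p.toSet = dyadicI p.k p.n ×ˢ dyadicI (-p.k + L) p.l := by
  have h2 : (0:ℝ) < (2:ℝ)^L := by positivity
  ext ⟨x, y⟩
  simp only [dilate, Tile.toSet, Set.mem_image, Set.mem_prod, Prod.mk.injEq, Prod.exists, tile_time, tile_freq]
  have key : ∀ b : ℝ, b ∈ dyadicI (-p.k) p.l ↔ (2:ℝ)^L * b ∈ dyadicI (-p.k+L) p.l := by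
    intro b
    unfold dyadicI
    rw [zpow_add₀ (by norm_num), zpow_natCast, Set.mem_Ico, Set.mem_Ico,
      show (2:ℝ)^(-p.k) * 2^L * p.l = 2^L * ((2:ℝ)^(-p.k) * p.l) by ring,
      show (2:ℝ)^(-p.k) * 2^L * (p.l+1) = 2^L * ((2:ℝ)^(-p.k) * (p.l+1)) by ring,
      mul_le_mul_iff_right₀ h2, mul_lt_mul_iff_right₀ h2]
  constructor
  · rintro ⟨a, b, ⟨h1, h3⟩, rfl, rfl⟩
    exact ⟨h1, (key b).1 h3⟩
  · rintro ⟨h1, h3⟩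
    refine ⟨x, y/2^L, ⟨h1, ?_⟩, rfl, by field_simp⟩
    rw [key]; convert h3 using 1; field_simp

lemma maxTiles_eq (L : ℕ) (p : Tile) :
    maxTiles (dilate L p.toSet) = {q | ∃ i < 2^L, q = ⟨p.k, p.n, 2^L*p.l+i⟩} := by
  have hsub : ∀ q : Tile, q.toSet ⊆ dilate L p.toSet ↔
      dyadicI q.k q.n ⊆ dyadicI p.k p.n ∧ dyadicI (-q.k) q.l ⊆ dyadicI (-p.k+L) p.l := by
    intro q
    rw [dilate_eq, Tile.toSet, tile_time, tile_freq, Set.prod_subset_prod_iff]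
    constructor
    · rintro (h | h | h)
      · exact h
      · exact absurd (h ▸ dyadic_nonempty q.k q.n) (Set.notMem_empty _)
      · exact absurd (h ▸ dyadic_nonempty (-q.k) q.l) (Set.notMem_empty _)
    · exact fun h => Or.inl h
  ext q
  simp only [maxTiles, Set.mem_ofPred_eq, hsub]
  constructor
  · rintro ⟨⟨h1, h2⟩, hmax⟩
    have hq := hmax ⟨p.k, p.n, q.l * 2^(p.k-q.k).toNat⟩
    rw [dyadic_sub_iff] at h1
    obtain ⟨r, e1, e2⟩ := h1
    have hr : (p.k - q.k).toNat = r := by omega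
    rw [hr] at hq
    have hf : dyadicI (-p.k) (q.l*2^r) ⊆ dyadicI (-q.k) q.l :=
      dyadic_sub_iff.2 ⟨r, by omega, Nat.mul_div_cancel _ (by positivity)⟩
    have := hq ⟨subset_rfl, hf.trans h2⟩ ⟨dyadic_sub_iff.2 ⟨r, e1, e2⟩, hf⟩
    have hk : p.k = q.k := by rw [← this]
    have hn : p.n = q.n := by rw [← this]
    obtain ⟨r', e1', e2'⟩ := dyadic_sub_iff.1 h2
    have hr' : r' = L := by omega
    subst hr'
    refine ⟨q.l % 2^r', Nat.mod_lt _ (by positivity), ?_⟩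
    rcases q with ⟨a, b, c⟩
    simp only at hk hn e2' ⊢
    rw [hk, hn, ← e2', Nat.div_add_mod]
  · rintro ⟨i, hi, rfl⟩
    refine ⟨⟨subset_rfl, dyadic_sub_iff.2 ⟨L, rfl, ?_⟩⟩, ?_⟩
    · simp only
      rw [Nat.mul_add_div (by positivity), Nat.div_eq_of_lt hi, add_zero]
    · rintro ⟨a, b, c⟩ ⟨h1, h2⟩ ⟨h3, h4⟩
      simp only [tile_time, tile_freq] at h1 h2 h3 h4
      obtain ⟨r, e1, e2⟩ := dyadic_sub_iff.1 h1
      obtain ⟨r', e1', e2'⟩ := dyadic_sub_iff.1 h3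
      have : r = 0 := by omega
      subst this
      obtain ⟨s, e3, e4⟩ := dyadic_sub_iff.1 h4
      have : s = 0 := by omega
      subst this
      simp only [pow_zero, Nat.div_one] at e2 e4
      simp only [Nat.cast_zero, add_zero] at e1
      rw [e1, e2, e4]

/-- rank one projection -/
def pr (f : ℝ → ℂ) (k : ℤ) (n l : ℕ) (x : ℝ) : ℂ := av f k n l * (psi (k,n,l) x : ℂ)

lemma piProj_eq (L : ℕ) (k : ℤ) (n t : ℕ) (f : ℝ → ℂ) (x : ℝ) :
    piProj (dilate L (Tile.mk k n t).toSet) f x = ∑ i ∈ Finset.range (2^L), pr f k n (2^L*t+i) x := by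
  classical
  have hset : maxTiles (dilate L (Tile.mk k n t).toSet) =
      (((Finset.range (2^L)).image (fun i => Tile.mk k n (2^L*t+i)) : Finset Tile) : Set Tile) := by
    rw [maxTiles_eq]
    ext q
    simp only [Set.mem_ofPred_eq, Finset.coe_image, Set.mem_image, Finset.coe_range, Set.mem_Iio]
    constructor
    · rintro ⟨i, h, rfl⟩; exact ⟨i, h, rfl⟩
    · rintro ⟨i, h, rfl⟩; exact ⟨i, h, rfl⟩
  unfold piProj projSet
  rw [hset, Finset.tsum_subtype' _ (fun p => projT p f x), Finset.sum_image]
  · simp only [projT_eq, pr]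
  · intro i _ j _ h
    simpa using h

lemma sum_range_two_mul (M : ℕ) (g : ℕ → ℂ) :
    ∑ i ∈ Finset.range (2*M), g i = ∑ i ∈ Finset.range M, (g (2*i) + g (2*i+1)) := by
  induction M with
  | zero => simp
  | succ M ih => rw [show 2*(M+1) = 2*M+1+1 by ring, Finset.sum_range_succ, Finset.sum_range_succ, ih,
      Finset.sum_range_succ]; ring

lemma pr_rec {f : ℝ → ℂ} (hf : Integrable f) (k : ℤ) (n l : ℕ) (x : ℝ) :
    pr f k n (2*l) x + pr f k n (2*l+1) x = pr f (k-1) (2*n) l x + pr f (k-1) (2*n+1) l x := by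
  obtain ⟨h1, h2⟩ := av_rec hf k n l
  simp only [pr, h1, h2, psi_even, psi_odd]
  push_cast; ring

lemma pr_sum {f : ℝ → ℂ} (hf : Integrable f) (x : ℝ) (t : ℕ) (L : ℕ) : ∀ (k : ℤ) (n : ℕ),
    ∑ i ∈ Finset.range (2^L), pr f k n (2^L*t+i) x = ∑ i ∈ Finset.range (2^L), pr f (k-L) (2^L*n+i) t x := by
  induction L with
  | zero => intro k n; simp
  | succ L ih =>
    intro k n
    rw [show 2^(L+1) = 2*2^L by ring, sum_range_two_mul]
    have : ∀ i, pr f k n (2*2^L*t+2*i) x + pr f k n (2*2^L*t+(2*i+1)) x =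
        pr f (k-1) (2*n) (2^L*t+i) x + pr f (k-1) (2*n+1) (2^L*t+i) x := by
      intro i
      rw [← pr_rec hf, show 2*2^L*t+2*i = 2*(2^L*t+i) by ring, show 2*2^L*t+(2*i+1) = 2*(2^L*t+i)+1 by ring]
    simp only [this]
    rw [Finset.sum_add_distrib, ih, ih, two_mul (2^L), Finset.sum_range_add]
    congr 1
    · apply Finset.sum_congr rfl
      intro i _
      congr 1
      · push_cast; ring
      · ring
    · apply Finset.sum_congr rfl
      intro i _
      congr 1
      · push_cast; ring
      · ring

/-- small bitiles under a bitile -/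
def Qof (L : ℕ) (P : Bitile) (i : ℕ) : Nd := (P.k - L, 2^L*P.n+i, P.l)

/-- integrand coefficient -/
def cval (L : ℕ) (A1 A2 A3 : ℤ → ℕ → ℕ → ℂ) (Q : Nd) : ℂ :=
  sgn (Q.2.1/2^L) * A1 (Q.1+(L+1)) (Q.2.1/2^(L+1)) (2*Q.2.2+1) * (A2 Q.1 Q.2.1 (2*Q.2.2) * A3 Q.1 Q.2.1 (2*Q.2.2))

lemma psi_pair (L : ℕ) (k : ℤ) (n l i : ℕ) (hi : i < 2^(L+1)) (x : ℝ)
    (hx : x ∈ dyadicI (k-(L+1:ℕ)) (2^(L+1)*n+i)) :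
    ((psi (k,n,2*l) x * psi (k,n,2*l+1) x : ℝ) : ℂ) = sgn ((2^(L+1)*n+i)/2^L) := by
  have h1 := dyadic_nest (r := L) hx
  rw [show k - ((L+1:ℕ):ℤ) + L = k - 1 by push_cast; ring] at h1
  have hm : (2^(L+1)*n+i)/2^L = 2*n + i/2^L := by
    rw [show 2^(L+1)*n+i = i + 2^L * (2*n) by ring, Nat.add_mul_div_left _ _ (by positivity)]; ring
  have hi2 : i/2^L < 2 := by
    rw [Nat.div_lt_iff_lt_mul (by positivity)]; rw [pow_succ] at hi; linarith
  rw [hm] at h1 ⊢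
  have hsq : psi (k,n,2*l) x * psi (k,n,2*l+1) x = psi (k-1,2*n,l) x * psi (k-1,2*n,l) x
    - psi (k-1,2*n+1,l) x * psi (k-1,2*n+1,l) x := by rw [psi_even, psi_odd]; ring
  rw [hsq, psi_sq, psi_sq]
  have h01 : ∀ z : ℕ, z < 2 → z = 0 ∨ z = 1 := fun z hz => by omega
  obtain h | h : i/2^L = 0 ∨ i/2^L = 1 := h01 _ hi2
  · rw [h, add_zero] at h1 ⊢
    rw [Set.indicator_of_mem h1, Set.indicator_of_notMem]
    · simp [sgn]
    · intro h'
      have := dyadic_unique h1 h'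
      simp only at this
      omega
  · rw [h] at h1 ⊢
    rw [Set.indicator_of_notMem, Set.indicator_of_mem h1]
    · have : (2*n+1)%2 = 1 := by omega
      simp [sgn, this]
    · intro h'
      have := dyadic_unique h1 h'
      simp only at this
      omega

/-- the integrand -/
def term (L : ℕ) (f1 f2 f3 : ℝ → ℂ) (P : Bitile) (x : ℝ) : ℂ :=
  (P.phid x : ℂ) * projT P.u f1 x * piProj (dilate L P.d.toSet) f2 x * piProj (dilate L P.d.toSet) f3 x

lemma term_eq (L : ℕ) {f1 f2 f3 : ℝ → ℂ} (h2 : Integrable f2) (h3 : Integrable f3) (P : Bitile) (x : ℝ) :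
    term (L+1) f1 f2 f3 P x = ∑ i ∈ Finset.range (2^(L+1)),
      (dyadicI (Qof (L+1) P i).1 (Qof (L+1) P i).2.1).indicator (fun _ => cval L (av f1) (av f2) (av f3) (Qof (L+1) P i)) x := by
  obtain ⟨k, n, l⟩ := P
  unfold term
  rw [phid_eq]
  simp only [Bitile.d, Bitile.u, projT_eq]
  rw [piProj_eq, piProj_eq, pr_sum h2, pr_sum h3]
  have hdiag : (∑ i ∈ Finset.range (2^(L+1)), pr f2 (k-(L+1:ℕ)) (2^(L+1)*n+i) (2*l) x) *
      (∑ i ∈ Finset.range (2^(L+1)), pr f3 (k-(L+1:ℕ)) (2^(L+1)*n+i) (2*l) x) =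
      ∑ i ∈ Finset.range (2^(L+1)), pr f2 (k-(L+1:ℕ)) (2^(L+1)*n+i) (2*l) x * pr f3 (k-(L+1:ℕ)) (2^(L+1)*n+i) (2*l) x := by
    rw [Finset.sum_mul_sum]
    apply Finset.sum_congr rfl
    intro i hi
    rw [Finset.sum_eq_single i]
    · intro j _ hj
      have := psi_orth_time (k-(L+1:ℕ)) (2^(L+1)*n+i) (2^(L+1)*n+j) (2*l) (2*l) (by omega) x
      have hc : (psi (k-(L+1:ℕ), 2^(L+1)*n+i, 2*l) x : ℂ) * (psi (k-(L+1:ℕ), 2^(L+1)*n+j, 2*l) x : ℂ) = 0 := by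
        exact_mod_cast this
      simp only [pr]
      linear_combination (av f2 (k-(L+1:ℕ)) (2^(L+1)*n+i) (2*l) * av f3 (k-(L+1:ℕ)) (2^(L+1)*n+j) (2*l)) * hc
    · intro h; exact absurd hi h
  rw [mul_assoc, hdiag, Finset.mul_sum]
  apply Finset.sum_congr rfl
  intro i hi
  simp only [Qof]
  have hs := psi_sq (k-(L+1:ℕ), 2^(L+1)*n+i, 2*l) x
  by_cases hx : x ∈ dyadicI (k-(L+1:ℕ)) (2^(L+1)*n+i)
  · have hp := psi_pair L k n l i (Finset.mem_range.1 hi) x hx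
    rw [Set.indicator_of_mem hx]
    simp only at hs
    rw [Set.indicator_of_mem hx] at hs
    have hs' : (psi (k-(L+1:ℕ), 2^(L+1)*n+i, 2*l) x : ℂ) * (psi (k-(L+1:ℕ), 2^(L+1)*n+i, 2*l) x : ℂ) = 1 := by
      exact_mod_cast hs
    unfold cval
    simp only
    rw [← hp, show (2^(L+1)*n+i)/2^(L+1) = n by
      rw [Nat.mul_add_div (by positivity), Nat.div_eq_of_lt (Finset.mem_range.1 hi), add_zero],
      show k - ((L+1:ℕ):ℤ) + (L+1) = k by push_cast; ring]
    simp only [pr]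
    push_cast at hs' ⊢
    linear_combination (psi (k,n,2*l) x : ℂ) * (av f1 k n (2*l+1) * (psi (k,n,2*l+1) x : ℂ)) *
      av f2 (k-(L+1)) (2^(L+1)*n+i) (2*l) * av f3 (k-(L+1)) (2^(L+1)*n+i) (2*l) * hs'
  · rw [Set.indicator_of_notMem hx]
    simp only [pr]
    rw [psi_supp (k-(L+1:ℕ), 2^(L+1)*n+i, 2*l) hx]; simp

lemma ind_int (j : ℤ) (m : ℕ) (c : ℂ) : Integrable ((dyadicI j m).indicator (fun _ : ℝ => c)) := by
  rw [integrable_indicator_iff (dyadic_measurable _ _)]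
  apply integrableOn_const
  · rw [dyadic_vol]; exact ENNReal.ofReal_ne_top
  · exact enorm_ne_top

lemma term_int (L : ℕ) {f1 f2 f3 : ℝ → ℂ} (h2 : Integrable f2) (h3 : Integrable f3) (P : Bitile) :
    Integrable (term (L+1) f1 f2 f3 P) := by
  have : term (L+1) f1 f2 f3 P = fun x => ∑ i ∈ Finset.range (2^(L+1)),
      (dyadicI (Qof (L+1) P i).1 (Qof (L+1) P i).2.1).indicator (fun _ => cval L (av f1) (av f2) (av f3) (Qof (L+1) P i)) x := by
    ext x; exact term_eq L h2 h3 P x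
  rw [this]
  exact integrable_finsetSum _ (fun i _ => ind_int _ _ _)

lemma ind_integral (j : ℤ) (m : ℕ) (c : ℂ) : ∫ x, (dyadicI j m).indicator (fun _ : ℝ => c) x = ((2:ℝ)^j : ℝ) * c := by
  rw [integral_indicator (dyadic_measurable _ _), setIntegral_const, Measure.real, dyadic_vol,
    ENNReal.toReal_ofReal (by positivity)]
  rfl

lemma term_integral (L : ℕ) {f1 f2 f3 : ℝ → ℂ} (h2 : Integrable f2) (h3 : Integrable f3) (P : Bitile) :
    ∫ x, term (L+1) f1 f2 f3 P x = ∑ i ∈ Finset.range (2^(L+1)), nval L (av f1) (av f2) (av f3) (Qof (L+1) P i) := by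
  simp only [term_eq L h2 h3]
  rw [integral_finsetSum _ (fun i _ => ind_int _ _ _)]
  simp only [ind_integral]
  apply Finset.sum_congr rfl
  intro i _
  simp only [nval, cval]
  push_cast; rfl

lemma term_norm (L : ℕ) {f1 f2 f3 : ℝ → ℂ} (h2 : Integrable f2) (h3 : Integrable f3) (P : Bitile) :
    ∫ x, ‖term (L+1) f1 f2 f3 P x‖ ≤ ∑ i ∈ Finset.range (2^(L+1)), ‖nval L (av f1) (av f2) (av f3) (Qof (L+1) P i)‖ := by
  have hn : ∀ Q, ∫ x, ‖(dyadicI Q.1 Q.2.1).indicator (fun _ : ℝ => cval L (av f1) (av f2) (av f3) Q) x‖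
      = ‖nval L (av f1) (av f2) (av f3) Q‖ := by
    intro Q
    have : ∀ x, ‖(dyadicI Q.1 Q.2.1).indicator (fun _ : ℝ => cval L (av f1) (av f2) (av f3) Q) x‖ =
       (dyadicI Q.1 Q.2.1).indicator (fun _ : ℝ => ‖cval L (av f1) (av f2) (av f3) Q‖) x := by
      intro x; exact norm_indicator_eq_indicator_norm _ _
    simp only [this]
    rw [integral_indicator (dyadic_measurable _ _), setIntegral_const, Measure.real, dyadic_vol,
      ENNReal.toReal_ofReal (by positivity)]
    simp only [nval, cval]
    rw [smul_eq_mul, norm_mul ((2:ℂ)^Q.1)]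
    congr 1
    simp
  calc _ ≤ ∫ x, ∑ i ∈ Finset.range (2^(L+1)), ‖(dyadicI (Qof (L+1) P i).1 (Qof (L+1) P i).2.1).indicator (fun _ => cval L (av f1) (av f2) (av f3) (Qof (L+1) P i)) x‖ := by
        apply integral_mono (term_int L h2 h3 P).norm
        · exact integrable_finsetSum _ (fun i _ => (ind_int _ _ _).norm)
        · intro x
          simp only
          rw [term_eq L h2 h3]
          exact norm_sum_le _ _
    _ = _ := by
        rw [integral_finsetSum _ (fun i _ => (ind_int _ _ _).norm)]
        simp only [hn]




lemma strip_iff (N : ℕ) (P : Bitile) : P ∈ stripBitiles N ↔ (2:ℝ)^(1-P.k) * (P.l+1) ≤ (2:ℝ)^N := by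
  have h2 : (0:ℝ) < (2:ℝ)^(1-P.k) := by positivity
  simp only [stripBitiles, Set.mem_ofPred_eq, Bitile.freqI]
  rw [Set.Ico_subset_Ico_iff (by nlinarith)]
  constructor
  · exact fun h => h.2
  · exact fun h => ⟨by positivity, h⟩

open Classical in
/-- the set of small bitiles -/
def QS (L : ℕ) (s : Finset Bitile) : Finset Nd :=
  (s ×ˢ Finset.range (2^L)).image (fun z => Qof L z.1 z.2)

lemma Qof_inj (L : ℕ) {P P' : Bitile} {i i' : ℕ} (hi : i < 2^L) (hi' : i' < 2^L) (h : Qof L P i = Qof L P' i') :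
    P = P' ∧ i = i' := by
  obtain ⟨k, n, l⟩ := P
  obtain ⟨k', n', l'⟩ := P'
  simp only [Qof, Prod.mk.injEq] at h
  obtain ⟨h1, h2, h3⟩ := h
  have hk : k = k' := by omega
  have hn : n = n' := by
    have : (2^L*n+i)/2^L = (2^L*n'+i')/2^L := by rw [h2]
    rwa [Nat.mul_add_div (by positivity), Nat.mul_add_div (by positivity), Nat.div_eq_of_lt hi, Nat.div_eq_of_lt hi'] at this
  subst hk hn h3
  exact ⟨rfl, by omega⟩

lemma QS_sum {M : Type*} [AddCommMonoid M] (L : ℕ) (s : Finset Bitile) (g : Nd → M) :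
    ∑ P ∈ s, ∑ i ∈ Finset.range (2^L), g (Qof L P i) = ∑ Q ∈ QS L s, g Q := by
  classical
  unfold QS
  rw [Finset.sum_image, Finset.sum_product]
  rintro ⟨P, i⟩ h ⟨P', i'⟩ h' he
  simp only [Finset.coe_product, Set.mem_prod, Finset.mem_coe, Finset.mem_range] at h h'
  obtain ⟨a, b⟩ := Qof_inj L h.2 h'.2 he
  exact Prod.ext a b

lemma mem_QS {L : ℕ} {s : Finset Bitile} {Q : Nd} : Q ∈ QS L s ↔ (⟨Q.1+L, Q.2.1/2^L, Q.2.2⟩ : Bitile) ∈ s := by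
  classical
  unfold QS
  rw [Finset.mem_image]
  constructor
  · rintro ⟨⟨P, i⟩, h, rfl⟩
    rw [Finset.mem_product, Finset.mem_range] at h
    obtain ⟨k, n, l⟩ := P
    simp only [Qof]
    rw [Nat.mul_add_div (by positivity), Nat.div_eq_of_lt h.2, add_zero, sub_add_cancel]
    exact h.1
  · intro h
    refine ⟨(⟨Q.1+L, Q.2.1/2^L, Q.2.2⟩, Q.2.1 % 2^L), ?_, ?_⟩
    · rw [Finset.mem_product, Finset.mem_range]
      exact ⟨h, Nat.mod_lt _ (by positivity)⟩
    · obtain ⟨a, b, c⟩ := Q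
      simp only [Qof]
      rw [Nat.div_add_mod, add_sub_cancel_right]

lemma av_bound (f : ℝ → ℂ) (k : ℤ) (n l : ℕ) (hf : Integrable f) : ‖av f k n l‖ ≤ (2:ℝ)^(-k) * ∫ x, ‖f x‖ := by
  unfold av
  rw [norm_mul, Complex.norm_real, Real.norm_of_nonneg (by positivity)]
  apply mul_le_mul_of_nonneg_left _ (by positivity)
  refine (norm_integral_le_integral_norm _).trans ?_
  apply integral_mono (int_psi hf _).norm hf.norm
  intro x
  simp only [norm_mul, Complex.norm_real]
  have := psi_abs (k,n,l) x
  rw [← Real.norm_eq_abs] at this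
  exact mul_le_of_le_one_right (norm_nonneg _) this

lemma bess_scale {A e} (h : Bess A e) (k : ℤ) (F : Finset Nd) (hF : ∀ Q ∈ F, Q.1 = k) :
    ∑ Q ∈ F, (2:ℝ)^Q.1 * ‖A Q.1 Q.2.1 (2*Q.2.2)‖^2 ≤ e := by
  classical
  have := h (F.image (fun Q => (Q.1, Q.2.1, 2*Q.2.2))) (by
    intro p hp q hq hpq
    obtain ⟨p', hp', rfl⟩ := Finset.mem_image.1 hp
    obtain ⟨q', hq', rfl⟩ := Finset.mem_image.1 hq
    obtain ⟨r, a, b, c⟩ := hpq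
    simp only [hF p' hp', hF q' hq'] at a b c ⊢
    have : r = 0 := by omega
    subst this
    simp only [pow_zero, Nat.div_one] at b c
    rw [b, c])
  rw [Finset.sum_image] at this
  · exact this
  · rintro ⟨a, b, c⟩ _ ⟨a', b', c'⟩ _ h
    simp only [Prod.mk.injEq] at h ⊢
    exact ⟨h.1, h.2.1, by omega⟩

lemma term_summable (L N : ℕ) {f1 f2 f3 : ℝ → ℂ} (h1 : Integrable f1) (h2 : Integrable f2) (h3 : Integrable f3)
    (e2 e3 : ℝ) (b2 : Bess (av f2) e2) (b3 : Bess (av f3) e3) :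
    Summable (fun P : stripBitiles N => ∫ x, ‖term (L+1) f1 f2 f3 P x‖) := by
  classical
  set M := ∫ x, ‖f1 x‖ with hM
  have M0 : 0 ≤ M := integral_nonneg (fun _ => norm_nonneg _)
  have hnv : ∀ Q : Nd, ‖nval L (av f1) (av f2) (av f3) Q‖ ≤ (2:ℝ)^(-(Q.1+(L+1))) * M *
      ((2:ℝ)^Q.1 * ‖av f2 Q.1 Q.2.1 (2*Q.2.2)‖^2 + (2:ℝ)^Q.1 * ‖av f3 Q.1 Q.2.1 (2*Q.2.2)‖^2) := by
    intro Q
    have hA := av_bound f1 (Q.1+(L+1)) (Q.2.1/2^(L+1)) (2*Q.2.2+1) h1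
    unfold nval
    rw [norm_mul, norm_mul, norm_mul, norm_mul, norm_sgn, one_mul, norm_zpow]
    simp only [RCLike.norm_ofNat]
    set x := ‖av f2 Q.1 Q.2.1 (2*Q.2.2)‖
    set y := ‖av f3 Q.1 Q.2.1 (2*Q.2.2)‖
    have hxy : x * y ≤ x^2 + y^2 := by nlinarith [sq_nonneg (x-y), sq_nonneg x, sq_nonneg y]
    have hxy0 : 0 ≤ x * y := by positivity
    calc _ ≤ (2:ℝ)^Q.1 * ((2:ℝ)^(-(Q.1+(L+1))) * M * (x^2+y^2)) := by
          apply mul_le_mul_of_nonneg_left _ (by positivity)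
          exact mul_le_mul hA hxy hxy0 (by positivity)
      _ = _ := by ring
  have e20 : 0 ≤ e2 := by simpa using b2 ∅ (by simp)
  have e30 : 0 ≤ e3 := by simpa using b3 ∅ (by simp)
  apply summable_of_sum_le (c := M * (e2+e3) * (((2:ℝ)^N)^(1:ℝ) * (1/(1-(2:ℝ)^(-(1:ℝ))))))
  · intro P; exact integral_nonneg (fun _ => norm_nonneg _)
  · intro u
    set s := u.map (Function.Embedding.subtype _) with hs
    have hsm : ∀ P ∈ s, P ∈ stripBitiles N := by
      intro P hP
      obtain ⟨Q, _, rfl⟩ := Finset.mem_map.1 hP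
      exact Q.2
    calc ∑ P ∈ u, ∫ x, ‖term (L+1) f1 f2 f3 P x‖ = ∑ P ∈ s, ∫ x, ‖term (L+1) f1 f2 f3 P x‖ := by
          rw [hs, Finset.sum_map]; rfl
      _ ≤ ∑ P ∈ s, ∑ i ∈ Finset.range (2^(L+1)), ‖nval L (av f1) (av f2) (av f3) (Qof (L+1) P i)‖ :=
          Finset.sum_le_sum (fun P _ => term_norm L h2 h3 P)
      _ = ∑ Q ∈ QS (L+1) s, ‖nval L (av f1) (av f2) (av f3) Q‖ := QS_sum (L+1) s (fun Q => ‖nval L (av f1) (av f2) (av f3) Q‖)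
      _ = ∑ k ∈ (QS (L+1) s).image (fun Q => -(Q.1+(L+1:ℤ))), ∑ Q ∈ QS (L+1) s with -(Q.1+(L+1:ℤ)) = k, ‖nval L (av f1) (av f2) (av f3) Q‖ := by
          rw [Finset.sum_fiberwise_of_maps_to]
          intro Q hQ
          exact Finset.mem_image_of_mem _ hQ
      _ ≤ ∑ k ∈ (QS (L+1) s).image (fun Q => -(Q.1+(L+1:ℤ))), ((2:ℝ)^k)^(1:ℝ) * (M * (e2+e3)) := by
          apply Finset.sum_le_sum
          intro k hk
          refine (Finset.sum_le_sum (fun Q _ => hnv Q)).trans ?_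
          rw [Finset.sum_congr rfl (g := fun Q => (2:ℝ)^k * M * ((2:ℝ)^Q.1 * ‖av f2 Q.1 Q.2.1 (2*Q.2.2)‖^2 + (2:ℝ)^Q.1 * ‖av f3 Q.1 Q.2.1 (2*Q.2.2)‖^2))
            (fun Q hQ => by rw [(Finset.mem_filter.1 hQ).2])]
          rw [← Finset.mul_sum, Finset.sum_add_distrib, Real.rpow_one, ← mul_assoc]
          apply mul_le_mul_of_nonneg_left _ (by positivity)
          have hsc : ∀ Q ∈ (QS (L+1) s).filter (fun Q => -(Q.1+(L+1:ℤ)) = k), Q.1 = -k - (L+1) := by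
            intro Q hQ
            have := (Finset.mem_filter.1 hQ).2
            omega
          exact add_le_add (bess_scale b2 _ _ hsc) (bess_scale b3 _ _ hsc)
      _ ≤ _ := by
          rw [← Finset.sum_mul, mul_comm]
          apply mul_le_mul_of_nonneg_left _ (by positivity)
          apply geom_levels (by positivity) (by norm_num)
          intro k hk
          obtain ⟨Q, hQ, rfl⟩ := Finset.mem_image.1 hk
          have h := (strip_iff N _).1 (hsm _ (mem_QS.1 hQ))
          simp only at h
          refine le_trans ?_ h
          have hz : (2:ℝ)^(-(Q.1+(L+1:ℤ))) ≤ (2:ℝ)^(1-(Q.1+(L+1:ℕ):ℤ)) :=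
            zpow_le_zpow_right₀ (by norm_num) (by push_cast; omega)
          refine hz.trans ?_
          have : (0:ℝ) ≤ Q.2.2 := by positivity
          exact le_mul_of_one_le_right (by positivity) (by linarith)

open Classical in
/-- exhausting boxes -/
def tK (N K : ℕ) : Finset Bitile :=
  ((Finset.Icc (-(K:ℤ)) K ×ˢ (Finset.range (2^(2*K)) ×ˢ Finset.range (2^(N+K)))).image
    (fun z => (⟨z.1, z.2.1, z.2.2⟩ : Bitile))).filter (fun P => P.n < 2^((K:ℤ)-P.k).toNat)

lemma strip_l {N K : ℕ} {P : Bitile} (h : P ∈ stripBitiles N) (hk : P.k ≤ K) : P.l < 2^(N+K) := by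
  rw [strip_iff] at h
  have h1 : (2:ℝ)^(-(K:ℤ)) ≤ (2:ℝ)^(1-P.k) := zpow_le_zpow_right₀ (by norm_num) (by omega)
  have h2 : (2:ℝ)^(-(K:ℤ)) * (P.l+1) ≤ 2^N := le_trans (mul_le_mul_of_nonneg_right h1 (by positivity)) h
  rw [zpow_neg, zpow_natCast, inv_mul_le_iff₀ (by positivity), ← pow_add] at h2
  have : P.l + 1 ≤ 2^(K+N) := by exact_mod_cast h2
  rw [add_comm N K]; omega

lemma mem_tK {N K : ℕ} {P : Bitile} (h : P ∈ stripBitiles N) :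
    P ∈ tK N K ↔ -(K:ℤ) ≤ P.k ∧ P.k ≤ K ∧ P.n < 2^((K:ℤ)-P.k).toNat := by
  classical
  unfold tK
  simp only [Finset.mem_filter, Finset.mem_image, Finset.mem_product, Finset.mem_Icc, Finset.mem_range]
  constructor
  · rintro ⟨⟨z, ⟨⟨a, b⟩, c⟩, rfl⟩, d⟩
    exact ⟨a, b, d⟩
  · rintro ⟨a, b, c⟩
    refine ⟨⟨(P.k, P.n, P.l), ⟨⟨a, b⟩, ?_, strip_l h b⟩, rfl⟩, c⟩
    exact lt_of_lt_of_le c (Nat.pow_le_pow_right (by norm_num) (by omega))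

open Classical in
/-- boxes in the strip -/
def sK (N K : ℕ) : Finset Bitile := (tK N K).filter (· ∈ stripBitiles N)

lemma mem_sK {N K : ℕ} {P : Bitile} : P ∈ sK N K ↔ -(K:ℤ) ≤ P.k ∧ P.k ≤ K ∧ P.n < 2^((K:ℤ)-P.k).toNat ∧
    P ∈ stripBitiles N := by
  classical
  unfold sK
  rw [Finset.mem_filter]
  constructor
  · rintro ⟨h, h'⟩
    have := (mem_tK h').1 h
    exact ⟨this.1, this.2.1, this.2.2, h'⟩
  · rintro ⟨a, b, c, d⟩
    exact ⟨(mem_tK d).2 ⟨a, b, c⟩, d⟩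

instance : Countable Bitile := by
  apply Function.Injective.countable (f := fun P : Bitile => (P.k, P.n, P.l))
  rintro ⟨a, b, c⟩ ⟨a', b', c'⟩ h
  simp only [Prod.mk.injEq] at h
  obtain ⟨rfl, rfl, rfl⟩ := h
  rfl

theorem form_bound (L N : ℕ) {f1 f2 f3 : ℝ → ℂ} (h1 : Integrable f1) (h2 : Integrable f2) (h3 : Integrable f3)
    (e2 e3 : ℝ) (b2 : Bess (av f2) e2) (b3 : Bess (av f3) e3) (B : ℝ)
    (hB : ∀ K : ℕ, ‖∑ Q ∈ QS (L+1) (sK N K), nval L (av f1) (av f2) (av f3) Q‖ ≤ B) :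
    ‖quartileForm (L+1) N f1 f2 f3‖ ≤ B := by
  classical
  have hs := hasSum_integral_of_summable_integral_norm
    (F := fun (P : stripBitiles N) x => term (L+1) f1 f2 f3 P x) (μ := volume)
    (fun P => term_int L h2 h3 P) (term_summable L N h1 h2 h3 e2 e3 b2 b3)
  have hq : quartileForm (L+1) N f1 f2 f3 = ∫ x, ∑' P : stripBitiles N, term (L+1) f1 f2 f3 P x := rfl
  rw [hq]
  have ht : Filter.Tendsto (fun K : ℕ => (tK N K).subtype (· ∈ stripBitiles N)) Filter.atTop Filter.atTop := by
    apply Filter.tendsto_atTop_finset_of_monotone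
    · intro K K' hK
      rintro ⟨P, hP⟩ h
      rw [Finset.mem_subtype] at h ⊢
      rw [mem_tK hP] at h ⊢
      refine ⟨by omega, by omega, lt_of_lt_of_le h.2.2 (Nat.pow_le_pow_right (by norm_num) (by omega))⟩
    · rintro ⟨P, hP⟩
      refine ⟨P.k.natAbs + P.n, ?_⟩
      rw [Finset.mem_subtype, mem_tK hP]
      refine ⟨by omega, by omega, ?_⟩
      refine lt_of_lt_of_le (Nat.lt_two_pow_self (n := P.n)) (Nat.pow_le_pow_right (by norm_num) (by omega))
  have hlim := (Filter.Tendsto.comp hs ht).norm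
  refine le_of_tendsto' hlim (fun K => ?_)
  simp only [Function.comp]
  rw [Finset.sum_subtype_eq_sum_filter (p := (· ∈ stripBitiles N)) (f := fun P => ∫ x, term (L+1) f1 f2 f3 P x)]
  simp only [term_integral L h2 h3]
  rw [QS_sum (L+1) _ (fun Q => nval L (av f1) (av f2) (av f3) Q)]
  exact hB K




lemma disj_of_anti (F : Finset Nd) (h0 : ∀ p ∈ F, p.2.2 = 0) (hF : ∀ p ∈ F, ∀ q ∈ F, nle p q → p = q) :
    Set.PairwiseDisjoint (F : Set Nd) (fun p : Nd => dyadicI p.1 p.2.1) := by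
  intro p hp q hq hne
  by_contra hnd
  obtain ⟨x, hx1, hx2⟩ := Set.not_disjoint_iff.1 hnd
  apply hne
  clear hnd hne
  wlog hle : p.1 ≤ q.1 generalizing p q
  · exact (this hq hp hx2 hx1 (by omega)).symm
  obtain ⟨d, hd⟩ : ∃ d : ℕ, q.1 = p.1 + d := ⟨(q.1 - p.1).toNat, by omega⟩
  apply hF p hp q hq
  refine ⟨d, hd, ?_, ?_⟩
  · have := dyadic_nest (r := d) hx1
    rw [← hd] at this
    exact dyadic_unique this hx2
  · rw [h0 p hp, h0 q hq, Nat.zero_div]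

/-- intervals with large density -/
def bad (E : Set ℝ) (c : ℝ) : Set (ℤ × ℕ) := {z | c * (2:ℝ)^z.1 < (volume (E ∩ dyadicI z.1 z.2)).toReal}

/-- exceptional set -/
def Om (E : Set ℝ) (c : ℝ) : Set ℝ := ⋃ z : bad E c, dyadicI z.1.1 z.1.2

lemma Om_meas (E : Set ℝ) (c : ℝ) : MeasurableSet (Om E c) :=
  MeasurableSet.iUnion (fun _ => dyadic_measurable _ _)

lemma Om_vol {E : Set ℝ} (hE : MeasurableSet E) (hv : volume E ≠ ∞) {c : ℝ} (hc : 0 < c) :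
    volume (Om E c) ≤ ENNReal.ofReal ((volume E).toReal / c) := by
  classical
  unfold Om
  rw [Set.iUnion_eq_iUnion_finset, Directed.measure_iUnion]
  · apply iSup_le
    intro F
    set G : Finset Nd := F.image (fun z => (z.1.1, z.1.2, 0)) with hG
    have hG0 : ∀ p ∈ maxl G, p.2.2 = 0 ∧ c * (2:ℝ)^p.1 ≤ (volume (E ∩ dyadicI p.1 p.2.1)).toReal := by
      intro p hp
      obtain ⟨z, _, rfl⟩ := Finset.mem_image.1 (mem_maxl.1 hp).1
      exact ⟨rfl, le_of_lt z.2⟩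
    have hd := disj_of_anti (maxl G) (fun p hp => (hG0 p hp).1) (maxl_anti G)
    have hsub : (⋃ z ∈ F, dyadicI z.1.1 z.1.2) ⊆ ⋃ p ∈ maxl G, dyadicI p.1 p.2.1 := by
      apply Set.iUnion₂_subset
      intro z hz
      obtain ⟨q, hq, r, h1, h2, _⟩ := exists_maxl G (p := (z.1.1, z.1.2, 0)) (Finset.mem_image_of_mem _ hz)
      refine subset_trans ?_ (Set.subset_biUnion_of_mem (u := fun p : Nd => dyadicI p.1 p.2.1) hq)
      simp only at h1 h2 ⊢
      rw [h1, ← h2]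
      exact dyadic_sub
    refine (measure_mono hsub).trans ?_
    rw [measure_biUnion_finset hd (fun p _ => dyadic_measurable _ _)]
    simp only [dyadic_vol]
    rw [← ENNReal.ofReal_sum_of_nonneg (fun _ _ => by positivity)]
    apply ENNReal.ofReal_le_ofReal
    rw [le_div_iff₀ hc, Finset.sum_mul]
    have hfin : ∀ p : Nd, volume (E ∩ dyadicI p.1 p.2.1) ≠ ∞ := fun p =>
      ne_top_of_le_ne_top hv (measure_mono Set.inter_subset_left)
    calc ∑ p ∈ maxl G, (2:ℝ)^p.1 * c ≤ ∑ p ∈ maxl G, (volume (E ∩ dyadicI p.1 p.2.1)).toReal :=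
          Finset.sum_le_sum (fun p hp => by rw [mul_comm]; exact (hG0 p hp).2)
      _ = (∑ p ∈ maxl G, volume (E ∩ dyadicI p.1 p.2.1)).toReal := by
          rw [ENNReal.toReal_sum (fun p _ => hfin p)]
      _ = (volume (⋃ p ∈ maxl G, E ∩ dyadicI p.1 p.2.1)).toReal := by
          rw [measure_biUnion_finset]
          · intro p hp q hq hpq
            exact (hd hp hq hpq).mono Set.inter_subset_right Set.inter_subset_right
          · exact fun p _ => hE.inter (dyadic_measurable _ _)
      _ ≤ (volume E).toReal := by
          apply ENNReal.toReal_mono hv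
          apply measure_mono
          exact Set.iUnion₂_subset (fun p _ => Set.inter_subset_left)
  · intro F F'
    refine ⟨F ∪ F', ?_, ?_⟩
    · exact Set.biUnion_subset_biUnion_left (fun z hz => Finset.mem_union_left _ hz)
    · exact Set.biUnion_subset_biUnion_left (fun z hz => Finset.mem_union_right _ hz)

section funcs
variable {f : ℝ → ℂ} {E : Set ℝ}

lemma f_memLp (hf : Measurable f) (hE : MeasurableSet E) (hv : volume E ≠ ∞)
    (hb : ∀ x, ‖f x‖ ≤ E.indicator 1 x) (q : ℝ≥0∞) : MemLp f q := by
  have h1 : MemLp (E.indicator (1 : ℝ → ℝ)) q := memLp_indicator_const q hE 1 (Or.inr hv)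
  refine h1.mono' hf.aestronglyMeasurable (Filter.Eventually.of_forall hb)

lemma f_sq (hf : Measurable f) (hE : MeasurableSet E) (hv : volume E ≠ ∞)
    (hb : ∀ x, ‖f x‖ ≤ E.indicator 1 x) : ∫ x, ‖f x‖^2 ≤ (volume E).toReal := by
  have : (volume E).toReal = ∫ x, E.indicator (1 : ℝ → ℝ) x := by
    rw [integral_indicator_one hE]; rfl
  rw [this]
  apply integral_mono
  · exact (f_memLp hf hE hv hb 2).integrable_norm_pow (by norm_num)
  · exact (memLp_one_iff_integrable.1 (memLp_indicator_const 1 hE (1:ℝ) (Or.inr hv)))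
  · intro x
    simp only
    have := hb x
    by_cases hx : x ∈ E
    · rw [Set.indicator_of_mem hx] at this ⊢
      simp only [Pi.one_apply] at this ⊢
      nlinarith [norm_nonneg (f x)]
    · rw [Set.indicator_of_notMem hx] at this ⊢
      have h0 : ‖f x‖ = 0 := le_antisymm this (norm_nonneg _)
      rw [h0]; norm_num

lemma av_loc (hf : Measurable f) (hE : MeasurableSet E) (hv : volume E ≠ ∞)
    (hb : ∀ x, ‖f x‖ ≤ E.indicator 1 x) (k : ℤ) (n l : ℕ) :
    ‖av f k n l‖ ≤ (2:ℝ)^(-k) * (volume (E ∩ dyadicI k n)).toReal := by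
  have hi : Integrable f := memLp_one_iff_integrable.1 (f_memLp hf hE hv hb 1)
  unfold av
  rw [norm_mul, Complex.norm_real, Real.norm_of_nonneg (by positivity)]
  apply mul_le_mul_of_nonneg_left _ (by positivity)
  refine (norm_integral_le_integral_norm _).trans ?_
  have hm : MeasurableSet (E ∩ dyadicI k n) := hE.inter (dyadic_measurable _ _)
  have hv' : volume (E ∩ dyadicI k n) ≠ ∞ := ne_top_of_le_ne_top hv (measure_mono Set.inter_subset_left)
  have : (volume (E ∩ dyadicI k n)).toReal = ∫ x, (E ∩ dyadicI k n).indicator (1 : ℝ → ℝ) x := by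
    rw [integral_indicator_one hm]; rfl
  rw [this]
  apply integral_mono (int_psi hi _).norm
  · exact (memLp_one_iff_integrable.1 (memLp_indicator_const 1 hm (1:ℝ) (Or.inr hv')))
  · intro x
    simp only
    rw [norm_mul, Complex.norm_real]
    have h1 := hb x
    have h2 := psi_abs (k,n,l) x
    rw [← Real.norm_eq_abs] at h2
    by_cases hx : x ∈ dyadicI k n
    · by_cases hx' : x ∈ E
      · rw [Set.indicator_of_mem (show x ∈ E ∩ dyadicI k n from ⟨hx', hx⟩)]
        rw [Set.indicator_of_mem hx'] at h1
        exact mul_le_one₀ h1 (norm_nonneg _) h2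
      · rw [Set.indicator_of_notMem (fun h => hx' h.1)]
        rw [Set.indicator_of_notMem hx'] at h1
        rw [le_antisymm h1 (norm_nonneg _), zero_mul]
    · rw [psi_supp (k,n,l) hx, norm_zero, mul_zero]
      exact Set.indicator_nonneg (fun _ _ => zero_le_one) _

lemma av_one (hf : Measurable f) (hE : MeasurableSet E) (hv : volume E ≠ ∞)
    (hb : ∀ x, ‖f x‖ ≤ E.indicator 1 x) (k : ℤ) (n l : ℕ) : ‖av f k n l‖ ≤ 1 := by
  refine (av_loc hf hE hv hb k n l).trans ?_
  have : (volume (E ∩ dyadicI k n)).toReal ≤ (2:ℝ)^k := by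
    have h := measure_mono (μ := volume) (Set.inter_subset_right (s := E) (t := dyadicI k n))
    rw [dyadic_vol] at h
    exact ENNReal.toReal_le_of_le_ofReal (by positivity) h
  calc _ ≤ (2:ℝ)^(-k) * (2:ℝ)^k := mul_le_mul_of_nonneg_left this (by positivity)
    _ = 1 := by rw [← zpow_add₀ (by norm_num)]; simp

lemma av_Om (hf : Measurable f) (hE : MeasurableSet E) (hv : volume E ≠ ∞)
    (hb : ∀ x, ‖f x‖ ≤ E.indicator 1 x) {c : ℝ} {k : ℤ} {n l : ℕ} (h : ¬ dyadicI k n ⊆ Om E c) :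
    ‖av f k n l‖ ≤ c := by
  refine (av_loc hf hE hv hb k n l).trans ?_
  have : (volume (E ∩ dyadicI k n)).toReal ≤ c * (2:ℝ)^k := by
    by_contra hc
    push Not at hc
    exact h (Set.subset_iUnion (fun z : bad E c => dyadicI z.1.1 z.1.2) ⟨(k,n), hc⟩)
  calc _ ≤ (2:ℝ)^(-k) * (c * (2:ℝ)^k) := mul_le_mul_of_nonneg_left this (by positivity)
    _ = c * ((2:ℝ)^(-k) * (2:ℝ)^k) := by ring
    _ = c := by rw [← zpow_add₀ (by norm_num)]; simp

end funcs

lemma Om_bound {E E3 : Set ℝ} (hE : MeasurableSet E) (hv : volume E ≠ ∞)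
    (p : 0 < (volume E).toReal) (p3 : 0 < (volume E3).toReal) :
    volume (Om E (8 * (volume E).toReal / (volume E3).toReal)) ≤ ENNReal.ofReal ((volume E3).toReal / 8) := by
  refine (Om_vol hE hv (by positivity)).trans (le_of_eq ?_)
  congr 1
  field_simp

lemma mu_le {A : ℤ → ℕ → ℕ → ℂ} {Q : Nd} {a : ℝ} (h : ∀ l, ‖A Q.1 Q.2.1 l‖ ≤ a) : (mu A Q : ℝ) ≤ a := by
  unfold mu
  rw [NNReal.coe_max, coe_nnnorm, coe_nnnorm]
  exact max_le (h _) (h _)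

/-- main estimate -/
lemma main_est (L N : ℕ) {E1 E2 E3 E3' : Set ℝ} (m1 : MeasurableSet E1) (m2 : MeasurableSet E2)
    (m3' : MeasurableSet E3')
    (v1 : volume E1 ≠ ∞) (v2 : volume E2 ≠ ∞) (v3 : volume E3 ≠ ∞)
    (p1 : 0 < (volume E1).toReal) (p2 : 0 < (volume E2).toReal) (p3 : 0 < (volume E3).toReal)
    (hsub : E3' ⊆ E3 \ (Om E1 (8 * (volume E1).toReal / (volume E3).toReal) ∪
      Om E2 (8 * (volume E2).toReal / (volume E3).toReal)))
    {f1 f2 f3 : ℝ → ℂ} (hf1 : Measurable f1) (hf2 : Measurable f2) (hf3 : Measurable f3)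
    (hb1 : ∀ x, ‖f1 x‖ ≤ E1.indicator 1 x) (hb2 : ∀ x, ‖f2 x‖ ≤ E2.indicator 1 x)
    (hb3 : ∀ x, ‖f3 x‖ ≤ E3'.indicator 1 x)
    (t1 t2 t3 : ℝ) (q1 : 0 < t1) (q2 : 0 < t2) (q3 : 0 < t3) (ht : t1 + t2 + t3 = 1)
    (r1 : t1 < 1/2) (r2 : t2 < 1/2) (r3 : t3 < 1/2) :
    ‖quartileForm (L+1) N f1 f2 f3‖ ≤ CC t1 t2 t3 *
      (((volume E1).toReal^t1 * (8 * (volume E1).toReal / (volume E3).toReal)^(1-2*t1)) *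
      ((volume E2).toReal^t2 * (8 * (volume E2).toReal / (volume E3).toReal)^(1-2*t2)) *
      ((volume E3).toReal^t3 * 1^(1-2*t3))) := by
  classical
  set a1 := 8 * (volume E1).toReal / (volume E3).toReal with ha1
  set a2 := 8 * (volume E2).toReal / (volume E3).toReal with ha2
  have a10 : 0 < a1 := by positivity
  have a20 : 0 < a2 := by positivity
  have hle3 : volume E3' ≤ volume E3 := measure_mono (hsub.trans Set.sdiff_subset)
  have v3' : volume E3' ≠ ∞ := ne_top_of_le_ne_top v3 hle3
  have i1 : Integrable f1 := memLp_one_iff_integrable.1 (f_memLp hf1 m1 v1 hb1 1)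
  have i2 : Integrable f2 := memLp_one_iff_integrable.1 (f_memLp hf2 m2 v2 hb2 1)
  have i3 : Integrable f3 := memLp_one_iff_integrable.1 (f_memLp hf3 m3' v3' hb3 1)
  have b1 : Bess (av f1) (volume E1).toReal := av_bess (f_memLp hf1 m1 v1 hb1 2) _ (f_sq hf1 m1 v1 hb1)
  have b2 : Bess (av f2) (volume E2).toReal := av_bess (f_memLp hf2 m2 v2 hb2 2) _ (f_sq hf2 m2 v2 hb2)
  have b3 : Bess (av f3) (volume E3).toReal := av_bess (f_memLp hf3 m3' v3' hb3 2) _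
    ((f_sq hf3 m3' v3' hb3).trans (ENNReal.toReal_mono v3 hle3))
  apply form_bound L N i1 i2 i3 _ _ b2 b3
  intro K
  set U := (QS (L+1) (sK N K)).filter (fun Q => ¬ dyadicI Q.1 Q.2.1 ⊆ Om E1 a1 ∪ Om E2 a2) with hU
  have hmU : ∀ Q : Nd, Q ∈ U ↔ (-(K:ℤ) ≤ Q.1+(L+1:ℕ) ∧ Q.1+(L+1:ℕ) ≤ K ∧
      Q.2.1/2^(L+1) < 2^((K:ℤ)-(Q.1+(L+1:ℕ))).toNat ∧ (2:ℝ)^(1-(Q.1+(L+1:ℕ):ℤ)) * (Q.2.2+1) ≤ (2:ℝ)^N) ∧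
      ¬ dyadicI Q.1 Q.2.1 ⊆ Om E1 a1 ∪ Om E2 a2 := by
    intro Q
    rw [hU, Finset.mem_filter, mem_QS, mem_sK, strip_iff]
  have hsum : ∑ Q ∈ QS (L+1) (sK N K), nval L (av f1) (av f2) (av f3) Q = ∑ Q ∈ U, nval L (av f1) (av f2) (av f3) Q := by
    symm
    apply Finset.sum_subset (Finset.filter_subset _ _)
    intro Q hQ hQU
    have hsb : dyadicI Q.1 Q.2.1 ⊆ Om E1 a1 ∪ Om E2 a2 := by
      by_contra h
      exact hQU (Finset.mem_filter.2 ⟨hQ, h⟩)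
    have hz : E3' ∩ dyadicI Q.1 Q.2.1 = ∅ := by
      ext x
      simp only [Set.mem_inter_iff, Set.mem_empty_iff_false, iff_false, not_and]
      intro hx hx'
      exact (hsub hx).2 (hsb hx')
    have h0 := av_loc hf3 m3' v3' hb3 Q.1 Q.2.1 (2*Q.2.2)
    rw [hz] at h0
    simp only [measure_empty, ENNReal.toReal_zero, mul_zero] at h0
    have h00 := norm_le_zero_iff.1 h0
    simp [nval, h00]
  rw [hsum]
  have hno : ∀ Q ∈ U, ∀ r : ℕ, ¬ dyadicI (Q.1+r) (Q.2.1/2^r) ⊆ Om E1 a1 ∪ Om E2 a2 := by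
    intro Q hQ r h
    exact ((hmU Q).1 hQ).2 (dyadic_sub.trans h)
  refine levels L (av f1) (av f2) (av f3) (av_rec i1) (av_rec i2) (av_rec i3) _ _ _ b1 b2 b3 U ?_
    t1 t2 t3 q1 q2 q3 ht r1 r2 r3 a1 a2 1 a10 a20 one_pos ?_ ?_ ?_
  · intro Q hQ T hT Q'' hle hT'
    have hn := hno Q hQ
    rw [hmU] at hQ hT ⊢
    obtain ⟨r, e1, e2, e3⟩ := hle
    obtain ⟨⟨x1, x2, x3, x4⟩, x5⟩ := hQ
    obtain ⟨⟨y1, y2, y3, y4⟩, y5⟩ := hT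
    refine ⟨⟨by omega, by omega, ?_, ?_⟩, ?_⟩
    · rw [← e2, Nat.div_div_eq_div_mul, mul_comm (2^r), ← Nat.div_div_eq_div_mul,
        Nat.div_lt_iff_lt_mul (by positivity), ← pow_add]
      refine lt_of_lt_of_le x3 (Nat.pow_le_pow_right (by norm_num) (by omega))
    · refine le_trans ?_ x4
      have h1 : Q''.2.2 + 1 ≤ 2^r * (Q.2.2+1) := by
        rw [← e3]
        have := Nat.lt_mul_div_succ Q''.2.2 (show 0 < 2^r by positivity)
        omega
      have h2 : (Q''.2.2 : ℝ) + 1 ≤ 2^r * (Q.2.2+1) := by exact_mod_cast h1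
      calc (2:ℝ)^(1-(Q''.1+(L+1:ℕ):ℤ)) * (Q''.2.2+1) ≤ (2:ℝ)^(1-(Q''.1+(L+1:ℕ):ℤ)) * (2^r * (Q.2.2+1)) :=
            mul_le_mul_of_nonneg_left h2 (by positivity)
        _ = (2:ℝ)^(1-(Q.1+(L+1:ℕ):ℤ)) * (Q.2.2+1) := by
            rw [← mul_assoc, ← zpow_natCast, ← zpow_add₀ (by norm_num), e1]
            congr 2; ring
    · have := hn r
      rw [e2, ← e1] at this
      exact this
  · intro Q hQ
    apply mu_le
    intro l
    apply av_Om hf1 m1 v1 hb1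
    intro h
    exact hno Q hQ (L+1) (h.trans Set.subset_union_left)
  · intro Q hQ
    apply mu_le
    intro l
    apply av_Om hf2 m2 v2 hb2
    intro h
    exact ((hmU Q).1 hQ).2 (h.trans Set.subset_union_right)
  · intro Q hQ
    apply mu_le
    intro l
    exact av_one hf3 m3' v3' hb3 _ _ _

lemma trivial_est (L N : ℕ) {E1 E2 E3' : Set ℝ} (m1 : MeasurableSet E1) (m2 : MeasurableSet E2)
    (m3' : MeasurableSet E3')
    (v1 : volume E1 ≠ ∞) (v2 : volume E2 ≠ ∞) (v3' : volume E3' ≠ ∞)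
    (h : volume E1 = 0 ∨ volume E2 = 0)
    {f1 f2 f3 : ℝ → ℂ} (hf1 : Measurable f1) (hf2 : Measurable f2) (hf3 : Measurable f3)
    (hb1 : ∀ x, ‖f1 x‖ ≤ E1.indicator 1 x) (hb2 : ∀ x, ‖f2 x‖ ≤ E2.indicator 1 x)
    (hb3 : ∀ x, ‖f3 x‖ ≤ E3'.indicator 1 x) : ‖quartileForm (L+1) N f1 f2 f3‖ ≤ 0 := by
  have i1 : Integrable f1 := memLp_one_iff_integrable.1 (f_memLp hf1 m1 v1 hb1 1)
  have i2 : Integrable f2 := memLp_one_iff_integrable.1 (f_memLp hf2 m2 v2 hb2 1)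
  have i3 : Integrable f3 := memLp_one_iff_integrable.1 (f_memLp hf3 m3' v3' hb3 1)
  have b2 : Bess (av f2) (volume E2).toReal := av_bess (f_memLp hf2 m2 v2 hb2 2) _ (f_sq hf2 m2 v2 hb2)
  have b3 : Bess (av f3) (volume E3').toReal := av_bess (f_memLp hf3 m3' v3' hb3 2) _ (f_sq hf3 m3' v3' hb3)
  apply form_bound L N i1 i2 i3 _ _ b2 b3
  intro K
  rw [Finset.sum_eq_zero, norm_zero]
  intro Q _
  have aux : ∀ (f : ℝ → ℂ) (E : Set ℝ), Measurable f → MeasurableSet E → volume E = 0 →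
      (∀ x, ‖f x‖ ≤ E.indicator 1 x) → ∀ k n l, av f k n l = 0 := by
    intro f E hf hE hv hb k n l
    have h0 := av_loc hf hE (by rw [hv]; exact ENNReal.zero_ne_top) hb k n l
    rw [measure_mono_null Set.inter_subset_left hv] at h0
    simpa using h0
  unfold nval
  rcases h with h | h
  · rw [aux f1 E1 hf1 m1 h hb1]; simp
  · rw [aux f2 E2 hf2 m2 h hb2]; simp

lemma numerics {e1 e2 e3 t1 t2 t3 α1 α2 α3 : ℝ} (p1 : 0 < e1) (p2 : 0 < e2) (p3 : 0 < e3) (l1 : e1 ≤ e3) (l2 : e2 ≤ e3)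
    (q1 : 0 < t1) (q2 : 0 < t2) (r1 : t1 < 1/2) (r2 : t2 < 1/2) (ht : t1 + t2 + t3 = 1)
    (hα : α1 + α2 + α3 = 1) (s1 : t1 ≤ 1 - α1) (s2 : t2 ≤ 1 - α2) :
    (e1^t1 * (8*e1/e3)^(1-2*t1)) * (e2^t2 * (8*e2/e3)^(1-2*t2)) * (e3^t3 * 1^(1-2*t3)) ≤
      64 * (e1^α1 * e2^α2 * e3^α3) := by
  have key : ∀ e t α : ℝ, 0 < e → e ≤ e3 → 0 < t → t < 1/2 → t ≤ 1 - α →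
      e^t * (8*e/e3)^(1-2*t) ≤ 8 * ((e/e3)^α * e3^t) := by
    intro e t α he hle h0 h1 h2
    have hx : 0 < e/e3 := by positivity
    have hx1 : e/e3 ≤ 1 := by rw [div_le_one p3]; exact hle
    have h8 : (8:ℝ)^(1-2*t) ≤ 8 := by
      calc (8:ℝ)^(1-2*t) ≤ 8^(1:ℝ) := Real.rpow_le_rpow_of_exponent_le (by norm_num) (by linarith)
        _ = 8 := Real.rpow_one _
    have he' : e^t = (e/e3)^t * e3^t := by
      rw [← Real.mul_rpow hx.le p3.le]; congr 1; field_simp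
    rw [mul_div_assoc, Real.mul_rpow (by norm_num) hx.le, he']
    have hc : (e/e3)^t * (e/e3)^(1-2*t) ≤ (e/e3)^α := by
      rw [← Real.rpow_add hx]
      exact Real.rpow_le_rpow_of_exponent_ge hx hx1 (by linarith)
    calc _ = (8:ℝ)^(1-2*t) * (((e/e3)^t * (e/e3)^(1-2*t)) * e3^t) := by ring
      _ ≤ 8 * ((e/e3)^α * e3^t) := by
        apply mul_le_mul h8 _ (by positivity) (by norm_num)
        exact mul_le_mul_of_nonneg_right hc (by positivity)
  have k1 := key e1 t1 α1 p1 l1 q1 r1 s1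
  have k2 := key e2 t2 α2 p2 l2 q2 r2 s2
  calc _ ≤ (8 * ((e1/e3)^α1 * e3^t1)) * (8 * ((e2/e3)^α2 * e3^t2)) * (e3^t3 * 1^(1-2*t3)) := by
        apply mul_le_mul_of_nonneg_right _ (by positivity)
        exact mul_le_mul k1 k2 (by positivity) (by positivity)
    _ = 64 * ((e1/e3)^α1 * (e2/e3)^α2 * (e3^t1 * e3^t2 * e3^t3)) := by rw [Real.one_rpow]; ring
    _ = 64 * (e1^α1 * e2^α2 * e3^α3) := by
        rw [← Real.rpow_add p3, ← Real.rpow_add p3, ht, Real.rpow_one, Real.div_rpow p1.le p3.le,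
          Real.div_rpow p2.le p3.le, show α3 = 1 - α1 - α2 by linarith, Real.rpow_sub p3, Real.rpow_sub p3, Real.rpow_one]
        field_simp

lemma CC_nonneg {t1 t2 t3 : ℝ} (q1 : 0 < t1) (r1 : t1 < 1/2) (r2 : t2 < 1/2) (r3 : t3 < 1/2) : 0 ≤ CC t1 t2 t3 := by
  have h0 : 0 < 1 - Real.exp (-(t1/16)) := by
    have : Real.exp (-(t1/16)) < 1 := by rw [Real.exp_lt_one_iff]; linarith
    linarith
  have h : ∀ t : ℝ, t < 1/2 → 0 < 1 - (2:ℝ)^(-(1-2*t)) := by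
    intro t ht
    have : (2:ℝ)^(-(1-2*t)) < 1 := Real.rpow_lt_one_of_one_lt_of_neg (by norm_num) (by linarith)
    linarith
  have := h t1 r1
  have := h t2 r2
  have := h t3 r3
  unfold CC
  positivity

lemma exists_theta {α1 α2 α3 : ℝ} (_ : 0 < α1) (h1 : α1 < 1) (_ : 0 < α2) (h2 : α2 < 1) (h3 : -(1/2) < α3)
    (h : α1 + α2 + α3 = 1) : ∃ t1 t2 t3 : ℝ, 0 < t1 ∧ 0 < t2 ∧ 0 < t3 ∧ t1 < 1/2 ∧ t2 < 1/2 ∧ t3 < 1/2 ∧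
      t1 + t2 + t3 = 1 ∧ t1 ≤ 1 - α1 ∧ t2 ≤ 1 - α2 := by
  obtain ⟨d, d0, d1, d2, d3⟩ : ∃ d : ℝ, 0 < d ∧ d < 1/4 ∧ d < 1 - α1 ∧ d < 1 - α2 := by
    have : 0 < min (1/4) (min (1-α1) (1-α2)) := by
      apply lt_min (by norm_num) (lt_min (by linarith) (by linarith))
    obtain ⟨d, a, b⟩ := exists_between this
    rw [lt_min_iff, lt_min_iff] at b
    exact ⟨d, a, b.1, b.2.1, b.2.2⟩
  refine ⟨min (1-α1) (1/2-d), min (1-α2) (1/2-d), 1 - min (1-α1) (1/2-d) - min (1-α2) (1/2-d), ?_, ?_, ?_, ?_, ?_, ?_,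
    by ring, min_le_left _ _, min_le_left _ _⟩
  · exact lt_min (by linarith) (by linarith)
  · exact lt_min (by linarith) (by linarith)
  · have := min_le_right (1-α1) (1/2-d)
    have := min_le_right (1-α2) (1/2-d)
    linarith
  · exact lt_of_le_of_lt (min_le_right _ _) (by linarith)
  · exact lt_of_le_of_lt (min_le_right _ _) (by linarith)
  · rcases min_choice (1-α1) (1/2-d) with h | h <;> rcases min_choice (1-α2) (1/2-d) with h' | h' <;>
      rw [h, h'] <;> linarith

theorem final :
    ∀ α1 α2 α3 : ℝ, 0 < α1 → α1 < 1 → 0 < α2 → α2 < 1 → -(1/2) < α3 → α3 ≤ 0 →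
      α1 + α2 + α3 = 1 →
    ∃ C : ℝ≥0, ∀ E1 E2 E3 : Set ℝ,
      MeasurableSet E1 → MeasurableSet E2 → MeasurableSet E3 →
      E1 ⊆ Ici 0 → E2 ⊆ Ici 0 → E3 ⊆ Ici 0 →
      volume E1 < ∞ → volume E2 < ∞ → volume E3 < ∞ →
      volume E1 ≤ volume E3 → volume E2 ≤ volume E3 →
      ∃ E3' : Set ℝ, MeasurableSet E3' ∧ E3' ⊆ E3 ∧ volume E3 / 2 ≤ volume E3' ∧
        ∀ (L N : ℕ), 2 ≤ L →
        ∀ f1 f2 f3 : ℝ → ℂ, Measurable f1 → Measurable f2 → Measurable f3 →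
          (∀ x, ‖f1 x‖ ≤ E1.indicator 1 x) →
          (∀ x, ‖f2 x‖ ≤ E2.indicator 1 x) →
          (∀ x, ‖f3 x‖ ≤ E3'.indicator 1 x) →
          (‖quartileForm L N f1 f2 f3‖₊ : ℝ≥0∞) ≤
            C * volume E1 ^ α1 * volume E2 ^ α2 * volume E3 ^ α3 := by
  intro α1 α2 α3 x1 x2 x3 x4 x5 _ hα
  obtain ⟨t1, t2, t3, q1, q2, q3, r1, r2, r3, ht, s1, s2⟩ := exists_theta x1 x2 x3 x4 x5 hα
  have hCC := CC_nonneg (t2 := t2) (t3 := t3) q1 r1 r2 r3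
  refine ⟨Real.toNNReal (64 * CC t1 t2 t3), ?_⟩
  intro E1 E2 E3 m1 m2 m3 _ _ _ v1 v2 v3 l1 l2
  by_cases h0 : volume E1 = 0 ∨ volume E2 = 0
  · refine ⟨E3, m3, subset_rfl, ENNReal.half_le_self, ?_⟩
    intro L N hL f1 f2 f3 hf1 hf2 hf3 hb1 hb2 hb3
    obtain ⟨L', rfl⟩ : ∃ L', L = L'+1 := ⟨L-1, by omega⟩
    have := trivial_est L' N m1 m2 m3 v1.ne v2.ne v3.ne h0 hf1 hf2 hf3 hb1 hb2 hb3
    have hz := norm_le_zero_iff.1 this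
    rw [hz]; simp
  · push Not at h0
    obtain ⟨z1, z2⟩ := h0
    have z3 : volume E3 ≠ 0 := fun h => z1 (le_zero_iff.1 (h ▸ l1))
    have p1 : 0 < (volume E1).toReal := ENNReal.toReal_pos z1 v1.ne
    have p2 : 0 < (volume E2).toReal := ENNReal.toReal_pos z2 v2.ne
    have p3 : 0 < (volume E3).toReal := ENNReal.toReal_pos z3 v3.ne
    have w1 := Om_bound (E3 := E3) m1 v1.ne p1 p3
    have w2 := Om_bound (E3 := E3) m2 v2.ne p2 p3
    set O1 := Om E1 (8 * (volume E1).toReal / (volume E3).toReal) with hO1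
    set O2 := Om E2 (8 * (volume E2).toReal / (volume E3).toReal) with hO2
    have mO : MeasurableSet (O1 ∪ O2) := (Om_meas _ _).union (Om_meas _ _)
    refine ⟨E3 \ (O1 ∪ O2), m3.diff mO, Set.sdiff_subset, ?_, ?_⟩
    · have hO : volume (O1 ∪ O2) ≤ volume E3 / 2 := by
        refine (measure_union_le _ _).trans ((add_le_add w1 w2).trans ?_)
        rw [← ENNReal.ofReal_add (by positivity) (by positivity)]
        calc _ ≤ ENNReal.ofReal ((volume E3).toReal / 2) := by
              apply ENNReal.ofReal_le_ofReal; linarith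
          _ = _ := by
              rw [ENNReal.ofReal_div_of_pos (by norm_num), ENNReal.ofReal_toReal v3.ne]; norm_num
      have h1 : volume E3 ≤ volume (E3 \ (O1 ∪ O2)) + volume (O1 ∪ O2) := by
        calc volume E3 ≤ volume ((E3 \ (O1 ∪ O2)) ∪ (O1 ∪ O2)) := measure_mono (by
              rw [Set.sdiff_union_self]; exact Set.subset_union_left)
          _ ≤ _ := measure_union_le _ _
      have h2 : volume E3 / 2 + volume E3 / 2 ≤ volume (E3 \ (O1 ∪ O2)) + volume E3 / 2 := by
        rw [ENNReal.add_halves]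
        exact h1.trans (add_le_add le_rfl hO)
      have hfin : volume E3 / 2 ≠ ∞ := ne_top_of_le_ne_top v3.ne ENNReal.half_le_self
      exact (ENNReal.add_le_add_iff_right hfin).1 h2
    · intro L N hL f1 f2 f3 hf1 hf2 hf3 hb1 hb2 hb3
      obtain ⟨L', rfl⟩ : ∃ L', L = L'+1 := ⟨L-1, by omega⟩
      have hm := main_est L' N m1 m2 (m3.diff mO) v1.ne v2.ne v3.ne p1 p2 p3 subset_rfl hf1 hf2 hf3 hb1 hb2 hb3
        t1 t2 t3 q1 q2 q3 ht r1 r2 r3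
      have hnum := numerics p1 p2 p3 (ENNReal.toReal_mono v3.ne l1) (ENNReal.toReal_mono v3.ne l2) q1 q2 r1 r2 ht hα s1 s2
      have hfin := hm.trans (mul_le_mul_of_nonneg_left hnum hCC)
      have hR : ((Real.toNNReal (64 * CC t1 t2 t3) : ℝ≥0) : ℝ≥0∞) * volume E1 ^ α1 * volume E2 ^ α2 * volume E3 ^ α3 =
          ENNReal.ofReal (CC t1 t2 t3 * (64 * ((volume E1).toReal^α1 * (volume E2).toReal^α2 * (volume E3).toReal^α3))) := by
        have c1 : ∀ (E : Set ℝ) (α : ℝ), volume E ≠ ∞ → 0 < (volume E).toReal → volume E ^ α = ENNReal.ofReal ((volume E).toReal^α) := by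
          intro E α hv hp
          rw [← ENNReal.ofReal_rpow_of_pos hp, ENNReal.ofReal_toReal hv]
        rw [c1 E1 α1 v1.ne p1, c1 E2 α2 v2.ne p2, c1 E3 α3 v3.ne p3]
        change ENNReal.ofReal (64 * CC t1 t2 t3) * _ * _ * _ = _
        rw [← ENNReal.ofReal_mul (by positivity), ← ENNReal.ofReal_mul (by positivity), ← ENNReal.ofReal_mul (by positivity)]
        congr 1; ring
      rw [hR]
      change ‖quartileForm (L'+1) N f1 f2 f3‖ₑ ≤ _
      rw [← ofReal_norm_eq_enorm]
      exact ENNReal.ofReal_le_ofReal hfin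


/-- The symmetric version of the restricted type theorem, with the exceptional index 3
(obtained from Theorem 2 by the symmetry of the quartile form in the indices 2 and 3). -/
theorem quartileForm_restricted_type_symm :
    ∀ α1 α2 α3 : ℝ, 0 < α1 → α1 < 1 → 0 < α2 → α2 < 1 → -(1/2) < α3 → α3 ≤ 0 →
      α1 + α2 + α3 = 1 →
    ∃ C : ℝ≥0, ∀ E1 E2 E3 : Set ℝ,
      MeasurableSet E1 → MeasurableSet E2 → MeasurableSet E3 →
      E1 ⊆ Ici 0 → E2 ⊆ Ici 0 → E3 ⊆ Ici 0 →
      volume E1 < ∞ → volume E2 < ∞ → volume E3 < ∞ →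
      volume E1 ≤ volume E3 → volume E2 ≤ volume E3 →
      ∃ E3' : Set ℝ, MeasurableSet E3' ∧ E3' ⊆ E3 ∧ volume E3 / 2 ≤ volume E3' ∧
        ∀ (L N : ℕ), 2 ≤ L →
        ∀ f1 f2 f3 : ℝ → ℂ, Measurable f1 → Measurable f2 → Measurable f3 →
          (∀ x, ‖f1 x‖ ≤ E1.indicator 1 x) →
          (∀ x, ‖f2 x‖ ≤ E2.indicator 1 x) →
          (∀ x, ‖f3 x‖ ≤ E3'.indicator 1 x) →
          (‖quartileForm L N f1 f2 f3‖₊ : ℝ≥0∞) ≤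
            C * volume E1 ^ α1 * volume E2 ^ α2 * volume E3 ^ α3 := by
  exact final

end Quartile
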